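/- arXiv:2211.03655 — 2 statements merged into one kernel-verified Lean document; each statement's English description precedes it below -/
import Mathlib

section
/- (Kulikov's inequality.) Let 0 < p < q < ∞, α > 1, and set β = qα/p (so that α/p = β/q). For every holomorphic f on the unit disk 𝔻 with ∫_𝔻 |f(z)|^p dA_α(z) < ∞, one has (∫_𝔻 |f(z)|^q dA_β(z))^{1/q} ≤ (∫_𝔻 |f(z)|^p dA_α(z))^{1/p}. -/
open MeasureTheory Metric

/-- The weighted Bergman measure `dA_α` on the unit disk:
density `((α-1)/π)(1-|z|²)^(α-2)` with respect to Lebesgue area measure. -/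
noncomputable def bergmanMeasure (α : ℝ) : Measure ℂ :=
  (volume.restrict (ball (0 : ℂ) 1)).withDensity
    (fun z => ENNReal.ofReal ((α - 1) / Real.pi * (1 - ‖z‖ ^ 2) ^ (α - 2)))

/-!
Write `a = α / p = β / q`. The Cayley transform turns `|f| (1 - |z|²) ^ a` into `u = |G| y ^ a` on
the upper half-plane, with `G` holomorphic, and both integrals into moments of `u` with respect to
hyperbolic area; the subharmonicity of `|f| ^ p` makes the superlevel sets of `u` compact. Let
`m t` be the hyperbolic area of `{u > t}`. Away from the zeros of `G` the hyperbolic Laplacian of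
`log u` is `-a`, so Green's identity bounds the flux of `∇ log u` through the boundary of `{u > t}`
by `a * m t`. Cauchy-Schwarz and the coarea formula then bound the squared length of this boundary
by `a * m t * t * (-m' t)`, while the hyperbolic isoperimetric inequality bounds it from below by
`m t ^ 2 + 4 * π * m t`. Hence `m + 4 * π ≤ -a * t * m'`, that is, `(m t + 4 * π) * t ^ (1 / a)` is
nonincreasing as long as `m t > 0`. For `u = T (1 - |z|²) ^ a`, the case of constant `f`, it is
constant, so `m` lies above the distribution function of this model for small `t` and below it for
large `t`. If the `p`-th moments agree, the `q`-th moment, which favours large `t`, is therefore at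
most that of the model.

The regularity of `m` and of its level sets is avoided by using the isoperimetric inequality for
`C¹` functions `φ ∘ u`, with `φ` a steep step, which gives the differential inequality for `m` in a
form with finite differences.
-/

open Set Filter Topology Real
open UpperHalfPlane (upperHalfPlaneSet isOpen_upperHalfPlaneSet)

/-! ### Hyperbolic area -/

/-- Hyperbolic area `dx dy / y²`. The density is not cut off outside the upper half-plane: only
sets and functions supported in the upper half-plane are ever measured. -/
noncomputable def hyperbolicArea : Measure ℂ :=
  volume.withDensity fun z => ENNReal.ofReal (1 / z.im ^ 2)

lemma measurable_ofReal_one_div_im_sq :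
    Measurable fun z : ℂ => ENNReal.ofReal (1 / z.im ^ 2) := by
  fun_prop

lemma integral_hyperbolicArea (f : ℂ → ℝ) : ∫ z, f z ∂hyperbolicArea = ∫ z, f z / z.im ^ 2 := by
  rw [hyperbolicArea, integral_withDensity_eq_integral_toReal_smul
    measurable_ofReal_one_div_im_sq (by simp)]
  refine integral_congr_ae (.of_forall fun z => ?_)
  simp only [smul_eq_mul]
  rw [ENNReal.toReal_ofReal (by positivity)]
  ring

lemma integrable_hyperbolicArea_iff {f : ℂ → ℝ} :
    Integrable f hyperbolicArea ↔ Integrable fun z => f z / z.im ^ 2 := by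
  rw [hyperbolicArea, integrable_withDensity_iff_integrable_smul'
    measurable_ofReal_one_div_im_sq (by simp)]
  refine integrable_congr (.of_forall fun z => ?_)
  simp only [smul_eq_mul]
  rw [ENNReal.toReal_ofReal (by positivity)]
  ring

lemma integrable_of_continuousOn_of_eq_zero {X : Type*} [TopologicalSpace X] [T2Space X]
    [MeasurableSpace X] [OpensMeasurableSpace X] {μ : Measure X} [IsFiniteMeasureOnCompacts μ]
    {f : X → ℝ} {K : Set X} (hK : IsCompact K) (hf : ContinuousOn f K) (hf0 : ∀ x ∉ K, f x = 0) :
    Integrable f μ := by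
  rw [← integrableOn_iff_integrable_of_support_subset (s := K)
    (fun x hx => by_contra fun hxK => hx (hf0 x hxK))]
  exact hf.integrableOn_compact hK

lemma integrable_hyperbolicArea_of_continuousOn {f : ℂ → ℝ} {K : Set ℂ} (hK : IsCompact K)
    (hKH : K ⊆ upperHalfPlaneSet) (hf : ContinuousOn f K) (hf0 : ∀ z ∉ K, f z = 0) :
    Integrable f hyperbolicArea := by
  rw [integrable_hyperbolicArea_iff]
  refine integrable_of_continuousOn_of_eq_zero hK (hf.div (by fun_prop) fun z hz => ?_)
    fun z hz => by simp [hf0 z hz]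
  exact pow_ne_zero 2 (hKH hz).ne'

lemma exists_im_mem_Icc_of_isCompact {K : Set ℂ} (hK : IsCompact K) (hKH : K ⊆ upperHalfPlaneSet) :
    ∃ a b : ℝ, 0 < a ∧ a ≤ b ∧ ∀ z ∈ K, z.im ∈ Icc a b := by
  rcases K.eq_empty_or_nonempty with rfl | hne
  · exact ⟨1, 1, one_pos, le_rfl, by simp⟩
  obtain ⟨v, hv, hvmin⟩ := hK.exists_isMinOn hne Complex.continuous_im.continuousOn
  obtain ⟨w, hw, hwmax⟩ := hK.exists_isMaxOn hne Complex.continuous_im.continuousOn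
  exact ⟨v.im, w.im, hKH hv, hvmin hw, fun z hz => ⟨hvmin hz, hwmax hz⟩⟩

/-! ### The model disc

The hyperbolic disc of radius `R` about `i` is the Euclidean disc with centre `i cosh R` and radius
`sinh R`; its heights run from `exp (-R)` to `exp R`. -/

lemma hasDerivAt_arcsin_comp {x : ℝ → ℝ} {x' w t : ℝ} (hx : HasDerivAt x x' t) (hw : 0 < w)
    (hxw : x t ^ 2 + w ^ 2 = 1) : HasDerivAt (fun t => arcsin (x t)) (x' / w) t := by
  have hlt : |x t| < 1 := by
    rw [← sq_lt_one_iff_abs_lt_one]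
    nlinarith
  have hsqrt : √(1 - x t ^ 2) = w := by
    rw [← hxw, add_sub_cancel_left, Real.sqrt_sq hw.le]
  refine ((hasDerivAt_arcsin (abs_lt.1 hlt).1.ne' (abs_lt.1 hlt).2.ne).comp t hx).congr_deriv ?_
  rw [hsqrt]
  ring

/-- A primitive of `τ ↦ √(s² - (τ - c)²) / τ`, the ratio of half-chord to height in the Euclidean
disc with centre `i c` and radius `s`, in the case `c² - s² = 1` of a hyperbolic disc about `i`. -/
noncomputable def discPrimitive (c s τ : ℝ) : ℝ :=
  √(s ^ 2 - (τ - c) ^ 2) + c * arcsin ((τ - c) / s) - arcsin ((c * τ - 1) / (s * τ))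

lemma hasDerivAt_discPrimitive {c s τ : ℝ} (hs : 0 < s) (hcs : c ^ 2 - s ^ 2 = 1) (hτ : 0 < τ)
    (hτcs : (τ - c) ^ 2 < s ^ 2) :
    HasDerivAt (discPrimitive c s) (√(s ^ 2 - (τ - c) ^ 2) / τ) τ := by
  have hpos : 0 < s ^ 2 - (τ - c) ^ 2 := sub_pos.2 hτcs
  set w := √(s ^ 2 - (τ - c) ^ 2)
  have hw : 0 < w := Real.sqrt_pos.2 hpos
  have hw2 : w ^ 2 = s ^ 2 - (τ - c) ^ 2 := Real.sq_sqrt hpos.le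
  have hsqrt : HasDerivAt (fun τ => √(s ^ 2 - (τ - c) ^ 2)) (-(2 * (τ - c)) / (2 * w)) τ := by
    refine HasDerivAt.sqrt ?_ hpos.ne'
    simpa using (((hasDerivAt_id τ).sub_const c).pow 2).const_sub (s ^ 2)
  have harcsin₁ : HasDerivAt (fun τ => arcsin ((τ - c) / s)) (1 / s / (w / s)) τ :=
    hasDerivAt_arcsin_comp (((hasDerivAt_id τ).sub_const c).div_const s) (by positivity)
      (by field_simp; linarith)
  have harcsin₂ : HasDerivAt (fun τ => arcsin ((c * τ - 1) / (s * τ)))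
      (1 / (s * τ ^ 2) / (w / (s * τ))) τ := by
    refine hasDerivAt_arcsin_comp ?_ (by positivity) (by field_simp; nlinarith)
    refine ((((hasDerivAt_id τ).const_mul c).sub_const 1).div
      ((hasDerivAt_id τ).const_mul s) (by simp [hs.ne', hτ.ne'])).congr_deriv ?_
    simp only [id]
    field_simp
    ring
  refine ((hsqrt.add (harcsin₁.const_mul c)).sub harcsin₂).congr_deriv ?_
  field_simp
  rw [hw2]
  nlinarith

lemma sq_sub_cosh_le_sinh_sq {R τ : ℝ} (hτ : τ ∈ Icc (exp (-R)) (exp R)) :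
    (τ - cosh R) ^ 2 ≤ sinh R ^ 2 := by
  rw [← cosh_sub_sinh, ← cosh_add_sinh R] at hτ
  exact sq_le_sq' (by linarith [hτ.1]) (by linarith [hτ.2])

lemma continuousOn_discPrimitive {c s : ℝ} (hs : s ≠ 0) :
    ContinuousOn (discPrimitive c s) (Ioi 0) := by
  have hquot : ContinuousOn (fun τ => (c * τ - 1) / (s * τ)) (Ioi 0) :=
    ContinuousOn.div (by fun_prop) (by fun_prop) fun τ hτ => mul_ne_zero hs (ne_of_gt hτ)
  have := continuous_arcsin
  exact ContinuousOn.sub (by fun_prop) (continuous_arcsin.comp_continuousOn hquot)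

lemma discPrimitive_top {c s : ℝ} (hs : s ≠ 0) (hcs : c ^ 2 - s ^ 2 = 1) (hpos : 0 < c + s) :
    discPrimitive c s (c + s) = (c - 1) * (π / 2) := by
  have hquot : (c * (c + s) - 1) / (s * (c + s)) = 1 := by
    rw [div_eq_one_iff_eq (by positivity)]
    linear_combination hcs
  simp only [discPrimitive, hquot, add_sub_cancel_left, sub_self, sqrt_zero, div_self hs,
    arcsin_one]
  ring

lemma discPrimitive_bottom {c s : ℝ} (hs : s ≠ 0) (hcs : c ^ 2 - s ^ 2 = 1) (hpos : 0 < c - s) :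
    discPrimitive c s (c - s) = -((c - 1) * (π / 2)) := by
  have hquot : (c * (c - s) - 1) / (s * (c - s)) = -1 := by
    rw [div_eq_iff (by positivity)]
    linear_combination hcs
  simp only [discPrimitive, hquot, sub_sub_cancel_left, even_two.neg_pow, sub_self, sqrt_zero,
    neg_div, div_self hs, arcsin_neg, arcsin_one]
  ring

lemma integral_half_chord_div_height {R : ℝ} (hR : 0 ≤ R) :
    ∫ τ in exp (-R)..exp R, √(sinh R ^ 2 - (τ - cosh R) ^ 2) / τ = π * (cosh R - 1) := by
  rcases hR.eq_or_lt with rfl | hR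
  · simp
  have hs : 0 < sinh R := sinh_pos_iff.2 hR
  have hcs := cosh_sq_sub_sinh_sq R
  have hbot := exp_pos (-R)
  have htop := exp_pos R
  rw [← cosh_sub_sinh] at hbot ⊢
  rw [← cosh_add_sinh R] at htop ⊢
  have hle : cosh R - sinh R ≤ cosh R + sinh R := by linarith
  have hpos : Icc (cosh R - sinh R) (cosh R + sinh R) ⊆ Ioi 0 := fun τ hτ => hbot.trans_le hτ.1
  rw [intervalIntegral.integral_eq_sub_of_hasDerivAt_of_le hle
    ((continuousOn_discPrimitive hs.ne').mono hpos)
    (fun τ hτ => hasDerivAt_discPrimitive hs hcs (hpos (Ioo_subset_Icc_self hτ))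
      (sq_lt_sq' (by linarith [hτ.1]) (by linarith [hτ.2]))),
    discPrimitive_top hs.ne' hcs htop, discPrimitive_bottom hs.ne' hcs hbot]
  · ring
  · apply ContinuousOn.intervalIntegrable
    rw [uIcc_of_le hle]
    exact ContinuousOn.div (by fun_prop) (by fun_prop) fun τ hτ => ne_of_gt (hpos hτ)

/-! ### Transport of heights -/

/-- `T` carries the heights `[a, b]` onto the heights `[exp (-R), exp R]` of the model disc, in
such a way that `log T` has slope `σ` with respect to `log y`. -/
structure IsHeightTransport (σ : ℝ → ℝ) (a b R : ℝ) (T : ℝ → ℝ) : Prop where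
  contDiff : ContDiff ℝ 1 T
  hasDerivAt : ∀ y, 0 < y → HasDerivAt T (σ y * T y / y) y
  mem_Icc : ∀ y ∈ Icc a b, T y ∈ Icc (exp (-R)) (exp R)
  left : T a = exp (-R)
  right : T b = exp R

lemma exists_isHeightTransport {a b : ℝ} {σ : ℝ → ℝ} (ha : 0 < a) (hab : a ≤ b)
    (hσ : Continuous σ) (hσ0 : ∀ y, 0 ≤ σ y) (hσab : ∀ y ∉ Icc a b, σ y = 0) :
    ∃ R T, 0 ≤ R ∧ IsHeightTransport σ a b R T := by
  -- `σ y / y`, made continuous on the whole line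
  set κ : ℝ → ℝ := fun y => σ y / max y a with hκdef
  have hκ : Continuous κ := hσ.div (by fun_prop) fun y => (ha.trans_le (le_max_right y a)).ne'
  have hκ0 : ∀ y, 0 ≤ κ y := fun y => div_nonneg (hσ0 y) (ha.le.trans (le_max_right y a))
  have hκσ : ∀ y, κ y = σ y / y := by
    intro y
    by_cases hy : a ≤ y
    · simp only [hκdef, max_eq_left hy]
    · simp only [hκdef, hσab y (fun h => hy h.1), zero_div]
  have hint : ∀ x y, IntervalIntegrable κ volume x y := hκ.intervalIntegrable
  set R := (∫ y in a..b, κ y) / 2 with hR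
  set T : ℝ → ℝ := fun y => exp ((∫ u in a..y, κ u) - R)
  have hT : ∀ y, HasDerivAt T (T y * κ y) y := fun y =>
    ((hκ.integral_hasStrictDerivAt a y).hasDerivAt.sub_const R).exp
  have hTcont : Continuous T := continuous_iff_continuousAt.2 fun y => (hT y).continuousAt
  have hsplit : ∀ y, (∫ u in a..y, κ u) + ∫ u in y..b, κ u = 2 * R := fun y => by
    rw [intervalIntegral.integral_add_adjacent_intervals (hint _ _) (hint _ _), hR]
    ring
  have hnonneg : ∀ {x y}, x ≤ y → 0 ≤ ∫ u in x..y, κ u := fun hxy =>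
    intervalIntegral.integral_nonneg hxy fun u _ => hκ0 u
  refine ⟨R, T, div_nonneg (hnonneg hab) zero_le_two, ?_, fun y _ => ?_, fun y hy => ?_,
    by simp [T], ?_⟩
  · rw [contDiff_one_iff_deriv]
    refine ⟨fun y => (hT y).differentiableAt, ?_⟩
    rw [funext fun y => (hT y).deriv]
    exact hTcont.mul hκ
  · refine (hT y).congr_deriv ?_
    rw [hκσ y]
    ring
  · have := hsplit y
    have := hnonneg hy.1
    have := hnonneg hy.2
    constructor <;> apply exp_le_exp.2 <;> linarith
  · simp only [T]
    congr 1
    linarith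

lemma IsHeightTransport.pos {σ T : ℝ → ℝ} {a b R y : ℝ} (hT : IsHeightTransport σ a b R T)
    (hy : y ∈ Icc a b) : 0 < T y :=
  (exp_pos _).trans_le (hT.mem_Icc y hy).1

lemma IsHeightTransport.integral_slope_mul_half_chord {σ T : ℝ → ℝ} {a b R : ℝ}
    (hT : IsHeightTransport σ a b R T) (ha : 0 < a) (hab : a ≤ b) (hR : 0 ≤ R)
    (hσ : Continuous σ) :
    ∫ y in a..b, σ y * (√(sinh R ^ 2 - (T y - cosh R) ^ 2) / y) = π * (cosh R - 1) := by
  have hTcont := hT.contDiff.continuous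
  have hpos : ∀ y ∈ Icc a b, 0 < y := fun y hy => ha.trans_le hy.1
  rw [← integral_half_chord_div_height hR, ← hT.left, ← hT.right,
    ← intervalIntegral.integral_comp_mul_deriv'' (f' := fun y => σ y * T y / y)
      hTcont.continuousOn]
  · refine intervalIntegral.integral_congr fun y hy => ?_
    rw [uIcc_of_le hab] at hy
    have := hpos y hy
    have := hT.pos hy
    simp only [Function.comp]
    field_simp
  · intro y hy
    rw [min_eq_left hab, max_eq_right hab] at hy
    exact (hT.hasDerivAt y (ha.trans hy.1)).hasDerivWithinAt
  · rw [uIcc_of_le hab]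
    exact ContinuousOn.div (by fun_prop) (by fun_prop) fun y hy => (hpos y hy).ne'
  · rw [uIcc_of_le hab]
    refine ContinuousOn.div (by fun_prop) (by fun_prop) ?_
    rintro _ ⟨y, hy, rfl⟩
    exact (hT.pos hy).ne'

/-! ### A functional isoperimetric inequality -/

/-- A `C¹` function with compact support in the upper half-plane. -/
structure IsTestFunction (g : ℂ → ℝ) : Prop where
  contDiff : ContDiff ℝ 1 g
  hasCompactSupport : HasCompactSupport g
  tsupport_subset : tsupport g ⊆ upperHalfPlaneSet

lemma fderiv_eq_zero_of_notMem_tsupport {E F : Type*} [NormedAddCommGroup E] [NormedSpace ℝ E]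
    [NormedAddCommGroup F] [NormedSpace ℝ F] {g : E → F} {x : E} (hx : x ∉ tsupport g) :
    fderiv ℝ g x = 0 :=
  image_eq_zero_of_notMem_tsupport fun h => hx (tsupport_fderiv_subset ℝ h)

lemma integral_mul_fderiv_eq_neg_of_tsupport_subset {E : Type*} [NormedAddCommGroup E]
    [NormedSpace ℝ E] [FiniteDimensional ℝ E] [MeasurableSpace E] [BorelSpace E] {μ : Measure E}
    [μ.IsAddHaarMeasure] {g F : E → ℝ} {U : Set E} (hU : IsOpen U) (hg : ContDiff ℝ 1 g)
    (hgc : HasCompactSupport g) (hgU : tsupport g ⊆ U) (hF : ContDiffOn ℝ 1 F U) (v : E) :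
    ∫ x, g x * fderiv ℝ F x v ∂μ = -∫ x, fderiv ℝ g x v * F x ∂μ := by
  have hF' : ContinuousOn (fun x => fderiv ℝ F x v) (tsupport g) :=
    ((hF.continuousOn_fderiv_of_isOpen hU le_rfl).clm_apply continuousOn_const).mono hgU
  have hg' : Continuous fun x => fderiv ℝ g x v :=
    (hg.continuous_fderiv one_ne_zero).clm_apply continuous_const
  have hFc : ContinuousOn F (tsupport g) := hF.continuousOn.mono hgU
  have hg0 : ∀ x ∉ tsupport g, g x = 0 := fun _ => image_eq_zero_of_notMem_tsupport
  refine integral_mul_fderiv_eq_neg_fderiv_mul_of_integrable ?_ ?_ ?_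
    (fun x _ => hg.differentiable one_ne_zero x)
    (fun x hx => (hF.contDiffAt (hU.mem_nhds (hgU hx))).differentiableAt one_ne_zero)
  · exact integrable_of_continuousOn_of_eq_zero hgc (hg'.continuousOn.mul hFc) fun x hx => by
      simp [fderiv_eq_zero_of_notMem_tsupport hx]
  · exact integrable_of_continuousOn_of_eq_zero hgc (hg.continuous.continuousOn.mul hF')
      fun x hx => by simp [hg0 x hx]
  · exact integrable_of_continuousOn_of_eq_zero hgc (hg.continuous.continuousOn.mul hFc)
      fun x hx => by simp [hg0 x hx]

lemma two_mul_le_integral_abs_deriv {h : ℝ → ℝ} (hh : ContDiff ℝ 1 h) (hc : HasCompactSupport h)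
    (x : ℝ) : 2 * h x ≤ ∫ t, |deriv h t| := by
  have hint : Integrable (deriv h) :=
    (hh.continuous_deriv le_rfl).integrable_of_hasCompactSupport hc.deriv
  have hleft : h x ≤ ∫ t in Iic x, |deriv h t| := by
    rw [← hc.integral_Iic_deriv_eq hh x]
    exact (le_abs_self _).trans abs_integral_le_integral_abs
  have hright : h x ≤ ∫ t in Ioi x, |deriv h t| := by
    rw [← neg_neg (h x), ← hc.integral_Ioi_deriv_eq hh x]
    exact (neg_le_abs _).trans abs_integral_le_integral_abs
  rw [← intervalIntegral.integral_Iic_add_Ioi hint.abs.integrableOn hint.abs.integrableOn]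
  linarith

lemma integral_complex_eq_integral_im_re {F : ℂ → ℝ} (hF : Integrable F) :
    ∫ z, F z = ∫ y : ℝ, ∫ x : ℝ, F ⟨x, y⟩ := by
  have hmp := Complex.volume_preserving_equiv_real_prod.symm
  have hemb := Complex.measurableEquivRealProd.symm.measurableEmbedding
  rw [← hmp.integral_comp hemb]
  exact integral_prod_symm _ ((hmp.integrable_comp_emb hemb).2 hF)

/-- The total variation of `g` along the horizontal line at height `y`. -/
noncomputable def horizontalVariation (g : ℂ → ℝ) (y : ℝ) : ℝ :=
  ∫ x : ℝ, |fderiv ℝ g ⟨x, y⟩ 1|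

lemma horizontalVariation_nonneg (g : ℂ → ℝ) (y : ℝ) : 0 ≤ horizontalVariation g y :=
  integral_nonneg fun _ => abs_nonneg _

lemma horizontalVariation_eq_zero {g : ℂ → ℝ} {y : ℝ} (hy : ∀ z ∈ tsupport g, z.im ≠ y) :
    horizontalVariation g y = 0 := by
  refine integral_eq_zero_of_ae (.of_forall fun x => ?_)
  simp [fderiv_eq_zero_of_notMem_tsupport (fun h => hy _ h rfl : (⟨x, y⟩ : ℂ) ∉ tsupport g)]

namespace IsTestFunction

variable {g : ℂ → ℝ}

lemma continuous_fderiv_apply (hg : IsTestFunction g) (v : ℂ) :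
    Continuous fun z => fderiv ℝ g z v :=
  (hg.contDiff.continuous_fderiv one_ne_zero).clm_apply continuous_const

lemma integrable (hg : IsTestFunction g) {h : ℂ → ℝ} (hh : ContinuousOn h upperHalfPlaneSet)
    (h0 : ∀ z, g z = 0 → fderiv ℝ g z = 0 → h z = 0) : Integrable h hyperbolicArea :=
  integrable_hyperbolicArea_of_continuousOn hg.hasCompactSupport hg.tsupport_subset
    (hh.mono hg.tsupport_subset) fun z hz =>
      h0 z (image_eq_zero_of_notMem_tsupport hz) (fderiv_eq_zero_of_notMem_tsupport hz)

lemma continuous_horizontalVariation (hg : IsTestFunction g) :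
    Continuous (horizontalVariation g) := by
  have hmk : Continuous fun w : ℝ × ℝ => (⟨w.2, w.1⟩ : ℂ) :=
    Complex.equivRealProdCLM.symm.continuous.comp continuous_swap
  rw [← continuousOn_univ]
  refine continuousOn_integral_of_compact_support
    (hg.hasCompactSupport.isCompact.image Complex.continuous_re)
    ((hg.continuous_fderiv_apply 1).abs.comp hmk).continuousOn fun y x _ hx => ?_
  have hnot : (⟨x, y⟩ : ℂ) ∉ tsupport g := fun h => hx ⟨_, h, rfl⟩
  simp [fderiv_eq_zero_of_notMem_tsupport hnot]

lemma two_mul_le_horizontalVariation (hg : IsTestFunction g) (z : ℂ) :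
    2 * g z ≤ horizontalVariation g z.im := by
  have hline : ∀ x : ℝ, (⟨x, z.im⟩ : ℂ) = x + z.im * Complex.I := fun x => by
    simp [Complex.ext_iff]
  have hderiv : ∀ x : ℝ, HasDerivAt (fun x : ℝ => g ⟨x, z.im⟩) (fderiv ℝ g ⟨x, z.im⟩ 1) x := by
    intro x
    have hmk : HasDerivAt (fun x : ℝ => (⟨x, z.im⟩ : ℂ)) 1 x := by
      simp only [hline]
      exact Complex.ofRealCLM.hasDerivAt.add_const _
    exact (hg.contDiff.differentiable one_ne_zero _).hasFDerivAt.comp_hasDerivAt x hmk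
  have hcontDiff : ContDiff ℝ 1 fun x : ℝ => g ⟨x, z.im⟩ := by
    simp only [hline]
    exact hg.contDiff.comp (Complex.ofRealCLM.contDiff.add contDiff_const)
  have hsupp : HasCompactSupport fun x : ℝ => g ⟨x, z.im⟩ :=
    .intro (hg.hasCompactSupport.isCompact.image Complex.continuous_re) fun x hx =>
      image_eq_zero_of_notMem_tsupport fun h => hx ⟨_, h, rfl⟩
  simpa only [horizontalVariation, (hderiv _).deriv] using
    two_mul_le_integral_abs_deriv hcontDiff hsupp z.re

variable {a b R : ℝ} {σ T : ℝ → ℝ}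

lemma two_pi_mul_cosh_sub_one_le (hg : IsTestFunction g) (ha : 0 < a) (hab : a ≤ b) (hR : 0 ≤ R)
    (hsupp : ∀ z ∈ tsupport g, z.im ∈ Icc a b) (hσ : Continuous σ)
    (hσg : ∀ y, 2 * σ y ≤ horizontalVariation g y) (hT : IsHeightTransport σ a b R T) :
    2 * π * (cosh R - 1) ≤
      ∫ z, z.im * (|fderiv ℝ g z 1| * √(sinh R ^ 2 - (T z.im - cosh R) ^ 2)) ∂hyperbolicArea := by
  set chord : ℝ → ℝ := fun y => √(sinh R ^ 2 - (T y - cosh R) ^ 2) / y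
  have hTcont := hT.contDiff.continuous
  have hpos : ∀ y ∈ Icc a b, 0 < y := fun y hy => ha.trans_le hy.1
  have hchord : ContinuousOn chord (Icc a b) :=
    ContinuousOn.div (by fun_prop) (by fun_prop) fun y hy => (hpos y hy).ne'
  have hvar := hg.continuous_horizontalVariation
  have hint : Integrable fun z : ℂ => |fderiv ℝ g z 1| * chord z.im :=
    integrable_of_continuousOn_of_eq_zero hg.hasCompactSupport
      ((hg.continuous_fderiv_apply 1).abs.continuousOn.mul
        (hchord.comp Complex.continuous_im.continuousOn hsupp))
      fun z hz => by simp [fderiv_eq_zero_of_notMem_tsupport hz]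
  calc 2 * π * (cosh R - 1) = ∫ y in a..b, 2 * (σ y * chord y) := by
        rw [intervalIntegral.integral_const_mul, hT.integral_slope_mul_half_chord ha hab hR hσ,
          mul_assoc]
    _ ≤ ∫ y in a..b, horizontalVariation g y * chord y := by
        refine intervalIntegral.integral_mono_on hab ?_ ?_ fun y hy => ?_
        · exact (continuousOn_const.mul (hσ.continuousOn.mul hchord)).intervalIntegrable_of_Icc hab
        · exact (hvar.continuousOn.mul hchord).intervalIntegrable_of_Icc hab
        · rw [← mul_assoc]
          exact mul_le_mul_of_nonneg_right (hσg y) (div_nonneg (sqrt_nonneg _) (hpos y hy).le)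
    _ = ∫ y, horizontalVariation g y * chord y := by
        rw [intervalIntegral.integral_of_le hab, ← integral_Icc_eq_integral_Ioc]
        refine setIntegral_eq_integral_of_forall_compl_eq_zero fun y hy => ?_
        have hzero : horizontalVariation g y = 0 :=
          horizontalVariation_eq_zero fun z hz hzy => hy (hzy ▸ hsupp z hz)
        rw [hzero, zero_mul]
    _ = ∫ z : ℂ, |fderiv ℝ g z 1| * chord z.im := by
        rw [integral_complex_eq_integral_im_re hint]
        simp only [horizontalVariation, integral_mul_const]
    _ = _ := by
        rw [integral_hyperbolicArea]
        refine integral_congr_ae (.of_forall fun z => ?_)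
        simp only [chord]
        rcases eq_or_ne z.im 0 with hz | hz
        · simp [hz]
        · field_simp

lemma integral_transport_eq_neg (hg : IsTestFunction g) (hT : IsHeightTransport σ a b R T) (c : ℝ) :
    ∫ z, g z * ((σ z.im - 1) * T z.im + c) ∂hyperbolicArea =
      -∫ z, z.im * ((T z.im - c) * fderiv ℝ g z Complex.I) ∂hyperbolicArea := by
  set F : ℂ → ℝ := fun z => (T z.im - c) / z.im
  have hF : ContDiffOn ℝ 1 F upperHalfPlaneSet :=
    ((hT.contDiff.comp Complex.imCLM.contDiff).sub contDiff_const).contDiffOn.div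
      Complex.imCLM.contDiff.contDiffOn fun z hz => ne_of_gt hz
  have hF' : ∀ z ∈ upperHalfPlaneSet,
      fderiv ℝ F z Complex.I = ((σ z.im - 1) * T z.im + c) / z.im ^ 2 := by
    intro z (hz : 0 < z.im)
    have hderiv : HasDerivAt (fun y => (T y - c) / y)
        (((σ z.im - 1) * T z.im + c) / z.im ^ 2) z.im := by
      refine (((hT.hasDerivAt _ hz).sub_const c).div (hasDerivAt_id _) hz.ne').congr_deriv ?_
      simp only [id]
      field_simp
      ring
    have hfderiv : HasFDerivAt F _ z := hderiv.comp_hasFDerivAt z Complex.imCLM.hasFDerivAt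
    simp [hfderiv.fderiv]
  rw [integral_hyperbolicArea, integral_hyperbolicArea]
  calc ∫ z, g z * ((σ z.im - 1) * T z.im + c) / z.im ^ 2
      = ∫ z, g z * fderiv ℝ F z Complex.I := by
        refine integral_congr_ae (.of_forall fun z => ?_)
        by_cases hz : z ∈ tsupport g
        · simp only [hF' z (hg.tsupport_subset hz), mul_div_assoc]
        · simp [image_eq_zero_of_notMem_tsupport hz]
    _ = -∫ z, fderiv ℝ g z Complex.I * F z :=
        integral_mul_fderiv_eq_neg_of_tsupport_subset isOpen_upperHalfPlaneSet hg.contDiff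
          hg.hasCompactSupport hg.tsupport_subset hF Complex.I
    _ = _ := by
        congr 1
        refine integral_congr_ae (.of_forall fun z => ?_)
        simp only [F]
        rcases eq_or_ne z.im 0 with hz | hz
        · simp [hz]
        · field_simp

end IsTestFunction

lemma abs_apply_one_mul_add_apply_I_mul_le (L : ℂ →L[ℝ] ℝ) (l m : ℝ) :
    |L 1| * l + m * L Complex.I ≤ √(l ^ 2 + m ^ 2) * ‖L‖ := by
  have happly : ∀ x : ℝ, L (x + m * Complex.I) = x * L 1 + m * L Complex.I := fun x => by
    rw [show (x + m * Complex.I : ℂ) = x • 1 + m • Complex.I by simp, map_add, map_smul, map_smul,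
      smul_eq_mul, smul_eq_mul]
  have hle : ∀ x : ℝ, x ^ 2 = l ^ 2 → x * L 1 + m * L Complex.I ≤ √(l ^ 2 + m ^ 2) * ‖L‖ := by
    intro x hx
    rw [← happly, ← hx, ← Complex.norm_add_mul_I, mul_comm _ ‖L‖]
    exact (le_abs_self _).trans (L.le_opNorm _)
  rcases abs_cases (L 1) with ⟨h, -⟩ | ⟨h, -⟩ <;> rw [h]
  · linarith [hle l rfl]
  · linarith [hle (-l) (neg_sq l)]

lemma sqrt_le_of_mul_cosh_le {A E L R : ℝ} (hA : 0 ≤ A) (hL : 0 ≤ L) (hE : 0 ≤ E) (hR : 0 ≤ R)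
    (h : cosh R * (A + 2 * π) - 2 * π - sinh R * E ≤ sinh R * L) :
    √(A ^ 2 + 4 * π * A) ≤ L + E := by
  have hπ := pi_pos
  rcases hR.eq_or_lt with rfl | hR
  · simp only [cosh_zero, sinh_zero] at h
    obtain rfl : A = 0 := by linarith
    simpa using add_nonneg hL hE
  have hcs := cosh_sq_sub_sinh_sq R
  have hs : 0 < sinh R := sinh_pos_iff.2 hR
  have hc := one_le_cosh R
  have hkey : sinh R * √(A ^ 2 + 4 * π * A) ≤ cosh R * (A + 2 * π) - 2 * π := by
    rw [← sqrt_sq hs.le, ← sqrt_mul (sq_nonneg _)]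
    refine sqrt_le_iff.2 ⟨by nlinarith, ?_⟩
    have hsq : (cosh R * (A + 2 * π) - 2 * π) ^ 2 - (cosh R ^ 2 - 1) * (A ^ 2 + 4 * π * A) =
        (A + 2 * π - 2 * π * cosh R) ^ 2 := by ring
    rw [show sinh R ^ 2 = cosh R ^ 2 - 1 by linarith]
    linarith [sq_nonneg (A + 2 * π - 2 * π * cosh R), hsq]
  refine le_of_mul_le_mul_left ?_ hs
  linarith

lemma IsTestFunction.cosh_mul_integral_sq_sub_le {g : ℂ → ℝ} {a b R : ℝ} {σ T : ℝ → ℝ}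
    (hg : IsTestFunction g) (hg0 : ∀ z, 0 ≤ g z) (hg1 : ∀ z, g z ≤ 1)
    (hsupp : ∀ z ∈ tsupport g, z.im ∈ Icc a b) (hσ : Continuous σ) (hσg : ∀ z, g z ≤ σ z.im)
    (hT : IsHeightTransport σ a b R T) :
    cosh R * ∫ z, g z ^ 2 ∂hyperbolicArea - sinh R * ∫ z, g z * (1 - g z) ∂hyperbolicArea ≤
      ∫ z, g z * ((σ z.im - 1) * T z.im + cosh R) ∂hyperbolicArea := by
  have hgcont := hg.contDiff.continuous
  have hTcont := hT.contDiff.continuous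
  have hint₁ : Integrable (fun z => cosh R * g z ^ 2) hyperbolicArea :=
    hg.integrable (by fun_prop) (by simp +contextual)
  have hint₂ : Integrable (fun z => sinh R * (g z * (1 - g z))) hyperbolicArea :=
    hg.integrable (by fun_prop) (by simp +contextual)
  rw [← integral_const_mul, ← integral_const_mul, ← integral_sub hint₁ hint₂]
  refine integral_mono (hint₁.sub hint₂) (hg.integrable (by fun_prop) (by simp +contextual))
    fun z => ?_
  by_cases hz : z ∈ tsupport g
  · have hTz := (hT.mem_Icc _ (hsupp z hz)).2
    rw [← cosh_add_sinh] at hTz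
    have hlow : (g z - 1) * T z.im ≤ (σ z.im - 1) * T z.im :=
      mul_le_mul_of_nonneg_right (by linarith [hσg z]) (hT.pos (hsupp z hz)).le
    have hup : (1 - g z) * T z.im ≤ (1 - g z) * (cosh R + sinh R) :=
      mul_le_mul_of_nonneg_left hTz (by linarith [hg1 z])
    calc cosh R * g z ^ 2 - sinh R * (g z * (1 - g z))
        = g z * (cosh R - (1 - g z) * (cosh R + sinh R)) := by ring
      _ ≤ _ := mul_le_mul_of_nonneg_left (by linarith) (hg0 z)
  · simp [image_eq_zero_of_notMem_tsupport hz]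

lemma IsTestFunction.integral_calibration_le {g : ℂ → ℝ} {a b R : ℝ} {σ T : ℝ → ℝ}
    (hg : IsTestFunction g) (hsupp : ∀ z ∈ tsupport g, z.im ∈ Icc a b) (hR : 0 ≤ R)
    (hT : IsHeightTransport σ a b R T) :
    ∫ z, z.im * (|fderiv ℝ g z 1| * √(sinh R ^ 2 - (T z.im - cosh R) ^ 2)) ∂hyperbolicArea -
        ∫ z, z.im * ((T z.im - cosh R) * fderiv ℝ g z Complex.I) ∂hyperbolicArea ≤
      sinh R * ∫ z, z.im * ‖fderiv ℝ g z‖ ∂hyperbolicArea := by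
  have hTcont := hT.contDiff.continuous
  have hfderiv := hg.contDiff.continuous_fderiv one_ne_zero
  have hint₁ : Integrable (fun z : ℂ => z.im * (|fderiv ℝ g z 1| *
      √(sinh R ^ 2 - (T z.im - cosh R) ^ 2))) hyperbolicArea :=
    hg.integrable (by fun_prop) (by simp +contextual)
  have hint₂ : Integrable (fun z : ℂ => z.im * ((T z.im - cosh R) * fderiv ℝ g z Complex.I))
      hyperbolicArea :=
    hg.integrable (by fun_prop) (by simp +contextual)
  rw [← integral_const_mul, ← integral_sub hint₁ hint₂]
  refine integral_mono (hint₁.sub hint₂) (hg.integrable (by fun_prop) (by simp +contextual))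
    fun z => ?_
  by_cases hz : z ∈ tsupport g
  · have hchord := sq_sub_cosh_le_sinh_sq (hT.mem_Icc _ (hsupp z hz))
    have hle := abs_apply_one_mul_add_apply_I_mul_le (fderiv ℝ g z)
      √(sinh R ^ 2 - (T z.im - cosh R) ^ 2) (-(T z.im - cosh R))
    rw [neg_sq, sq_sqrt (sub_nonneg.2 hchord), sub_add_cancel,
      sqrt_sq (sinh_nonneg_iff.2 hR)] at hle
    calc _ = z.im * (|fderiv ℝ g z 1| * √(sinh R ^ 2 - (T z.im - cosh R) ^ 2) +
            -(T z.im - cosh R) * fderiv ℝ g z Complex.I) := by ring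
      _ ≤ z.im * (sinh R * ‖fderiv ℝ g z‖) :=
        mul_le_mul_of_nonneg_left hle (le_of_lt (hg.tsupport_subset hz))
      _ = sinh R * (z.im * ‖fderiv ℝ g z‖) := by ring
  · simp [fderiv_eq_zero_of_notMem_tsupport hz]

/- Knothe's argument: carry the heights met by `g` to the heights of a hyperbolic disc, and test the
gradient of `g` against the vector field that this transport pulls back from the disc. -/
theorem IsTestFunction.sqrt_le_integral_norm_fderiv_add_integral {g : ℂ → ℝ} (hg : IsTestFunction g)
    (hg0 : ∀ z, 0 ≤ g z) (hg1 : ∀ z, g z ≤ 1) :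
    √((∫ z, g z ^ 2 ∂hyperbolicArea) ^ 2 + 4 * π * ∫ z, g z ^ 2 ∂hyperbolicArea) ≤
      ∫ z, z.im * ‖fderiv ℝ g z‖ ∂hyperbolicArea + ∫ z, g z * (1 - g z) ∂hyperbolicArea := by
  obtain ⟨a, b, ha, hab, hsupp⟩ :=
    exists_im_mem_Icc_of_isCompact hg.hasCompactSupport hg.tsupport_subset
  set σ : ℝ → ℝ := fun y => min 1 (horizontalVariation g y / 2)
  have hσ : Continuous σ := by
    have := hg.continuous_horizontalVariation
    fun_prop
  have hσ0 : ∀ y, 0 ≤ σ y := fun y =>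
    le_min zero_le_one (div_nonneg (horizontalVariation_nonneg g y) zero_le_two)
  have hσab : ∀ y ∉ Icc a b, σ y = 0 := fun y hy => by
    have hzero : horizontalVariation g y = 0 :=
      horizontalVariation_eq_zero fun z hz hzy => hy (hzy ▸ hsupp z hz)
    simp [σ, hzero]
  have hσg : ∀ z, g z ≤ σ z.im := fun z =>
    le_min (hg1 z) (by linarith [hg.two_mul_le_horizontalVariation z])
  have hσvar : ∀ y, 2 * σ y ≤ horizontalVariation g y := fun y => by
    linarith [min_le_right 1 (horizontalVariation g y / 2)]
  obtain ⟨R, T, hR, hT⟩ := exists_isHeightTransport ha hab hσ hσ0 hσab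
  refine sqrt_le_of_mul_cosh_le (integral_nonneg fun z => sq_nonneg _)
    (integral_nonneg fun z => ?_)
    (integral_nonneg fun z => mul_nonneg (hg0 z) (sub_nonneg.2 (hg1 z))) hR ?_
  · by_cases hz : z ∈ tsupport g
    · exact mul_nonneg (le_of_lt (hg.tsupport_subset hz)) (norm_nonneg _)
    · simp [fderiv_eq_zero_of_notMem_tsupport hz]
  · linarith [hg.cosh_mul_integral_sq_sub_le hg0 hg1 hsupp hσ hσg hT,
      hg.two_pi_mul_cosh_sub_one_le ha hab hR hsupp hσ hσvar hT,
      hg.integral_transport_eq_neg hT (cosh R), hg.integral_calibration_le hsupp hR hT]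
/-! ### Smooth steps -/

/-- A `C¹` nondecreasing transition from `0` to `1` across the interval `[s, t]`, with slope at
most `K`. -/
structure IsSmoothStep (s t K : ℝ) (φ : ℝ → ℝ) : Prop where
  contDiff : ContDiff ℝ 1 φ
  eq_zero : ∀ x ≤ s, φ x = 0
  eq_one : ∀ x, t ≤ x → φ x = 1
  deriv_nonneg : ∀ x, 0 ≤ deriv φ x
  deriv_le : ∀ x, deriv φ x ≤ K
  deriv_eq_zero : ∀ x ∉ Ioo s t, deriv φ x = 0

namespace IsSmoothStep

variable {s t K : ℝ} {φ : ℝ → ℝ}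

lemma monotone (hφ : IsSmoothStep s t K φ) : Monotone φ :=
  monotone_of_deriv_nonneg (hφ.contDiff.differentiable one_ne_zero) hφ.deriv_nonneg

lemma nonneg (hφ : IsSmoothStep s t K φ) (x : ℝ) : 0 ≤ φ x := by
  rw [← hφ.eq_zero (min x s) (min_le_right _ _)]
  exact hφ.monotone (min_le_left _ _)

lemma le_one (hφ : IsSmoothStep s t K φ) (x : ℝ) : φ x ≤ 1 := by
  rw [← hφ.eq_one (max x t) (le_max_right _ _)]
  exact hφ.monotone (le_max_left _ _)

end IsSmoothStep

lemma isSmoothStep_integral_div {s t K : ℝ} {ψ : ℝ → ℝ} (hψ : Continuous ψ) (hψ0 : ∀ x, 0 ≤ ψ x)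
    (hψ1 : ∀ x, ψ x ≤ 1) (hψs : ∀ x ∉ Ioo s t, ψ x = 0) (hK : 0 < K)
    (hKψ : 1 / K ≤ ∫ x in s..t, ψ x) :
    IsSmoothStep s t K fun x => (∫ u in s..x, ψ u) / ∫ u in s..t, ψ u := by
  set Z := ∫ u in s..t, ψ u
  have hZ : 0 < Z := (one_div_pos.2 hK).trans_le hKψ
  have hderiv (x : ℝ) : HasDerivAt (fun x => (∫ u in s..x, ψ u) / Z) (ψ x / Z) x :=
    (hψ.integral_hasStrictDerivAt s x).hasDerivAt.div_const Z
  have hderiv_eq : deriv (fun x => (∫ u in s..x, ψ u) / Z) = fun x => ψ x / Z :=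
    funext fun x => (hderiv x).deriv
  refine ⟨contDiff_one_iff_deriv.2 ⟨fun x => (hderiv x).differentiableAt, ?_⟩,
    fun x hx => ?_, fun x hx => ?_, fun x => ?_, fun x => ?_, fun x hx => ?_⟩
  · rw [hderiv_eq]
    exact hψ.div_const Z
  · rw [intervalIntegral.integral_zero_ae, zero_div]
    refine ae_of_all _ fun u hu => hψs u fun h => ?_
    exact absurd (uIoc_of_ge hx ▸ hu).2 (not_le.2 h.1)
  · have htail : ∫ u in t..x, ψ u = 0 := intervalIntegral.integral_zero_ae <|
      ae_of_all _ fun u hu => hψs u fun h => absurd (uIoc_of_le hx ▸ hu).1 (not_lt.2 h.2.le)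
    rw [← intervalIntegral.integral_add_adjacent_intervals (hψ.intervalIntegrable s t)
      (hψ.intervalIntegrable t x), htail, add_zero, div_self hZ.ne']
  · rw [hderiv_eq]
    exact div_nonneg (hψ0 x) hZ.le
  · rw [hderiv_eq]
    exact (div_le_iff₀ hZ).2 ((hψ1 x).trans ((div_le_iff₀' hK).1 hKψ))
  · rw [hderiv_eq]
    simp only [hψs x hx, zero_div]

/-- The piecewise affine bump that vanishes off `(s, t)` and equals `1` on `[s + κ, t - κ]`. -/
noncomputable def trapezoid (s t κ x : ℝ) : ℝ := max 0 (min 1 (min ((x - s) / κ) ((t - x) / κ)))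

lemma continuous_trapezoid (s t κ : ℝ) : Continuous (trapezoid s t κ) := by
  unfold trapezoid
  fun_prop

lemma trapezoid_eq_zero {s t κ x : ℝ} (hκ : 0 ≤ κ) (hx : x ∉ Ioo s t) : trapezoid s t κ x = 0 := by
  refine max_eq_left ((min_le_right _ _).trans ?_)
  rcases le_or_gt x s with h | h
  · exact (min_le_left _ _).trans (div_nonpos_of_nonpos_of_nonneg (sub_nonpos.2 h) hκ)
  · have htx : t ≤ x := not_lt.1 fun h' => hx ⟨h, h'⟩
    exact (min_le_right _ _).trans (div_nonpos_of_nonpos_of_nonneg (sub_nonpos.2 htx) hκ)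

lemma trapezoid_eq_one {s t κ x : ℝ} (hκ : 0 < κ) (hx : x ∈ Icc (s + κ) (t - κ)) :
    trapezoid s t κ x = 1 := by
  have hleft : 1 ≤ (x - s) / κ := (one_le_div hκ).2 (by linarith [hx.1])
  have hright : 1 ≤ (t - x) / κ := (one_le_div hκ).2 (by linarith [hx.2])
  rw [trapezoid, min_eq_left (le_min hleft hright), max_eq_right zero_le_one]

lemma sub_le_integral_trapezoid {s t κ : ℝ} (hκ : 0 < κ) (hst : s + κ ≤ t - κ) :
    t - s - 2 * κ ≤ ∫ x in s..t, trapezoid s t κ x := by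
  have hplateau : ∫ x in (s + κ)..(t - κ), trapezoid s t κ x = t - s - 2 * κ := by
    rw [intervalIntegral.integral_congr (g := fun _ => (1 : ℝ)) fun x hx =>
      trapezoid_eq_one hκ (uIcc_of_le hst ▸ hx), integral_one]
    ring
  rw [← hplateau]
  exact intervalIntegral.integral_mono_interval (by linarith) hst (by linarith)
    (ae_of_all _ fun x => le_max_left _ _) ((continuous_trapezoid s t κ).intervalIntegrable s t)

lemma exists_isSmoothStep {s t K : ℝ} (hst : s < t) (hK : 1 / (t - s) < K) :
    ∃ φ, IsSmoothStep s t K φ := by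
  have hts : 0 < t - s := sub_pos.2 hst
  have hK0 : 0 < K := (one_div_pos.2 hts).trans hK
  have hKinv : 1 / K < t - s := (div_lt_comm₀ hK0 hts).2 hK
  have hKinv0 : 0 < 1 / K := one_div_pos.2 hK0
  have hκ : 0 < (t - s - 1 / K) / 2 := by linarith
  refine ⟨_, isSmoothStep_integral_div (continuous_trapezoid s t _) (fun x => le_max_left _ _)
    (fun x => max_le zero_le_one (min_le_left _ _)) (fun x => trapezoid_eq_zero hκ.le) hK0 ?_⟩
  refine le_trans (by linarith) (sub_le_integral_trapezoid hκ (by linarith))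

/-! ### The Laplacian of the logarithm of a weighted modulus -/

lemma fderiv_fderiv_apply {E F : Type*} [NormedAddCommGroup E] [NormedSpace ℝ E]
    [NormedAddCommGroup F] [NormedSpace ℝ F] {u : E → F} {x : E} (hu : ContDiffAt ℝ 2 u x)
    (v w : E) : fderiv ℝ (fun y => fderiv ℝ u y v) x w = fderiv ℝ (fderiv ℝ u) x w v := by
  have hu' : DifferentiableAt ℝ (fderiv ℝ u) x :=
    (hu.fderiv_right (m := 1) (by norm_num)).differentiableAt one_ne_zero
  simp [fderiv_clm_apply hu' (differentiableAt_const v)]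

lemma laplacian_eq_fderiv_fderiv {F : Type*} [NormedAddCommGroup F] [NormedSpace ℝ F] {u : ℂ → F}
    {z : ℂ} (hu : ContDiffAt ℝ 2 u z) :
    Laplacian.laplacian u z = fderiv ℝ (fun w => fderiv ℝ u w 1) z 1 +
      fderiv ℝ (fun w => fderiv ℝ u w Complex.I) z Complex.I := by
  rw [fderiv_fderiv_apply hu, fderiv_fderiv_apply hu,
    InnerProductSpace.laplacian_eq_iteratedFDeriv_complexPlane]
  simp [iteratedFDeriv_two_apply]

lemma contDiffAt_log_im {n : WithTop ℕ∞} {z : ℂ} (hz : z.im ≠ 0) :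
    ContDiffAt ℝ n (fun w : ℂ => log w.im) z :=
  Complex.imCLM.contDiff.contDiffAt.log hz

lemma fderiv_log_im {z : ℂ} (hz : z.im ≠ 0) (v : ℂ) :
    fderiv ℝ (fun w : ℂ => log w.im) z v = z.im⁻¹ * v.im := by
  have h : HasFDerivAt (fun w : ℂ => log w.im) (z.im⁻¹ • Complex.imCLM) z :=
    Complex.imCLM.hasFDerivAt.log hz
  simp [h.fderiv]

lemma laplacian_log_im {z : ℂ} (hz : z.im ≠ 0) :
    Laplacian.laplacian (fun w : ℂ => log w.im) z = -1 / z.im ^ 2 := by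
  have hfirst (v : ℂ) : (fun w => fderiv ℝ (fun w : ℂ => log w.im) w v) =ᶠ[𝓝 z]
      fun w => w.im⁻¹ * v.im := by
    filter_upwards [Complex.continuous_im.continuousAt.eventually_ne hz] with w hw
    exact fderiv_log_im hw v
  have hsecond (v : ℂ) : fderiv ℝ (fun w : ℂ => w.im⁻¹ * v.im) z v = -v.im ^ 2 / z.im ^ 2 := by
    have h : HasFDerivAt (fun w : ℂ => w.im⁻¹ * v.im)
        (v.im • (-(z.im ^ 2)⁻¹ • Complex.imCLM)) z :=
      ((hasDerivAt_inv hz).comp_hasFDerivAt z Complex.imCLM.hasFDerivAt).mul_const v.im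
    simp only [h.fderiv, smul_apply, Complex.imCLM_apply, smul_eq_mul]
    ring
  rw [laplacian_eq_fderiv_fderiv (contDiffAt_log_im hz), (hfirst 1).fderiv_eq,
    (hfirst Complex.I).fderiv_eq, hsecond, hsecond]
  simp

/-- The logarithm of the weighted modulus `‖G z‖ * z.im ^ a`. -/
noncomputable def logWeightedNorm (G : ℂ → ℂ) (a : ℝ) (z : ℂ) : ℝ := log ‖G z‖ + a * log z.im

lemma contDiffAt_logWeightedNorm {G : ℂ → ℂ} {z : ℂ} (a : ℝ) (hG : AnalyticAt ℂ G z) (hGz : G z ≠ 0)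
    (hz : z.im ≠ 0) : ContDiffAt ℝ 2 (logWeightedNorm G a) z :=
  (hG.harmonicAt_log_norm hGz).1.add (contDiffAt_const.mul (contDiffAt_log_im hz))

lemma laplacian_logWeightedNorm {G : ℂ → ℂ} {z : ℂ} (a : ℝ) (hG : AnalyticAt ℂ G z) (hGz : G z ≠ 0)
    (hz : z.im ≠ 0) : Laplacian.laplacian (logWeightedNorm G a) z = -a / z.im ^ 2 := by
  obtain ⟨hsmooth, hharm⟩ := hG.harmonicAt_log_norm hGz
  have hsum : logWeightedNorm G a = (fun w => log ‖G w‖) + a • fun w : ℂ => log w.im := rfl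
  have him : ContDiffAt ℝ 2 (fun w : ℂ => log w.im) z := contDiffAt_log_im hz
  have him' : ContDiffAt ℝ 2 (a • fun w : ℂ => log w.im) z := him.const_smul a
  rw [hsum, hsmooth.laplacian_add him', InnerProductSpace.laplacian_smul _ him,
    hharm.eq_of_nhds, laplacian_log_im hz, smul_eq_mul, Pi.zero_apply]
  ring

/-! ### Level sets of a weighted modulus -/

section General

variable {X : Type*} [MeasurableSpace X] {μ : Measure X}

lemma sq_integral_mul_le {P f : X → ℝ} (hP : ∀ x, 0 ≤ P x) (hPint : Integrable P μ)
    (hPf : Integrable (fun x => P x * f x) μ) (hPf2 : Integrable (fun x => P x * f x ^ 2) μ) :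
    (∫ x, P x * f x ∂μ) ^ 2 ≤ (∫ x, P x ∂μ) * ∫ x, P x * f x ^ 2 ∂μ := by
  have hlin (c : ℝ) :
      Integrable (fun x => c * c * (P x * f x ^ 2) + -2 * c * (P x * f x)) μ :=
    (hPf2.const_mul _).add (hPf.const_mul _)
  have hquad (c : ℝ) : 0 ≤ (∫ x, P x * f x ^ 2 ∂μ) * (c * c) +
      (-2 * ∫ x, P x * f x ∂μ) * c + ∫ x, P x ∂μ := by
    calc 0 ≤ ∫ x, P x * (c * f x - 1) ^ 2 ∂μ :=
        integral_nonneg fun x => mul_nonneg (hP x) (sq_nonneg _)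
      _ = ∫ x, c * c * (P x * f x ^ 2) + -2 * c * (P x * f x) + P x ∂μ :=
        integral_congr_ae (.of_forall fun x => by ring)
      _ = _ := by
        rw [integral_add (hlin c) hPint, integral_add (hPf2.const_mul _) (hPf.const_mul _),
          integral_const_mul, integral_const_mul]
        ring
  have hdiscrim := discrim_le_zero hquad
  rw [discrim] at hdiscrim
  linarith

lemma integral_le_mul_measureReal {f : X → ℝ} {S : Set X} {C : ℝ} (hS : μ S < ⊤)
    (hf : ∀ x ∈ S, |f x| ≤ C) (hf0 : ∀ x ∉ S, f x = 0) : ∫ x, f x ∂μ ≤ C * μ.real S := by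
  rw [← setIntegral_eq_integral_of_forall_compl_eq_zero hf0]
  exact (le_norm_self _).trans (norm_setIntegral_le_of_norm_le_const hS hf)

lemma measureReal_le_integral {f : X → ℝ} {S : Set X} (hS : MeasurableSet S)
    (hfint : Integrable f μ) (hf0 : ∀ x, 0 ≤ f x) (hf : ∀ x ∈ S, f x = 1) :
    μ.real S ≤ ∫ x, f x ∂μ := by
  calc μ.real S = ∫ x in S, f x ∂μ := by rw [setIntegral_congr_fun hS hf]; simp
    _ ≤ ∫ x, f x ∂μ := setIntegral_le_integral hfint (.of_forall hf0)

end General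

lemma sq_norm_le_sq_apply_one_add_sq_apply_I (L : ℂ →L[ℝ] ℝ) :
    ‖L‖ ^ 2 ≤ L 1 ^ 2 + L Complex.I ^ 2 := by
  refine (pow_le_pow_left₀ (norm_nonneg _) (L.opNorm_le_bound (sqrt_nonneg _) fun z => ?_) 2).trans
    (sq_sqrt (by positivity)).le
  have hL : L z = z.re * L 1 + z.im * L Complex.I := by
    conv_lhs => rw [← Complex.re_add_im z]
    rw [show (z.re + z.im * Complex.I : ℂ) = z.re • 1 + z.im • Complex.I by simp, map_add,
      map_smul, map_smul, smul_eq_mul, smul_eq_mul]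
  rw [norm_eq_abs, ← sqrt_sq (norm_nonneg z), ← sqrt_mul (by positivity), Complex.sq_norm,
    Complex.normSq_apply]
  refine abs_le_sqrt ?_
  rw [hL]
  nlinarith [sq_nonneg (z.im * L 1 - z.re * L Complex.I)]

lemma integral_mul_laplacian_eq_neg {g u : ℂ → ℝ} {U : Set ℂ} (hU : IsOpen U)
    (hg : ContDiff ℝ 1 g) (hgc : HasCompactSupport g) (hgU : tsupport g ⊆ U)
    (hu : ContDiffOn ℝ 2 u U) :
    ∫ z, g z * Laplacian.laplacian u z =
      -∫ z, fderiv ℝ g z 1 * fderiv ℝ u z 1 +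
        fderiv ℝ g z Complex.I * fderiv ℝ u z Complex.I := by
  have hF (v : ℂ) : ContDiffOn ℝ 1 (fun z => fderiv ℝ u z v) U :=
    (hu.fderiv_of_isOpen hU (by norm_num)).clm_apply contDiffOn_const
  have hleft (v : ℂ) : Integrable fun z => g z * fderiv ℝ (fun w => fderiv ℝ u w v) z v := by
    refine integrable_of_continuousOn_of_eq_zero hgc ?_ fun z hz => by
      simp [image_eq_zero_of_notMem_tsupport hz]
    exact hg.continuous.continuousOn.mul
      ((((hF v).continuousOn_fderiv_of_isOpen hU le_rfl).clm_apply continuousOn_const).mono hgU)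
  have hright (v : ℂ) : Integrable fun z => fderiv ℝ g z v * fderiv ℝ u z v := by
    refine integrable_of_continuousOn_of_eq_zero hgc ?_ fun z hz => by
      simp [fderiv_eq_zero_of_notMem_tsupport hz]
    exact ((hg.continuous_fderiv one_ne_zero).clm_apply continuous_const).continuousOn.mul
      ((hF v).continuousOn.mono hgU)
  calc ∫ z, g z * Laplacian.laplacian u z
      = ∫ z, g z * fderiv ℝ (fun w => fderiv ℝ u w 1) z 1 +
          g z * fderiv ℝ (fun w => fderiv ℝ u w Complex.I) z Complex.I := by
        refine integral_congr_ae (.of_forall fun z => ?_)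
        by_cases hz : z ∈ tsupport g
        · simp only [laplacian_eq_fderiv_fderiv (hu.contDiffAt (hU.mem_nhds (hgU hz))), mul_add]
        · simp [image_eq_zero_of_notMem_tsupport hz]
    _ = _ := by
        rw [integral_add (hleft _) (hleft _), integral_add (hright _) (hright _),
          integral_mul_fderiv_eq_neg_of_tsupport_subset hU hg hgc hgU (hF _),
          integral_mul_fderiv_eq_neg_of_tsupport_subset hU hg hgc hgU (hF _), neg_add]

/-- The weighted modulus `‖G z‖ * z.im ^ a` on the upper half-plane, extended by `0`. -/
noncomputable def weightedNorm (G : ℂ → ℂ) (a : ℝ) : ℂ → ℝ :=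
  upperHalfPlaneSet.indicator fun z => ‖G z‖ * z.im ^ a

section weightedNorm

variable {G : ℂ → ℂ} {a t : ℝ} {z : ℂ}

lemma weightedNorm_nonneg (G : ℂ → ℂ) (a : ℝ) (z : ℂ) : 0 ≤ weightedNorm G a z :=
  indicator_nonneg (fun _ hz => mul_nonneg (norm_nonneg _) (rpow_nonneg (le_of_lt hz) _)) z

lemma weightedNorm_pos_iff : 0 < weightedNorm G a z ↔ z ∈ upperHalfPlaneSet ∧ G z ≠ 0 := by
  by_cases hz : z ∈ upperHalfPlaneSet
  · have him : 0 < z.im ^ a := rpow_pos_of_pos hz a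
    simp [weightedNorm, hz, him]
  · simp [weightedNorm, hz]

lemma weightedNorm_eq_exp (hz : z ∈ upperHalfPlaneSet) (hGz : G z ≠ 0) :
    weightedNorm G a z = exp (logWeightedNorm G a z) := by
  rw [weightedNorm, indicator_of_mem hz, logWeightedNorm, exp_add, exp_log (norm_pos_iff.2 hGz),
    rpow_def_of_pos hz, mul_comm a]

lemma continuousOn_weightedNorm (hG : ContinuousOn G upperHalfPlaneSet) :
    ContinuousOn (weightedNorm G a) upperHalfPlaneSet := by
  refine ContinuousOn.congr (f := fun z => ‖G z‖ * z.im ^ a) ?_ fun z hz => indicator_of_mem hz _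
  exact hG.norm.mul (Complex.continuous_im.continuousOn.rpow_const fun z hz =>
    Or.inl (ne_of_gt hz))

lemma isOpen_lt_weightedNorm (hG : ContinuousOn G upperHalfPlaneSet) (ht : 0 ≤ t) :
    IsOpen {z | t < weightedNorm G a z} := by
  have hset : {z | t < weightedNorm G a z} =
      upperHalfPlaneSet ∩ weightedNorm G a ⁻¹' Ioi t :=
    Set.ext fun z => ⟨fun h => ⟨(weightedNorm_pos_iff.1 (ht.trans_lt h)).1, h⟩, fun h => h.2⟩
  rw [hset]
  exact (continuousOn_weightedNorm hG).isOpen_inter_preimage isOpen_upperHalfPlaneSet isOpen_Ioi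

end weightedNorm

/-- `G` is holomorphic on the upper half-plane and `‖G z‖ * z.im ^ a` tends to `0` at the boundary,
expressed by the compactness of its superlevel sets. -/
structure IsWeightedVanishing (G : ℂ → ℂ) (a : ℝ) : Prop where
  differentiableOn : DifferentiableOn ℂ G upperHalfPlaneSet
  isCompact : ∀ s, 0 < s → IsCompact {z | s ≤ weightedNorm G a z}

/-- The distribution function of the weighted modulus with respect to hyperbolic area. -/
noncomputable def levelArea (G : ℂ → ℂ) (a t : ℝ) : ℝ :=
  hyperbolicArea.real {z | t < weightedNorm G a z}

lemma levelArea_nonneg (G : ℂ → ℂ) (a t : ℝ) : 0 ≤ levelArea G a t := measureReal_nonneg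

namespace IsWeightedVanishing

variable {G : ℂ → ℂ} {a s t K : ℝ} {φ : ℝ → ℝ}

lemma isOpen_pos (hG : IsWeightedVanishing G a) : IsOpen {z | 0 < weightedNorm G a z} :=
  isOpen_lt_weightedNorm hG.differentiableOn.continuousOn le_rfl

lemma measurableSet_lt (hG : IsWeightedVanishing G a) (ht : 0 ≤ t) :
    MeasurableSet {z | t < weightedNorm G a z} :=
  (isOpen_lt_weightedNorm hG.differentiableOn.continuousOn ht).measurableSet

lemma integrable_of_continuousOn (hG : IsWeightedVanishing G a) (hs : 0 < s) {h : ℂ → ℝ}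
    (hh : ContinuousOn h {z | 0 < weightedNorm G a z})
    (h0 : ∀ z, weightedNorm G a z < s → h z = 0) : Integrable h hyperbolicArea :=
  integrable_hyperbolicArea_of_continuousOn (hG.isCompact s hs)
    (fun _ hz => (weightedNorm_pos_iff.1 (hs.trans_le hz)).1)
    (hh.mono fun _ hz => hs.trans_le hz) fun z hz => h0 z (not_le.1 hz)

lemma hyperbolicArea_lt_top (hG : IsWeightedVanishing G a) (hs : 0 < s) :
    hyperbolicArea {z | s < weightedNorm G a z} < ⊤ := by
  have hK : MeasurableSet {z | s ≤ weightedNorm G a z} := (hG.isCompact s hs).measurableSet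
  have hint : Integrable ({z | s ≤ weightedNorm G a z}.indicator 1 : ℂ → ℝ) hyperbolicArea :=
    integrable_hyperbolicArea_of_continuousOn (hG.isCompact s hs)
      (fun _ hz => (weightedNorm_pos_iff.1 (hs.trans_le hz)).1)
      (continuousOn_const.congr fun z hz => indicator_of_mem hz 1)
      fun z hz => indicator_of_notMem hz 1
  have hfin := (integrable_indicator_iff hK).1 hint
  rw [Pi.one_def, integrableOn_const_iff] at hfin
  exact (measure_mono fun z (hz : s < _) => hz.le).trans_lt (hfin.resolve_left (by simp))

lemma measureReal_sdiff_eq (hG : IsWeightedVanishing G a) (hs : 0 < s) (hst : s < t) :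
    hyperbolicArea.real ({z | s < weightedNorm G a z} \ {z | t < weightedNorm G a z}) =
      levelArea G a s - levelArea G a t :=
  measureReal_sdiff (fun _ hz => hst.trans hz) (hG.measurableSet_lt (hs.trans hst).le)
    (hG.hyperbolicArea_lt_top hs).ne

lemma levelArea_anti (hG : IsWeightedVanishing G a) (hs : 0 < s) (hst : s ≤ t) :
    levelArea G a t ≤ levelArea G a s :=
  measureReal_mono (fun _ hz => hst.trans_lt hz) (hG.hyperbolicArea_lt_top hs).ne

lemma contDiffOn_logWeightedNorm (hG : IsWeightedVanishing G a) :
    ContDiffOn ℝ 2 (logWeightedNorm G a) {z | 0 < weightedNorm G a z} := by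
  intro z hz
  obtain ⟨hzH, hGz⟩ := weightedNorm_pos_iff.1 hz
  exact (contDiffAt_logWeightedNorm a (hG.differentiableOn.analyticAt
    (isOpen_upperHalfPlaneSet.mem_nhds hzH)) hGz hzH.ne').contDiffWithinAt

lemma comp_eventuallyEq (hG : IsWeightedVanishing G a) (φ : ℝ → ℝ) {z : ℂ}
    (hz : 0 < weightedNorm G a z) :
    (fun w => φ (weightedNorm G a w)) =ᶠ[𝓝 z] fun w => φ (exp (logWeightedNorm G a w)) := by
  filter_upwards [hG.isOpen_pos.mem_nhds hz] with w hw
  obtain ⟨hwH, hGw⟩ := weightedNorm_pos_iff.1 hw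
  rw [weightedNorm_eq_exp hwH hGw]

lemma comp_eventuallyEq_zero (hG : IsWeightedVanishing G a) (hφ : IsSmoothStep s t K φ)
    (hs : 0 < s) {z : ℂ} (hz : weightedNorm G a z < s) :
    (fun w => φ (weightedNorm G a w)) =ᶠ[𝓝 z] fun _ => 0 := by
  filter_upwards [(hG.isCompact s hs).isClosed.isOpen_compl.mem_nhds (not_le.2 hz)] with w
    (hw : ¬s ≤ weightedNorm G a w)
  exact hφ.eq_zero _ (not_le.1 hw).le

lemma tsupport_comp_subset (hG : IsWeightedVanishing G a) (hφ : IsSmoothStep s t K φ)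
    (hs : 0 < s) : tsupport (fun z => φ (weightedNorm G a z)) ⊆ {z | s ≤ weightedNorm G a z} :=
  closure_minimal (fun _ hz => not_lt.1 fun h => hz (hφ.eq_zero _ h.le))
    (hG.isCompact s hs).isClosed

lemma isTestFunction_comp (hG : IsWeightedVanishing G a) (hφ : IsSmoothStep s t K φ)
    (hs : 0 < s) : IsTestFunction fun z => φ (weightedNorm G a z) where
  contDiff := by
    refine contDiff_iff_contDiffAt.2 fun z => ?_
    rcases lt_or_ge (weightedNorm G a z) s with hz | hz
    · exact contDiffAt_const.congr_of_eventuallyEq (hG.comp_eventuallyEq_zero hφ hs hz)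
    · have hpos : 0 < weightedNorm G a z := hs.trans_le hz
      have hu := (hG.contDiffOn_logWeightedNorm.contDiffAt (hG.isOpen_pos.mem_nhds hpos)).of_le
        one_le_two
      exact (hφ.contDiff.contDiffAt.comp z hu.exp).congr_of_eventuallyEq
        (hG.comp_eventuallyEq φ hpos)
  hasCompactSupport := (hG.isCompact s hs).of_isClosed_subset (isClosed_tsupport _)
    (hG.tsupport_comp_subset hφ hs)
  tsupport_subset _ hz :=
    (weightedNorm_pos_iff.1 (hs.trans_le (hG.tsupport_comp_subset hφ hs hz))).1

end IsWeightedVanishing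

/-- The factor relating the gradient of `φ ∘ weightedNorm G a` to that of `logWeightedNorm G a`. -/
noncomputable def shellWeight (φ : ℝ → ℝ) (G : ℂ → ℂ) (a : ℝ) (z : ℂ) : ℝ :=
  deriv φ (weightedNorm G a z) * weightedNorm G a z

section shellWeight

variable {G : ℂ → ℂ} {a s t K : ℝ} {φ : ℝ → ℝ} {z : ℂ}

lemma shellWeight_nonneg (hφ : IsSmoothStep s t K φ) (G : ℂ → ℂ) (a : ℝ) (z : ℂ) :
    0 ≤ shellWeight φ G a z :=
  mul_nonneg (hφ.deriv_nonneg _) (weightedNorm_nonneg G a z)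

lemma shellWeight_eq_zero (hφ : IsSmoothStep s t K φ) (hz : weightedNorm G a z ∉ Ioo s t) :
    shellWeight φ G a z = 0 := by
  rw [shellWeight, hφ.deriv_eq_zero _ hz, zero_mul]

lemma abs_shellWeight_le (hφ : IsSmoothStep s t K φ) (hz : weightedNorm G a z ≤ t) :
    |shellWeight φ G a z| ≤ K * t := by
  rw [abs_of_nonneg (shellWeight_nonneg hφ G a z)]
  exact mul_le_mul (hφ.deriv_le _) hz (weightedNorm_nonneg G a z)
    ((hφ.deriv_nonneg 0).trans (hφ.deriv_le 0))

end shellWeight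

namespace IsWeightedVanishing

variable {G : ℂ → ℂ} {a s t K : ℝ} {φ : ℝ → ℝ}

lemma fderiv_comp (hG : IsWeightedVanishing G a) (hφ : IsSmoothStep s t K φ) (hs : 0 < s)
    (z : ℂ) : fderiv ℝ (fun w => φ (weightedNorm G a w)) z =
      shellWeight φ G a z • fderiv ℝ (logWeightedNorm G a) z := by
  rcases lt_or_ge (weightedNorm G a z) s with hz | hz
  · rw [(hG.comp_eventuallyEq_zero hφ hs hz).fderiv_eq,
      shellWeight_eq_zero hφ fun h => h.1.not_gt hz, fderiv_const_apply, zero_smul]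
  · have hpos : 0 < weightedNorm G a z := hs.trans_le hz
    obtain ⟨hzH, hGz⟩ := weightedNorm_pos_iff.1 hpos
    have hu : HasFDerivAt (logWeightedNorm G a) (fderiv ℝ (logWeightedNorm G a) z) z :=
      ((hG.contDiffOn_logWeightedNorm.contDiffAt (hG.isOpen_pos.mem_nhds hpos)).differentiableAt
        two_ne_zero).hasFDerivAt
    have hφu := (hφ.contDiff.differentiable one_ne_zero _).hasDerivAt.comp_hasFDerivAt z hu.exp
    rw [(hG.comp_eventuallyEq φ hpos).fderiv_eq, shellWeight, weightedNorm_eq_exp hzH hGz,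
      mul_smul]
    exact hφu.fderiv

lemma continuousOn_shellWeight (hG : IsWeightedVanishing G a) (hφ : IsSmoothStep s t K φ) :
    ContinuousOn (shellWeight φ G a) {z | 0 < weightedNorm G a z} := by
  have hV : ContinuousOn (weightedNorm G a) {z | 0 < weightedNorm G a z} :=
    (continuousOn_weightedNorm hG.differentiableOn.continuousOn).mono
      fun z hz => (weightedNorm_pos_iff.1 hz).1
  exact ((hφ.contDiff.continuous_deriv le_rfl).comp_continuousOn hV).mul hV

lemma continuousOn_fderiv_logWeightedNorm (hG : IsWeightedVanishing G a) :
    ContinuousOn (fderiv ℝ (logWeightedNorm G a)) {z | 0 < weightedNorm G a z} :=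
  hG.contDiffOn_logWeightedNorm.continuousOn_fderiv_of_isOpen hG.isOpen_pos one_le_two

lemma integrable_shellWeight_mul (hG : IsWeightedVanishing G a) (hφ : IsSmoothStep s t K φ)
    (hs : 0 < s) {h : ℂ → ℝ} (hh : ContinuousOn h {z | 0 < weightedNorm G a z}) :
    Integrable (fun z => shellWeight φ G a z * h z) hyperbolicArea :=
  hG.integrable_of_continuousOn hs ((hG.continuousOn_shellWeight hφ).mul hh) fun z hz => by
    rw [shellWeight_eq_zero hφ fun h => h.1.not_gt hz, zero_mul]

lemma integral_comp_mul_laplacian (hG : IsWeightedVanishing G a) (hφ : IsSmoothStep s t K φ)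
    (hs : 0 < s) :
    ∫ z, φ (weightedNorm G a z) * Laplacian.laplacian (logWeightedNorm G a) z =
      -(a * ∫ z, φ (weightedNorm G a z) ∂hyperbolicArea) := by
  rw [integral_hyperbolicArea, ← integral_const_mul, ← integral_neg]
  refine integral_congr_ae (.of_forall fun z => ?_)
  rcases lt_or_ge (weightedNorm G a z) s with hz | hz
  · simp [hφ.eq_zero _ hz.le]
  · obtain ⟨hzH, hGz⟩ := weightedNorm_pos_iff.1 (hs.trans_le hz)
    have hGan := hG.differentiableOn.analyticAt (isOpen_upperHalfPlaneSet.mem_nhds hzH)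
    simp only [laplacian_logWeightedNorm a hGan hGz hzH.ne']
    ring

/- Green's identity: `logWeightedNorm G a` has constant hyperbolic Laplacian `-a`. -/
lemma integral_shellWeight_mul_sq_le (hG : IsWeightedVanishing G a)
    (hφ : IsSmoothStep s t K φ) (hs : 0 < s) :
    ∫ z, shellWeight φ G a z * (z.im * ‖fderiv ℝ (logWeightedNorm G a) z‖) ^ 2 ∂hyperbolicArea ≤
      a * ∫ z, φ (weightedNorm G a z) ∂hyperbolicArea := by
  set u := logWeightedNorm G a
  have hg := hG.isTestFunction_comp hφ hs
  have hu (v : ℂ) : ContinuousOn (fun z => fderiv ℝ u z v) {z | 0 < weightedNorm G a z} :=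
    hG.continuousOn_fderiv_logWeightedNorm.clm_apply continuousOn_const
  have hgreen := integral_mul_laplacian_eq_neg hG.isOpen_pos hg.contDiff hg.hasCompactSupport
    ((hG.tsupport_comp_subset hφ hs).trans fun z hz => hs.trans_le hz)
    hG.contDiffOn_logWeightedNorm
  rw [hG.integral_comp_mul_laplacian hφ hs, neg_inj] at hgreen
  rw [hgreen, integral_hyperbolicArea]
  simp only [hG.fderiv_comp hφ hs, smul_apply, smul_eq_mul]
  have hbound (z : ℂ) : shellWeight φ G a z * (z.im * ‖fderiv ℝ u z‖) ^ 2 / z.im ^ 2 ≤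
      shellWeight φ G a z * (fderiv ℝ u z 1 ^ 2 + fderiv ℝ u z Complex.I ^ 2) := by
    rw [mul_pow, mul_div_assoc]
    refine mul_le_mul_of_nonneg_left (le_trans ?_ (sq_norm_le_sq_apply_one_add_sq_apply_I _))
      (shellWeight_nonneg hφ G a z)
    exact div_le_of_le_mul₀ (sq_nonneg _) (sq_nonneg _) (mul_comm _ _).le
  refine integral_mono_of_nonneg (.of_forall fun z => ?_) ?_ (.of_forall fun z => ?_)
  · exact div_nonneg (mul_nonneg (shellWeight_nonneg hφ G a z) (sq_nonneg _)) (sq_nonneg _)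
  · refine integrable_of_continuousOn_of_eq_zero (hG.isCompact s hs) ?_ fun z hz => by
      simp [shellWeight_eq_zero hφ fun h => hz h.1.le]
    exact ContinuousOn.mono (((hG.continuousOn_shellWeight hφ).mul (hu _)).mul (hu _) |>.add <|
      ((hG.continuousOn_shellWeight hφ).mul (hu _)).mul (hu _)) fun z hz => hs.trans_le hz
  · exact (hbound z).trans_eq (by ring)

lemma levelArea_le_integral_sq (hG : IsWeightedVanishing G a) (hφ : IsSmoothStep s t K φ)
    (hs : 0 < s) (hst : s < t) :
    levelArea G a t ≤ ∫ z, φ (weightedNorm G a z) ^ 2 ∂hyperbolicArea := by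
  have hg := hG.isTestFunction_comp hφ hs
  refine measureReal_le_integral (hG.measurableSet_lt (hs.trans hst).le)
    (hg.integrable (hg.contDiff.continuous.pow 2).continuousOn fun z hz _ => by simp [hz])
    (fun z => sq_nonneg _) fun z hz => by simp [hφ.eq_one _ (le_of_lt hz)]

lemma integral_comp_le_levelArea (hG : IsWeightedVanishing G a) (hφ : IsSmoothStep s t K φ)
    (hs : 0 < s) : ∫ z, φ (weightedNorm G a z) ∂hyperbolicArea ≤ levelArea G a s := by
  rw [← one_mul (levelArea G a s)]
  exact integral_le_mul_measureReal (hG.hyperbolicArea_lt_top hs)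
    (fun z _ => abs_le.2 ⟨by linarith [hφ.nonneg (weightedNorm G a z)], hφ.le_one _⟩)
    fun z hz => hφ.eq_zero _ (not_lt.1 hz)

lemma integral_le_mul_levelArea_sub (hG : IsWeightedVanishing G a) (hs : 0 < s) (hst : s < t)
    {f : ℂ → ℝ} {C : ℝ} (hf : ∀ z, weightedNorm G a z ≤ t → |f z| ≤ C)
    (hf0 : ∀ z, weightedNorm G a z ∉ Ioc s t → f z = 0) :
    ∫ z, f z ∂hyperbolicArea ≤ C * (levelArea G a s - levelArea G a t) := by
  rw [← hG.measureReal_sdiff_eq hs hst]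
  exact integral_le_mul_measureReal
    ((measure_mono sdiff_subset).trans_lt (hG.hyperbolicArea_lt_top hs))
    (fun z hz => hf z (not_lt.1 hz.2)) fun z hz => hf0 z fun h => hz ⟨h.1, not_lt.2 h.2⟩

lemma integral_im_mul_norm_fderiv_comp_le (hG : IsWeightedVanishing G a)
    (hφ : IsSmoothStep s t K φ) (ha : 0 ≤ a) (hs : 0 < s) (hst : s < t) :
    ∫ z, z.im * ‖fderiv ℝ (fun w => φ (weightedNorm G a w)) z‖ ∂hyperbolicArea ≤
      √(K * t * (levelArea G a s - levelArea G a t) * (a * levelArea G a s)) := by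
  have hu := hG.continuousOn_fderiv_logWeightedNorm.norm
  have hyu : ContinuousOn (fun z : ℂ => z.im * ‖fderiv ℝ (logWeightedNorm G a) z‖)
      {z | 0 < weightedNorm G a z} := Complex.continuous_im.continuousOn.mul hu
  have hmass : ∫ z, shellWeight φ G a z ∂hyperbolicArea ≤
      K * t * (levelArea G a s - levelArea G a t) :=
    hG.integral_le_mul_levelArea_sub hs hst (fun z => abs_shellWeight_le hφ)
      fun z hz => shellWeight_eq_zero hφ fun h => hz (Ioo_subset_Ioc_self h)
  have henergy := (hG.integral_shellWeight_mul_sq_le hφ hs).trans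
    (mul_le_mul_of_nonneg_left (hG.integral_comp_le_levelArea hφ hs) ha)
  have hmass0 : 0 ≤ ∫ z, shellWeight φ G a z ∂hyperbolicArea :=
    integral_nonneg (shellWeight_nonneg hφ G a)
  have henergy0 : 0 ≤ ∫ z, shellWeight φ G a z *
      (z.im * ‖fderiv ℝ (logWeightedNorm G a) z‖) ^ 2 ∂hyperbolicArea :=
    integral_nonneg fun z => mul_nonneg (shellWeight_nonneg hφ G a z) (sq_nonneg _)
  calc _ = ∫ z, shellWeight φ G a z * (z.im * ‖fderiv ℝ (logWeightedNorm G a) z‖)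
        ∂hyperbolicArea := by
        refine integral_congr_ae (.of_forall fun z => ?_)
        simp only [hG.fderiv_comp hφ hs, norm_smul,
          norm_of_nonneg (shellWeight_nonneg hφ G a z)]
        ring
    _ ≤ _ := le_sqrt_of_sq_le <| (sq_integral_mul_le (shellWeight_nonneg hφ G a)
        (by simpa using hG.integrable_shellWeight_mul hφ hs continuousOn_const (h := 1))
        (hG.integrable_shellWeight_mul hφ hs hyu)
        (hG.integrable_shellWeight_mul hφ hs (hyu.pow 2))).trans
          (mul_le_mul hmass henergy henergy0 (hmass0.trans hmass))

theorem sqrt_levelArea_le_of_isSmoothStep (hG : IsWeightedVanishing G a)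
    (hφ : IsSmoothStep s t K φ) (ha : 0 ≤ a) (hs : 0 < s) (hst : s < t) :
    √(levelArea G a t ^ 2 + 4 * π * levelArea G a t) ≤
      √(K * t * (levelArea G a s - levelArea G a t) * (a * levelArea G a s)) +
        (levelArea G a s - levelArea G a t) := by
  have hg := hG.isTestFunction_comp hφ hs
  have hlayer : ∫ z, φ (weightedNorm G a z) * (1 - φ (weightedNorm G a z)) ∂hyperbolicArea ≤
      1 * (levelArea G a s - levelArea G a t) := by
    refine hG.integral_le_mul_levelArea_sub hs hst (fun z _ => ?_) fun z hz => ?_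
    · have h0 := hφ.nonneg (weightedNorm G a z)
      have h1 := hφ.le_one (weightedNorm G a z)
      exact abs_le.2 ⟨by nlinarith, by nlinarith⟩
    · rcases le_or_gt (weightedNorm G a z) s with h | h
      · simp [hφ.eq_zero _ h]
      · simp [hφ.eq_one _ (not_le.1 fun h' => hz ⟨h, h'⟩).le]
  calc √(levelArea G a t ^ 2 + 4 * π * levelArea G a t)
      ≤ √((∫ z, φ (weightedNorm G a z) ^ 2 ∂hyperbolicArea) ^ 2 +
          4 * π * ∫ z, φ (weightedNorm G a z) ^ 2 ∂hyperbolicArea) := by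
        have := levelArea_nonneg G a t
        gcongr <;> exact hG.levelArea_le_integral_sq hφ hs hst
    _ ≤ _ := hg.sqrt_le_integral_norm_fderiv_add_integral (fun z => hφ.nonneg _)
        fun z => hφ.le_one _
    _ ≤ _ := add_le_add (hG.integral_im_mul_norm_fderiv_comp_le hφ ha hs hst)
        (hlayer.trans_eq (one_mul _))

theorem sqrt_levelArea_le (hG : IsWeightedVanishing G a) (ha : 0 ≤ a) (hs : 0 < s)
    (hst : s < t) :
    √(levelArea G a t ^ 2 + 4 * π * levelArea G a t) ≤
      √(1 / (t - s) * t * (levelArea G a s - levelArea G a t) * (a * levelArea G a s)) +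
        (levelArea G a s - levelArea G a t) := by
  have hcont : Continuous fun K =>
      √(K * t * (levelArea G a s - levelArea G a t) * (a * levelArea G a s)) +
        (levelArea G a s - levelArea G a t) := by fun_prop
  refine ge_of_tendsto ((hcont.tendsto _).mono_left nhdsWithin_le_nhds)
    (eventually_nhdsWithin_of_forall (s := Ioi (1 / (t - s))) fun K hK => ?_)
  obtain ⟨φ, hφ⟩ := exists_isSmoothStep hst hK
  exact hG.sqrt_levelArea_le_of_isSmoothStep hφ ha hs hst

end IsWeightedVanishing

/-! ### Growth of the distribution function -/

/-- A nonincreasing function on `(0, ∞)` obeying the discrete form of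
`m ^ 2 + c * m ≤ -a * t * m t * m' t` that the isoperimetric inequality and Green's identity give
for distribution functions. -/
structure IsIsoperimetricDistribution (a c : ℝ) (m : ℝ → ℝ) : Prop where
  nonneg : ∀ t, 0 ≤ m t
  antitoneOn : AntitoneOn m (Ioi 0)
  sqrt_le : ∀ s t, 0 < s → s < t → √(m t ^ 2 + c * m t) ≤
    √(1 / (t - s) * t * (m s - m t) * (a * m s)) + (m s - m t)

lemma IsWeightedVanishing.isIsoperimetricDistribution {G : ℂ → ℂ} {a : ℝ}
    (hG : IsWeightedVanishing G a) (ha : 0 ≤ a) :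
    IsIsoperimetricDistribution a (4 * π) (levelArea G a) where
  nonneg := levelArea_nonneg G a
  antitoneOn _ hs _ _ hst := hG.levelArea_anti hs hst
  sqrt_le _ _ hs hst := hG.sqrt_levelArea_le ha hs hst

lemma exists_seq_halving {P : ℝ → ℝ → Prop}
    (hP : ∀ x y, x < y → P x y → P x ((x + y) / 2) ∨ P ((x + y) / 2) y) {a b : ℝ} (hab : a < b)
    (h : P a b) :
    ∃ u v : ℕ → ℝ, u 0 = a ∧ v 0 = b ∧ Monotone u ∧ Antitone v ∧
      ∀ n, u n < v n ∧ P (u n) (v n) ∧ v n - u n = (b - a) * (1 / 2) ^ n := by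
  have hhalf (I : {I : ℝ × ℝ // I.1 < I.2 ∧ P I.1 I.2}) :
      ∃ J : {I : ℝ × ℝ // I.1 < I.2 ∧ P I.1 I.2},
        I.1.1 ≤ J.1.1 ∧ J.1.2 ≤ I.1.2 ∧ J.1.2 - J.1.1 = (I.1.2 - I.1.1) / 2 := by
    obtain ⟨⟨x, y⟩, hxy, hPxy⟩ := I
    dsimp only at hxy hPxy ⊢
    rcases hP x y hxy hPxy with hleft | hright
    · exact ⟨⟨(x, (x + y) / 2), by linarith, hleft⟩, le_rfl, by linarith, by ring⟩
    · exact ⟨⟨((x + y) / 2, y), by linarith, hright⟩, by linarith, le_rfl, by ring⟩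
  choose half hhalf_left hhalf_right hhalf_length using hhalf
  set I : ℕ → {I : ℝ × ℝ // I.1 < I.2 ∧ P I.1 I.2} := fun n => half^[n] ⟨(a, b), hab, h⟩
  have hI (n : ℕ) : I (n + 1) = half (I n) := Function.iterate_succ_apply' half n _
  refine ⟨fun n => (I n).1.1, fun n => (I n).1.2, rfl, rfl,
    monotone_nat_of_le_succ fun n => by rw [hI]; exact hhalf_left _,
    antitone_nat_of_succ_le fun n => by rw [hI]; exact hhalf_right _,
    fun n => ⟨(I n).2.1, (I n).2.2, ?_⟩⟩
  induction n with
  | zero => simp [I]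
  | succ n ih =>
    dsimp only at ih ⊢
    rw [hI, hhalf_length, ih]
    ring

lemma exists_seq_nested_intervals {P : ℝ → ℝ → Prop}
    (hP : ∀ x y, x < y → P x y → P x ((x + y) / 2) ∨ P ((x + y) / 2) y) {a b : ℝ} (hab : a < b)
    (h : P a b) :
    ∃ (u v : ℕ → ℝ) (T : ℝ), Monotone u ∧
      (∀ n, a ≤ u n ∧ u n < v n ∧ v n ≤ b ∧ P (u n) (v n)) ∧
      Tendsto u atTop (𝓝 T) ∧ Tendsto v atTop (𝓝 T) := by
  obtain ⟨u, v, hu0, hv0, hu, hv, huv⟩ := exists_seq_halving hP hab h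
  have hau (n : ℕ) : a ≤ u n := hu0 ▸ hu (Nat.zero_le n)
  have hvb (n : ℕ) : v n ≤ b := hv0 ▸ hv (Nat.zero_le n)
  have hulim : Tendsto u atTop (𝓝 (⨆ n, u n)) :=
    tendsto_atTop_ciSup hu ⟨b, forall_mem_range.2 fun n => (huv n).1.le.trans (hvb n)⟩
  have hlength : Tendsto (fun n => (b - a) * (1 / 2 : ℝ) ^ n) atTop (𝓝 0) := by
    simpa using (tendsto_pow_atTop_nhds_zero_of_lt_one (r := (1 / 2 : ℝ)) (by norm_num)
      (by norm_num)).const_mul (b - a)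
  have hvlim := hulim.add hlength
  rw [add_zero] at hvlim
  refine ⟨u, v, _, hu, fun n => ⟨hau n, (huv n).1, hvb n, (huv n).2.1⟩, hulim,
    hvlim.congr fun n => ?_⟩
  rw [← (huv n).2.2, add_sub_cancel]

lemma sub_le_mul_of_log_slope_le {a M N x y σ : ℝ} (ha : 0 < a) (hM : 0 < M) (hN : 0 < N)
    (hx : 0 < x) (hy : 0 < y)
    (hσ : σ * (y - x) ≤ (log N + 1 / a * log y) - (log M + 1 / a * log x)) :
    M - N ≤ M * (1 / (a * x) - σ) * (y - x) := by
  have hlogN : log N - log M ≤ N / M - 1 := by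
    rw [← log_div hN.ne' hM.ne']
    exact log_le_sub_one_of_pos (div_pos hN hM)
  have hlogy : 1 / a * (log y - log x) ≤ 1 / a * (y / x - 1) := by
    rw [← log_div hy.ne' hx.ne']
    exact mul_le_mul_of_nonneg_left (log_le_sub_one_of_pos (div_pos hy hx))
      (one_div_pos.2 ha).le
  have hmul : M * (σ * (y - x)) ≤ M * (N / M - 1 + 1 / a * (y / x - 1)) :=
    mul_le_mul_of_nonneg_left (by linarith) hM.le
  have hexpand : M * (N / M - 1 + 1 / a * (y / x - 1)) = N - M + M * (1 / (a * x)) * (y - x) := by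
    field_simp
  linarith

namespace IsIsoperimetricDistribution

variable {a c : ℝ} {m : ℝ → ℝ}

/- At a point where the slope of `log ((m + c) * t ^ (1 / a))` is at least `σ`, the differential
inequality reads `A ^ 2 + c * A ≤ a * A * T * (A + c) * (1 / (a * T) - σ)`. -/
lemma slope_nonpos_of_tendsto (hm : IsIsoperimetricDistribution a c m) (ha : 0 < a) (hc : 0 < c)
    {u v : ℕ → ℝ} {σ A T : ℝ} (hu0 : ∀ n, 0 < u n) (huv : ∀ n, u n < v n)
    (hslope : ∀ n, m (u n) - m (v n) ≤ (m (u n) + c) * (1 / (a * u n) - σ) * (v n - u n))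
    (hA : 0 < A) (hT : 0 < T) (hu : Tendsto u atTop (𝓝 T)) (hv : Tendsto v atTop (𝓝 T))
    (hmu : Tendsto (fun n => m (u n)) atTop (𝓝 A)) (hmv : Tendsto (fun n => m (v n)) atTop (𝓝 A)) :
    σ ≤ 0 := by
  have hbound (n : ℕ) : √(m (v n) ^ 2 + c * m (v n)) ≤
      √(v n * ((m (u n) + c) * (1 / (a * u n) - σ)) * (a * m (u n))) + (m (u n) - m (v n)) := by
    refine (hm.sqrt_le _ _ (hu0 n) (huv n)).trans (add_le_add_left (sqrt_le_sqrt ?_) _)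
    refine mul_le_mul_of_nonneg_right ?_ (mul_nonneg ha.le (hm.nonneg _))
    have hlength : 0 < v n - u n := sub_pos.2 (huv n)
    have hdiv := (div_le_iff₀ hlength).2 (hslope n)
    calc 1 / (v n - u n) * v n * (m (u n) - m (v n))
        = v n * ((m (u n) - m (v n)) / (v n - u n)) := by ring
      _ ≤ _ := mul_le_mul_of_nonneg_left hdiv ((hu0 n).trans (huv n)).le
  have hlim : √(A ^ 2 + c * A) ≤ √(T * ((A + c) * (1 / (a * T) - σ)) * (a * A)) + (A - A) := by
    refine le_of_tendsto_of_tendsto' ((hmv.pow 2).add (hmv.const_mul c)).sqrt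
      (((hv.mul ((hmu.add_const c).mul (Tendsto.sub_const ?_ σ))).mul
        (hmu.const_mul a)).sqrt.add (hmu.sub hmv)) hbound
    exact tendsto_const_nhds.div (hu.const_mul a) (mul_pos ha hT).ne'
  by_contra! hσ
  have hdeficit : T * ((A + c) * (1 / (a * T) - σ)) * (a * A) =
      A ^ 2 + c * A - a * A * T * (A + c) * σ := by
    field_simp
  rw [sub_self, add_zero, hdeficit] at hlim
  have hpos : 0 < a * A * T * (A + c) * σ := by positivity
  exact hlim.not_gt (sqrt_lt_sqrt_iff_of_pos (by positivity) |>.2 (by linarith))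

lemma log_slope_nonpos (hm : IsIsoperimetricDistribution a c m) (ha : 0 < a) (hc : 0 < c)
    {s t σ : ℝ} (hs : 0 < s) (hst : s < t) (hmt : 0 < m t)
    (hσ : σ * (t - s) ≤
      (log (m t + c) + 1 / a * log t) - (log (m s + c) + 1 / a * log s)) : σ ≤ 0 := by
  obtain ⟨u, v, T, hu, huv, hulim, hvlim⟩ := exists_seq_nested_intervals
    (P := fun x y => σ * (y - x) ≤
      (log (m y + c) + 1 / a * log y) - (log (m x + c) + 1 / a * log x))
    (fun x y _ h => by
      by_contra! hcon
      linarith [hcon.1, hcon.2, h]) hst hσ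
  have hu0 (n : ℕ) : 0 < u n := hs.trans_le (huv n).1
  have hv0 (n : ℕ) : 0 < v n := (hu0 n).trans (huv n).2.1
  have hmc (x : ℝ) : 0 < m x + c := by linarith [hm.nonneg x]
  have hslope (n : ℕ) :
      m (u n) - m (v n) ≤ (m (u n) + c) * (1 / (a * u n) - σ) * (v n - u n) := by
    have := sub_le_mul_of_log_slope_le ha (hmc _) (hmc _) (hu0 n) (hv0 n) (huv n).2.2.2
    linarith
  have hT : 0 < T := hs.trans_le (ge_of_tendsto' hulim fun n => (huv n).1)
  have hmvu (n : ℕ) : m (v n) ≤ m (u n) := hm.antitoneOn (hu0 n) (hv0 n) (huv n).2.1.le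
  have hmtv (n : ℕ) : m t ≤ m (v n) := hm.antitoneOn (hv0 n) (hs.trans hst) (huv n).2.2.1
  have hmu : Tendsto (fun n => m (u n)) atTop (𝓝 (⨅ n, m (u n))) :=
    tendsto_atTop_ciInf (fun i j hij => hm.antitoneOn (hu0 i) (hu0 j) (hu hij))
      ⟨m t, forall_mem_range.2 fun n => (hmtv n).trans (hmvu n)⟩
  have hjump : Tendsto (fun n => m (u n) - m (v n)) atTop (𝓝 0) := by
    refine squeeze_zero (fun n => sub_nonneg.2 (hmvu n)) hslope ?_
    have hinv : Tendsto (fun n => 1 / (a * u n)) atTop (𝓝 (1 / (a * T))) :=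
      tendsto_const_nhds.div (hulim.const_mul a) (mul_pos ha hT).ne'
    simpa using ((hmu.add_const c).mul (hinv.sub_const σ)).mul (hvlim.sub hulim)
  have hmv : Tendsto (fun n => m (v n)) atTop (𝓝 (⨅ n, m (u n))) := by
    simpa using hmu.sub hjump
  exact hm.slope_nonpos_of_tendsto ha hc hu0 (fun n => (huv n).2.1) hslope
    (hmt.trans_le (ge_of_tendsto' hmv hmtv)) hT hulim hvlim hmu hmv

theorem add_mul_rpow_le (hm : IsIsoperimetricDistribution a c m) (ha : 0 < a) (hc : 0 < c)
    {s t : ℝ} (hs : 0 < s) (hst : s < t) (hmt : 0 < m t) :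
    (m t + c) * t ^ (1 / a) ≤ (m s + c) * s ^ (1 / a) := by
  have ht : 0 < t := hs.trans hst
  have hmc (x : ℝ) : 0 < m x + c := by linarith [hm.nonneg x]
  have hlog {x : ℝ} (hx : 0 < x) :
      log ((m x + c) * x ^ (1 / a)) = log (m x + c) + 1 / a * log x := by
    rw [log_mul (hmc x).ne' (rpow_pos_of_pos hx _).ne', log_rpow hx]
  have hslope := hm.log_slope_nonpos ha hc hs hst hmt (div_mul_cancel₀ _ (sub_pos.2 hst).ne').le
  rw [← hlog ht, ← hlog hs] at hslope
  refine (log_le_log_iff (mul_pos (hmc t) (rpow_pos_of_pos ht _))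
    (mul_pos (hmc s) (rpow_pos_of_pos hs _))).1 (sub_nonpos.1 ?_)
  exact ((div_le_iff₀ (sub_pos.2 hst)).1 hslope).trans_eq (zero_mul _)

end IsIsoperimetricDistribution

/-! ### Comparison of moments -/

/-- The extremal distribution function with maximum `T`: among the distribution functions bounded by
`add_mul_rpow_le`, the one for which `(m t + c) * t ^ (1 / a)` is constant on `(0, T)`. -/
noncomputable def modelDistribution (a c T t : ℝ) : ℝ :=
  max (c * ((T / t) ^ (1 / a) - 1)) 0

section modelDistribution

variable {a c T r : ℝ}

lemma rpow_mul_modelDistribution (ha : 0 < a) (hc : 0 ≤ c) (hT : 0 ≤ T) {t : ℝ} (ht : 0 < t) :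
    t ^ (r - 1) * modelDistribution a c T t =
      (Ioc 0 T).indicator (fun t => c * (T ^ (1 / a) * t ^ (r - 1 / a - 1) - t ^ (r - 1))) t := by
  have ha' : 0 ≤ 1 / a := (one_div_pos.2 ha).le
  by_cases htT : t ≤ T
  · have hratio : 1 ≤ (T / t) ^ (1 / a) := one_le_rpow ((one_le_div ht).2 htT) ha'
    rw [modelDistribution, max_eq_left (mul_nonneg hc (sub_nonneg.2 hratio)),
      indicator_of_mem (mem_Ioc.2 ⟨ht, htT⟩), div_rpow hT ht.le, sub_right_comm,
      rpow_sub ht (r - 1)]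
    field_simp
  · have hratio : (T / t) ^ (1 / a) ≤ 1 :=
      rpow_le_one (div_nonneg hT ht.le) ((div_le_one ht).2 (not_le.1 htT).le) ha'
    rw [modelDistribution, max_eq_right (mul_nonpos_of_nonneg_of_nonpos hc (sub_nonpos.2 hratio)),
      indicator_of_notMem fun h => htT h.2, mul_zero]

lemma intervalIntegrable_rpow_mul_sub (ha : 0 < a) (hr : 1 < r * a) :
    IntervalIntegrable (fun t => T ^ (1 / a) * t ^ (r - 1 / a - 1)) volume 0 T ∧
      IntervalIntegrable (fun t : ℝ => t ^ (r - 1)) volume 0 T := by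
  have har : 1 / a < r := (div_lt_iff₀ ha).2 hr
  have ha' : 0 < 1 / a := one_div_pos.2 ha
  exact ⟨(intervalIntegral.intervalIntegrable_rpow' (by linarith)).const_mul _,
    intervalIntegral.intervalIntegrable_rpow' (by linarith)⟩

lemma integrableOn_rpow_mul_modelDistribution (ha : 0 < a) (hc : 0 ≤ c) (hT : 0 ≤ T)
    (hr : 1 < r * a) :
    IntegrableOn (fun t => t ^ (r - 1) * modelDistribution a c T t) (Ioi 0) := by
  obtain ⟨hleft, hright⟩ := intervalIntegrable_rpow_mul_sub (T := T) ha hr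
  refine (integrableOn_congr_fun (fun t ht => rpow_mul_modelDistribution ha hc hT ht)
    measurableSet_Ioi).2 (IntegrableOn.integrable_indicator ?_ measurableSet_Ioc).integrableOn
  exact (intervalIntegrable_iff_integrableOn_Ioc_of_le hT).1 ((hleft.sub hright).const_mul c)

lemma integral_rpow_mul_modelDistribution (ha : 0 < a) (hc : 0 ≤ c) (hT : 0 < T)
    (hr : 1 < r * a) :
    ∫ t in Ioi 0, t ^ (r - 1) * modelDistribution a c T t = c * T ^ r / (r * (r * a - 1)) := by
  obtain ⟨hleft, hright⟩ := intervalIntegrable_rpow_mul_sub (T := T) ha hr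
  have har : 0 < r - 1 / a := sub_pos.2 ((div_lt_iff₀ ha).2 hr)
  have hr0 : 0 < r := pos_of_mul_pos_left (one_pos.trans hr) ha.le
  rw [setIntegral_congr_fun measurableSet_Ioi
      (fun t ht => rpow_mul_modelDistribution ha hc hT.le ht),
    setIntegral_indicator measurableSet_Ioc, inter_eq_right.2 Ioc_subset_Ioi_self,
    ← intervalIntegral.integral_of_le hT.le, intervalIntegral.integral_const_mul,
    intervalIntegral.integral_sub hleft hright, intervalIntegral.integral_const_mul,
    integral_rpow (Or.inl (by linarith)), integral_rpow (Or.inl (by linarith)), sub_add_cancel,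
    sub_add_cancel, zero_rpow har.ne', zero_rpow hr0.ne', rpow_sub hT]
  have hTa : T ^ (1 / a) ≠ 0 := (rpow_pos_of_pos hT _).ne'
  have hra : a * r - 1 ≠ 0 := (sub_pos.2 (mul_comm r a ▸ hr)).ne'
  have hdiv : r - 1 / a = (a * r - 1) / a := by field_simp
  rw [hdiv, mul_comm r a]
  field_simp
  ring

lemma modelDistribution_lt_iff (hT : 0 ≤ T) {t x : ℝ} (ht : 0 < t) :
    modelDistribution a c T t < x ↔ c * T ^ (1 / a) < (x + c) * t ^ (1 / a) ∧ 0 < x := by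
  rw [modelDistribution, max_lt_iff, div_rpow hT ht.le,
    ← div_lt_iff₀ (rpow_pos_of_pos ht (1 / a)), ← mul_div_assoc', mul_sub_one, sub_lt_iff_lt_add]

end modelDistribution

/- With `κ = σ ^ r`, where `σ` is the point at which `D` changes sign, both factors of
`(t ^ r - κ) * D t` change sign at `σ`. -/
lemma exists_rpow_mul_le_mul {D : ℝ → ℝ} {r : ℝ} (hr : 0 ≤ r)
    (hD : ∀ s t, 0 < s → s < t → 0 < D t → 0 < D s) (hbdd : BddAbove {t | 0 < t ∧ 0 < D t}) :
    ∃ κ : ℝ, ∀ t, 0 < t → t ^ r * D t ≤ κ * D t := by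
  set A : Set ℝ := {t | 0 < t ∧ 0 < D t}
  have hA : 0 ≤ sSup A := sSup_nonneg fun t ht => ht.1.le
  refine ⟨sSup A ^ r, fun t ht => ?_⟩
  rcases le_or_gt (D t) 0 with hDt | hDt
  · have hle : sSup A ≤ t := Real.sSup_le
      (fun s hs => not_lt.1 fun hts => (hD t s ht hts hs.2).not_ge hDt) ht.le
    exact mul_le_mul_of_nonpos_right (rpow_le_rpow hA hle hr) hDt
  · exact mul_le_mul_of_nonneg_right (rpow_le_rpow ht.le (le_csSup hbdd ⟨ht, hDt⟩) hr) hDt.le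

namespace IsIsoperimetricDistribution

variable {a c T : ℝ} {m : ℝ → ℝ}

lemma modelDistribution_lt_of_lt (hm : IsIsoperimetricDistribution a c m) (ha : 0 < a)
    (hc : 0 < c) (hT : 0 ≤ T) {s t : ℝ} (hs : 0 < s) (hst : s < t)
    (ht : modelDistribution a c T t < m t) : modelDistribution a c T s < m s := by
  rw [modelDistribution_lt_iff hT (hs.trans hst)] at ht
  rw [modelDistribution_lt_iff hT hs]
  exact ⟨ht.1.trans_le (hm.add_mul_rpow_le ha hc hs hst ht.2),
    ht.2.trans_le (hm.antitoneOn hs (hs.trans hst) hst.le)⟩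

lemma bddAbove_pos (hm : IsIsoperimetricDistribution a c m) (ha : 0 < a) (hc : 0 < c) :
    BddAbove {t | 0 < t ∧ 0 < m t} := by
  refine ⟨max 1 (((m 1 + c) / c) ^ a), fun t ht => le_max_iff.2 ?_⟩
  refine or_iff_not_imp_left.2 fun h1t => ?_
  have hgrowth : (m t + c) * t ^ (1 / a) ≤ m 1 + c := by
    simpa only [one_rpow, mul_one] using hm.add_mul_rpow_le ha hc one_pos (not_le.1 h1t) ht.2
  have hroot : t ^ (1 / a) ≤ (m 1 + c) / c := by
    rw [le_div_iff₀' hc]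
    refine le_trans ?_ hgrowth
    exact mul_le_mul_of_nonneg_right (le_add_of_nonneg_left ht.2.le) (rpow_nonneg ht.1.le _)
  calc t = (t ^ (1 / a)) ^ a := by rw [← rpow_mul ht.1.le, one_div_mul_cancel ha.ne', rpow_one]
    _ ≤ ((m 1 + c) / c) ^ a := rpow_le_rpow (rpow_nonneg ht.1.le _) hroot ha.le

lemma exists_rpow_mul_sub_modelDistribution_le (hm : IsIsoperimetricDistribution a c m)
    (ha : 0 < a) (hc : 0 < c) (hT : 0 ≤ T) {r : ℝ} (hr : 0 ≤ r) :
    ∃ κ : ℝ, ∀ t, 0 < t →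
      t ^ r * (m t - modelDistribution a c T t) ≤ κ * (m t - modelDistribution a c T t) := by
  refine exists_rpow_mul_le_mul (D := fun t => m t - modelDistribution a c T t) hr ?_ ?_
  · intro s t hs hst ht
    exact sub_pos.2 (hm.modelDistribution_lt_of_lt ha hc hT hs hst (sub_pos.1 ht))
  · refine BddAbove.mono ?_ (hm.bddAbove_pos ha hc)
    exact fun t ht => ⟨ht.1, (le_max_right _ _).trans_lt (sub_pos.1 ht.2)⟩

theorem lintegral_rpow_mul_le (hm : IsIsoperimetricDistribution a c m) (ha : 0 < a) (hc : 0 < c)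
    (hT : 0 < T) {p q : ℝ} (hp : 1 < p * a) (hpq : p ≤ q)
    (hint : IntegrableOn (fun t => t ^ (p - 1) * m t) (Ioi 0))
    (hmoment : ∫ t in Ioi 0, t ^ (p - 1) * m t = c * T ^ p / (p * (p * a - 1))) :
    ∫⁻ t in Ioi 0, ENNReal.ofReal (t ^ (q - 1) * m t) ≤
      ENNReal.ofReal (c * T ^ q / (q * (q * a - 1))) := by
  have hq : 1 < q * a := hp.trans_le (mul_le_mul_of_nonneg_right hpq ha.le)
  obtain ⟨κ, hκ⟩ := hm.exists_rpow_mul_sub_modelDistribution_le ha hc hT.le (sub_nonneg.2 hpq)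
  have hintp := integrableOn_rpow_mul_modelDistribution ha hc.le hT.le hp
  have hintq := integrableOn_rpow_mul_modelDistribution ha hc.le hT.le hq
  set m₀ : ℝ → ℝ := modelDistribution a c T
  set majorant : ℝ → ℝ := fun t =>
    t ^ (q - 1) * m₀ t + κ * (t ^ (p - 1) * m t - t ^ (p - 1) * m₀ t)
  have hle {t : ℝ} (ht : 0 < t) : t ^ (q - 1) * m t ≤ majorant t := by
    have hmul := mul_le_mul_of_nonneg_left (hκ t ht) (rpow_nonneg ht.le (p - 1))
    have hsplit : t ^ (q - 1) = t ^ (p - 1) * t ^ (q - p) := by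
      rw [← rpow_add ht]
      ring_nf
    simp only [majorant, hsplit]
    linarith
  have hdiff : IntegrableOn (fun t => κ * (t ^ (p - 1) * m t - t ^ (p - 1) * m₀ t)) (Ioi 0) :=
    (hint.sub hintp).const_mul κ
  have hmajorant : IntegrableOn majorant (Ioi 0) := hintq.add hdiff
  have hintegral : ∫ t in Ioi 0, majorant t = c * T ^ q / (q * (q * a - 1)) := by
    rw [integral_add hintq hdiff, integral_const_mul, integral_sub hint hintp, hmoment,
      integral_rpow_mul_modelDistribution ha hc.le hT hp,
      integral_rpow_mul_modelDistribution ha hc.le hT hq, sub_self, mul_zero, add_zero]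
  rw [← hintegral, ofReal_integral_eq_lintegral_ofReal hmajorant]
  · exact setLIntegral_mono' measurableSet_Ioi fun t ht => ENNReal.ofReal_le_ofReal (hle ht)
  · refine (ae_restrict_iff' measurableSet_Ioi).2 (Eventually.of_forall fun t ht => ?_)
    exact (mul_nonneg (rpow_nonneg (le_of_lt ht) _) (hm.nonneg t)).trans (hle ht)

end IsIsoperimetricDistribution

namespace IsWeightedVanishing

variable {G : ℂ → ℂ} {a : ℝ}

lemma measurable_weightedNorm (hG : IsWeightedVanishing G a) : Measurable (weightedNorm G a) := by
  refine measurable_of_Ioi fun t => ?_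
  rcases le_or_gt 0 t with ht | ht
  · exact hG.measurableSet_lt ht
  · rw [preimage_eq_univ_iff.2]
    · exact MeasurableSet.univ
    · rintro _ ⟨z, rfl⟩
      exact ht.trans_le (weightedNorm_nonneg G a z)

lemma lintegral_weightedNorm_rpow (hG : IsWeightedVanishing G a) {r : ℝ} (hr : 0 < r) :
    ∫⁻ z, ENNReal.ofReal (weightedNorm G a z ^ r) ∂hyperbolicArea =
      ENNReal.ofReal r * ∫⁻ t in Ioi 0, ENNReal.ofReal (t ^ (r - 1) * levelArea G a t) := by
  rw [lintegral_rpow_eq_lintegral_meas_lt_mul _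
    (Eventually.of_forall (weightedNorm_nonneg G a)) hG.measurable_weightedNorm.aemeasurable hr]
  congr 1
  refine setLIntegral_congr_fun measurableSet_Ioi fun t ht => ?_
  rw [ENNReal.ofReal_mul (rpow_nonneg (le_of_lt ht) _), levelArea, Measure.real,
    ENNReal.ofReal_toReal (hG.hyperbolicArea_lt_top ht).ne, mul_comm]

lemma integrableOn_rpow_mul_levelArea (hG : IsWeightedVanishing G a) {r : ℝ} (hr : 0 < r)
    (hfin : ∫⁻ z, ENNReal.ofReal (weightedNorm G a z ^ r) ∂hyperbolicArea ≠ ⊤) :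
    IntegrableOn (fun t => t ^ (r - 1) * levelArea G a t) (Ioi 0) := by
  have hmeas : AEMeasurable (levelArea G a) (volume.restrict (Ioi 0)) :=
    aemeasurable_restrict_of_antitoneOn measurableSet_Ioi
      fun s hs t _ hst => hG.levelArea_anti hs hst
  refine ⟨(((measurable_id.pow_const (r - 1)).aemeasurable.mul hmeas)).aestronglyMeasurable, ?_⟩
  rw [hasFiniteIntegral_iff_ofReal]
  · rw [hG.lintegral_weightedNorm_rpow hr] at hfin
    exact (ENNReal.lt_top_of_mul_ne_top_right hfin (ENNReal.ofReal_pos.2 hr).ne')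
  · refine (ae_restrict_iff' measurableSet_Ioi).2 (Eventually.of_forall fun t ht => ?_)
    exact mul_nonneg (rpow_nonneg (le_of_lt ht) _) (levelArea_nonneg G a t)

lemma lintegral_weightedNorm_rpow_le_of_pos (hG : IsWeightedVanishing G a) {p q T : ℝ} (hp : 0 < p)
    (hpa : 1 < p * a) (hpq : p ≤ q) (hT : 0 < T)
    (hnorm : ∫⁻ z, ENNReal.ofReal (weightedNorm G a z ^ p) ∂hyperbolicArea =
      ENNReal.ofReal (4 * π * T ^ p / (p * a - 1))) :
    ∫⁻ z, ENNReal.ofReal (weightedNorm G a z ^ q) ∂hyperbolicArea ≤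
      ENNReal.ofReal (4 * π * T ^ q / (q * a - 1)) := by
  have ha : 0 < a := pos_of_mul_pos_right (one_pos.trans hpa) hp.le
  have hq : 0 < q := hp.trans_le hpq
  have hint := hG.integrableOn_rpow_mul_levelArea hp (hnorm ▸ ENNReal.ofReal_ne_top)
  have hmoment : ∫ t in Ioi 0, t ^ (p - 1) * levelArea G a t =
      4 * π * T ^ p / (p * (p * a - 1)) := by
    have hnonneg : 0 ≤ᵐ[volume.restrict (Ioi 0)] fun t => t ^ (p - 1) * levelArea G a t :=
      (ae_restrict_iff' measurableSet_Ioi).2 <| Eventually.of_forall fun t ht =>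
        mul_nonneg (rpow_nonneg (le_of_lt ht) _) (levelArea_nonneg G a t)
    have hpa' : 0 < p * a - 1 := sub_pos.2 hpa
    rw [hG.lintegral_weightedNorm_rpow hp, ← ofReal_integral_eq_lintegral_ofReal hint hnonneg,
      ← ENNReal.ofReal_mul hp.le, ENNReal.ofReal_eq_ofReal_iff
        (mul_nonneg hp.le (integral_nonneg_of_ae hnonneg)) (by positivity)] at hnorm
    rw [mul_comm p (p * a - 1), ← div_div, eq_div_iff hp.ne', mul_comm, hnorm]
  rw [hG.lintegral_weightedNorm_rpow hq]
  calc ENNReal.ofReal q * ∫⁻ t in Ioi 0, ENNReal.ofReal (t ^ (q - 1) * levelArea G a t)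
      ≤ ENNReal.ofReal q * ENNReal.ofReal (4 * π * T ^ q / (q * (q * a - 1))) :=
        mul_le_mul_right ((hG.isIsoperimetricDistribution ha.le).lintegral_rpow_mul_le ha
          (by positivity) hT hpa hpq hint hmoment) _
    _ = ENNReal.ofReal (4 * π * T ^ q / (q * a - 1)) := by
        rw [← ENNReal.ofReal_mul hq.le, mul_div_assoc', mul_div_mul_left _ _ hq.ne']

theorem lintegral_weightedNorm_rpow_le (hG : IsWeightedVanishing G a) {p q T : ℝ} (hp : 0 < p)
    (hpa : 1 < p * a) (hpq : p ≤ q) (hT : 0 ≤ T)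
    (hnorm : ∫⁻ z, ENNReal.ofReal (weightedNorm G a z ^ p) ∂hyperbolicArea =
      ENNReal.ofReal (4 * π * T ^ p / (p * a - 1))) :
    ∫⁻ z, ENNReal.ofReal (weightedNorm G a z ^ q) ∂hyperbolicArea ≤
      ENNReal.ofReal (4 * π * T ^ q / (q * a - 1)) := by
  rcases hT.eq_or_lt with rfl | hT
  · have hmeas : Measurable fun z => ENNReal.ofReal (weightedNorm G a z ^ p) :=
      (hG.measurable_weightedNorm.pow_const p).ennreal_ofReal
    rw [zero_rpow hp.ne', mul_zero, zero_div, ENNReal.ofReal_zero,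
      lintegral_eq_zero_iff hmeas] at hnorm
    have hzero : ∀ᵐ z ∂hyperbolicArea, ENNReal.ofReal (weightedNorm G a z ^ q) = 0 := by
      filter_upwards [hnorm] with z hz
      have hV := (rpow_eq_zero_iff_of_nonneg (weightedNorm_nonneg G a z)).1
        ((ENNReal.ofReal_eq_zero.1 hz).antisymm (rpow_nonneg (weightedNorm_nonneg G a z) p))
      rw [hV.1, zero_rpow (hp.trans_le hpq).ne', ENNReal.ofReal_zero]
    rw [lintegral_congr_ae hzero, lintegral_zero]
    exact zero_le
  · exact hG.lintegral_weightedNorm_rpow_le_of_pos hp hpa hpq hT hnorm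

end IsWeightedVanishing

/-! ### Decay of Bergman functions at the boundary -/

section meanValue

variable {f : ℂ → ℂ} {c : ℂ} {R p : ℝ}

lemma log_norm_le_circleAverage (hR : 0 < R) (hf : AnalyticOnNhd ℂ f (closedBall c R))
    (hfc : f c ≠ 0) : log ‖f c‖ ≤ circleAverage (fun z => log ‖f z‖) c R := by
  rw [← abs_of_pos hR] at hf
  rw [hf.circleAverage_log_norm hR.ne' hfc]
  refine le_add_of_nonneg_left (finsum_nonneg fun u => ?_)
  by_cases hu : u ∈ closedBall c |R|
  · refine mul_nonneg (mod_cast MeromorphicOn.AnalyticOnNhd.divisor_nonneg hf u) ?_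
    rcases (norm_nonneg (c - u)).eq_or_lt with hcu | hcu
    · rw [← hcu, inv_zero, mul_zero, log_zero]
    · refine log_nonneg ?_
      rw [mem_closedBall, dist_comm, dist_eq_norm, abs_of_pos hR] at hu
      rwa [← div_eq_mul_inv, one_le_div hcu]
  · rw [Function.locallyFinsuppWithin.apply_eq_zero_of_notMem _ hu, Int.cast_zero, zero_mul]

/- The zeros of `f`, where `log 0 = 0` is a junk value, are isolated. -/
lemma circleAverage_log_norm_le_of_le (hR : 0 < R) (hf : AnalyticOnNhd ℂ f (closedBall c R))
    (hfc : f c ≠ 0) {ψ : ℂ → ℝ} (hψ : CircleIntegrable ψ c R)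
    (hle : ∀ z, f z ≠ 0 → log ‖f z‖ ≤ ψ z) :
    circleAverage (fun z => log ‖f z‖) c R ≤ circleAverage ψ c R := by
  classical
  set g : ℂ → ℝ := fun z => if f z = 0 then ψ z else log ‖f z‖
  have hgf : (fun z => log ‖f z‖) =ᶠ[codiscreteWithin (sphere c |R|)] g := by
    rw [abs_of_pos hR]
    have hzeros := hf.preimage_zero_mem_codiscreteWithin hfc (mem_closedBall_self hR.le)
      (isConnected_closedBall hR.le)
    filter_upwards [codiscreteWithin_mono sphere_subset_closedBall hzeros] with z hz
    exact (if_neg hz).symm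
  have hint : CircleIntegrable (fun z => log ‖f z‖) c R :=
    MeromorphicOn.circleIntegrable_log_norm <| by
      rw [abs_of_pos hR]
      exact (hf.mono sphere_subset_closedBall).meromorphicOn
  rw [circleAverage_congr_codiscreteWithin hgf hR.ne']
  refine circleAverage_mono (hint.congr_codiscreteWithin hgf) hψ fun z _ => ?_
  by_cases hz : f z = 0
  · exact (if_pos hz).le
  · exact (if_neg hz).trans_le (hle z hz)

lemma log_le_log_add_rpow_sub_div {x y : ℝ} (hp : 0 < p) (hx : 0 < x) (hy : 0 < y) :
    log x ≤ log y + (x ^ p - y ^ p) / (p * y ^ p) := by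
  have hyp : 0 < y ^ p := rpow_pos_of_pos hy p
  have hlog := log_le_sub_one_of_pos (div_pos (rpow_pos_of_pos hx p) hyp)
  rw [log_div (rpow_pos_of_pos hx p).ne' hyp.ne', log_rpow hx, log_rpow hy] at hlog
  have hdiv : (x ^ p - y ^ p) / (p * y ^ p) = (x ^ p / y ^ p - 1) / p := by field_simp
  rw [hdiv, ← sub_le_iff_le_add', le_div_iff₀ hp]
  linarith

/- Jensen's formula makes `log ‖f‖` subharmonic, and `‖f‖ ^ p` is a convex increasing function of
it. -/
lemma norm_rpow_le_circleAverage (hR : 0 < R) (hp : 0 < p)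
    (hf : AnalyticOnNhd ℂ f (closedBall c R)) :
    ‖f c‖ ^ p ≤ circleAverage (fun z => ‖f z‖ ^ p) c R := by
  by_cases hfc : f c = 0
  · rw [hfc, norm_zero, zero_rpow hp.ne']
    exact circleAverage_nonneg_of_nonneg fun z _ => rpow_nonneg (norm_nonneg _) p
  have hnorm : 0 < ‖f c‖ := norm_pos_iff.2 hfc
  have hpow : 0 < ‖f c‖ ^ p := rpow_pos_of_pos hnorm p
  have hcont : ContinuousOn (fun z => ‖f z‖ ^ p) (sphere c R) :=
    (hf.continuousOn.mono sphere_subset_closedBall).norm.rpow_const fun _ _ => Or.inr hp.le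
  have hint : CircleIntegrable (fun z => ‖f z‖ ^ p) c R := hcont.circleIntegrable hR.le
  set L := log ‖f c‖ - 1 / p
  set κ := 1 / (p * ‖f c‖ ^ p)
  have hψ : CircleIntegrable (κ • fun z => ‖f z‖ ^ p) c R := hint.const_smul
  have hle := (log_norm_le_circleAverage hR hf hfc).trans <|
    circleAverage_log_norm_le_of_le hR hf hfc ((circleIntegrable_const L c R).add hψ) fun z hz => by
      refine (log_le_log_add_rpow_sub_div hp (norm_pos_iff.2 hz) hnorm).trans_eq ?_
      simp only [L, κ, Pi.add_apply, Pi.smul_apply, smul_eq_mul]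
      field_simp
      ring
  rw [circleAverage_add (circleIntegrable_const L c R) hψ, circleAverage_const,
    circleAverage_smul, smul_eq_mul] at hle
  have hmean : 1 / p ≤ κ * circleAverage (fun z => ‖f z‖ ^ p) c R := by linarith
  rw [one_div_mul_eq_div, div_le_div_iff₀ hp (mul_pos hp hpow), one_mul, mul_comm _ p] at hmean
  exact le_of_mul_le_mul_left hmean hp

lemma lintegral_eq_lintegral_circleMap {F : ℂ → ENNReal} (hF : Measurable F) (c : ℂ) :
    ∫⁻ z, F z =
      ∫⁻ r in Ioi 0, ENNReal.ofReal r * ∫⁻ θ in Ioo (-π) π, F (circleMap c r θ) := by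
  have hpolar (x : ℝ × ℝ) : c + Complex.polarCoord.symm x = circleMap c x.1 x.2 := by
    rw [Complex.polarCoord_symm_apply, circleMap, Complex.exp_mul_I,
      Complex.ofReal_cos, Complex.ofReal_sin]
  have hmeas : Measurable fun x : ℝ × ℝ => ENNReal.ofReal x.1 * F (circleMap c x.1 x.2) := by
    refine measurable_fst.ennreal_ofReal.mul (hF.comp (Continuous.measurable ?_))
    unfold circleMap
    fun_prop
  rw [← lintegral_add_left_eq_self _ c, ← Complex.lintegral_comp_polarCoord_symm]
  simp only [smul_eq_mul, hpolar]
  rw [polarCoord_target, Measure.volume_eq_prod, ← Measure.prod_restrict,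
    lintegral_prod _ hmeas.aemeasurable]
  exact lintegral_congr fun r => lintegral_const_mul' _ _ ENNReal.ofReal_ne_top

lemma ofReal_two_pi_mul_circleAverage {u : ℂ → ℝ} (hu : ∀ z, 0 ≤ u z) (hR : 0 ≤ R)
    (hcont : ContinuousOn u (sphere c R)) :
    ENNReal.ofReal (2 * π * circleAverage u c R) =
      ∫⁻ θ in Ioo (-π) π, ENNReal.ofReal (u (circleMap c R θ)) := by
  have hcircle : Continuous fun θ => u (circleMap c R θ) :=
    hcont.comp_continuous (continuous_circleMap c R) (circleMap_mem_sphere c hR)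
  have hint : IntegrableOn (fun θ => u (circleMap c R θ)) (Ioo (-π) π) :=
    hcircle.integrableOn_Icc.mono_set Ioo_subset_Icc_self
  rw [← ofReal_integral_eq_lintegral_ofReal hint (Eventually.of_forall fun θ => hu _),
    circleAverage_eq_integral_add (-π),
    intervalIntegral.integral_comp_add_right (fun θ => u (circleMap c R θ)), zero_add,
    two_mul, add_neg_cancel_right, intervalIntegral.integral_of_le (by linarith [pi_pos]),
    integral_Ioc_eq_integral_Ioo, smul_eq_mul, mul_inv_cancel_left₀ (by positivity)]

lemma ofReal_area_mul_le_lintegral {u : ℂ → ℝ} (hu : ∀ z, 0 ≤ u z) (hR : 0 ≤ R)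
    (hcont : ContinuousOn u (ball c R)) (hmean : ∀ r ∈ Ioo 0 R, u c ≤ circleAverage u c r) :
    ENNReal.ofReal (π * R ^ 2 * u c) ≤ ∫⁻ z in ball c R, ENNReal.ofReal (u z) := by
  classical
  set F : ℂ → ENNReal := (ball c R).indicator fun z => ENNReal.ofReal (u z) with hF
  have hFmeas : Measurable F := by
    rw [hF, ← piecewise_eq_indicator]
    exact (ENNReal.continuous_ofReal.comp_continuousOn hcont).measurable_piecewise
      continuousOn_const measurableSet_ball
  have hcircle {r : ℝ} (hr : r ∈ Ioo 0 R) : ENNReal.ofReal (2 * π * u c) ≤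
      ∫⁻ θ in Ioo (-π) π, F (circleMap c r θ) := by
    have hsphere : sphere c r ⊆ ball c R :=
      sphere_subset_closedBall.trans (closedBall_subset_ball hr.2)
    have hFu (θ : ℝ) : F (circleMap c r θ) = ENNReal.ofReal (u (circleMap c r θ)) :=
      indicator_of_mem (hsphere (circleMap_mem_sphere c hr.1.le θ)) _
    simp only [hFu]
    rw [← ofReal_two_pi_mul_circleAverage hu hr.1.le (hcont.mono hsphere)]
    exact ENNReal.ofReal_le_ofReal (mul_le_mul_of_nonneg_left (hmean r hr) two_pi_pos.le)
  have hint : IntegrableOn (fun r : ℝ => r * (2 * π * u c)) (Ioo 0 R) :=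
    (by fun_prop : Continuous fun r : ℝ => r * (2 * π * u c)).integrableOn_Icc.mono_set
      Ioo_subset_Icc_self
  have hnonneg : ∀ᵐ r ∂volume.restrict (Ioo 0 R), 0 ≤ r * (2 * π * u c) := by
    filter_upwards [ae_restrict_mem measurableSet_Ioo] with r hr
    exact mul_nonneg hr.1.le (mul_nonneg two_pi_pos.le (hu c))
  have harea : π * R ^ 2 * u c = ∫ r in Ioo 0 R, r * (2 * π * u c) := by
    rw [← integral_Ioc_eq_integral_Ioo, ← intervalIntegral.integral_of_le hR,
      intervalIntegral.integral_mul_const, integral_id]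
    ring
  rw [← lintegral_indicator measurableSet_ball, lintegral_eq_lintegral_circleMap hFmeas c, harea,
    ofReal_integral_eq_lintegral_ofReal hint hnonneg]
  refine (setLIntegral_mono' measurableSet_Ioo fun r hr => ?_).trans
    (lintegral_mono_set Ioo_subset_Ioi_self)
  rw [ENNReal.ofReal_mul hr.1.le]
  exact mul_le_mul_right (hcircle hr) _

lemma ofReal_area_mul_norm_rpow_le_lintegral (hR : 0 ≤ R) (hp : 0 < p)
    (hf : DifferentiableOn ℂ f (ball c R)) :
    ENNReal.ofReal (π * R ^ 2 * ‖f c‖ ^ p) ≤ ∫⁻ z in ball c R, ENNReal.ofReal (‖f z‖ ^ p) :=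
  ofReal_area_mul_le_lintegral (u := fun z => ‖f z‖ ^ p) (fun _ => rpow_nonneg (norm_nonneg _) p)
    hR (hf.continuousOn.norm.rpow_const fun _ _ => Or.inr hp.le) fun _ hr =>
      norm_rpow_le_circleAverage hr.1 hp
        ((hf.analyticOnNhd isOpen_ball).mono (closedBall_subset_ball hr.2))

end meanValue

lemma one_sub_norm_sq_pos {z : ℂ} (hz : z ∈ ball (0 : ℂ) 1) : 0 < 1 - ‖z‖ ^ 2 := by
  rw [mem_ball_zero_iff] at hz
  nlinarith [norm_nonneg z]

lemma four_rpow_neg_abs_mul_rpow_le {x y : ℝ} (γ : ℝ) (hx : 0 < x) (hxy : x / 4 ≤ y)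
    (hyx : y ≤ 4 * x) : 4 ^ (-|γ|) * x ^ γ ≤ y ^ γ := by
  rcases le_total 0 γ with hγ | hγ
  · rw [abs_of_nonneg hγ, rpow_neg (by norm_num), ← inv_rpow (by norm_num),
      ← mul_rpow (by norm_num) hx.le]
    exact rpow_le_rpow (by positivity) (by linarith) hγ
  · rw [abs_of_nonpos hγ, neg_neg, ← mul_rpow (by norm_num) hx.le]
    exact rpow_le_rpow_of_nonpos (by linarith) hyx hγ

lemma one_sub_norm_sq_comparable {z w : ℂ} (hz : z ∈ ball (0 : ℂ) 1)
    (hw : w ∈ ball z ((1 - ‖z‖) / 2)) :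
    (1 - ‖z‖ ^ 2) / 4 ≤ 1 - ‖w‖ ^ 2 ∧ 1 - ‖w‖ ^ 2 ≤ 4 * (1 - ‖z‖ ^ 2) := by
  rw [mem_ball_zero_iff] at hz
  rw [mem_ball, dist_eq_norm] at hw
  have hupper := norm_le_norm_add_norm_sub' w z
  have hlower := norm_le_norm_add_norm_sub w z
  have hz0 := norm_nonneg z
  have hw0 := norm_nonneg w
  constructor <;> nlinarith

lemma ball_half_one_sub_norm_subset {z : ℂ} (hz : z ∈ ball (0 : ℂ) 1) :
    ball z ((1 - ‖z‖) / 2) ⊆ ball 0 1 := by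
  rw [mem_ball_zero_iff] at hz
  refine ball_subset_ball' ?_
  rw [dist_zero_right]
  linarith

section decay

variable {f : ℂ → ℂ} {p : ℝ}

lemma ofReal_mul_norm_rpow_le_lintegral (γ : ℝ) (hp : 0 < p)
    (hf : DifferentiableOn ℂ f (ball 0 1)) {z : ℂ} (hz : z ∈ ball (0 : ℂ) 1) :
    ENNReal.ofReal (π / 16 * 4 ^ (-|γ - 2|) * (‖f z‖ ^ p * (1 - ‖z‖ ^ 2) ^ γ)) ≤
      ∫⁻ w in ball z ((1 - ‖z‖) / 2), ENNReal.ofReal (‖f w‖ ^ p * (1 - ‖w‖ ^ 2) ^ (γ - 2)) := by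
  set R := (1 - ‖z‖) / 2 with hR
  set κ := 4 ^ (-|γ - 2|) * (1 - ‖z‖ ^ 2) ^ (γ - 2) with hκ
  have hd : 0 < 1 - ‖z‖ ^ 2 := one_sub_norm_sq_pos hz
  have hκ0 : 0 ≤ κ := by positivity
  have hR0 : 0 ≤ R := by
    rw [mem_ball_zero_iff] at hz
    linarith
  have harea := ofReal_area_mul_norm_rpow_le_lintegral hR0 hp
    (hf.mono (ball_half_one_sub_norm_subset hz))
  have hradius : (1 - ‖z‖ ^ 2) ^ 2 / 16 ≤ R ^ 2 := by
    rw [mem_ball_zero_iff] at hz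
    have hsq : 1 - ‖z‖ ^ 2 ≤ 4 * R := by nlinarith
    nlinarith
  have hweight : (1 - ‖z‖ ^ 2) ^ γ = (1 - ‖z‖ ^ 2) ^ (γ - 2) * (1 - ‖z‖ ^ 2) ^ 2 := by
    rw [← rpow_two (1 - ‖z‖ ^ 2), ← rpow_add hd, sub_add_cancel]
  calc ENNReal.ofReal (π / 16 * 4 ^ (-|γ - 2|) * (‖f z‖ ^ p * (1 - ‖z‖ ^ 2) ^ γ))
      = ENNReal.ofReal (κ * (π * ((1 - ‖z‖ ^ 2) ^ 2 / 16) * ‖f z‖ ^ p)) := by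
        rw [hweight, hκ]
        ring_nf
    _ ≤ ENNReal.ofReal (κ * (π * R ^ 2 * ‖f z‖ ^ p)) := by gcongr
    _ ≤ ∫⁻ w in ball z R, ENNReal.ofReal κ * ENNReal.ofReal (‖f w‖ ^ p) := by
        rw [ENNReal.ofReal_mul hκ0, lintegral_const_mul' _ _ ENNReal.ofReal_ne_top]
        gcongr
    _ ≤ ∫⁻ w in ball z R, ENNReal.ofReal (‖f w‖ ^ p * (1 - ‖w‖ ^ 2) ^ (γ - 2)) := by
        refine setLIntegral_mono' measurableSet_ball fun w hw => ?_
        obtain ⟨hlower, hupper⟩ := one_sub_norm_sq_comparable hz hw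
        rw [← ENNReal.ofReal_mul hκ0, mul_comm]
        gcongr
        exact four_rpow_neg_abs_mul_rpow_le _ hd hlower hupper

lemma exists_forall_volume_ball_lt {δ : ENNReal} (hδ : δ ≠ 0) :
    ∃ ε > 0, ∀ (c : ℂ) (r : ℝ), r < ε → volume (ball c r) < δ := by
  have hzero : Tendsto (fun r : ℝ => ENNReal.ofReal r ^ 2 * NNReal.pi) (𝓝 0) (𝓝 0) := by
    have hcont : Continuous fun r : ℝ => ENNReal.ofReal r ^ 2 * NNReal.pi :=
      ENNReal.continuous_mul_const ENNReal.coe_ne_top |>.comp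
        ((ENNReal.continuous_pow 2).comp ENNReal.continuous_ofReal)
    simpa using hcont.tendsto 0
  obtain ⟨ε, hε, hlt⟩ := Metric.eventually_nhds_iff.1
    (hzero.eventually (gt_mem_nhds (pos_iff_ne_zero.2 hδ)))
  refine ⟨ε / 2, half_pos hε, fun c r hr => ?_⟩
  calc volume (ball c r) ≤ volume (ball c (ε / 2)) := measure_mono (ball_subset_ball hr.le)
    _ < δ := by
      rw [Complex.volume_ball]
      exact hlt (by rw [dist_zero_right, norm_of_nonneg (half_pos hε).le]; exact half_lt_self hε)

lemma exists_norm_le_of_le_norm_rpow_mul {γ : ℝ} (hp : 0 < p)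
    (hf : DifferentiableOn ℂ f (ball 0 1))
    (hfin : ∫⁻ z in ball 0 1, ENNReal.ofReal (‖f z‖ ^ p * (1 - ‖z‖ ^ 2) ^ (γ - 2)) ≠ ⊤)
    {s : ℝ} (hs : 0 < s) :
    ∃ ρ < 1, ∀ z ∈ ball 0 1, s ≤ ‖f z‖ ^ p * (1 - ‖z‖ ^ 2) ^ γ → ‖z‖ ≤ ρ := by
  set κ := π / 16 * 4 ^ (-|γ - 2|)
  have hκ : 0 < κ := by positivity
  obtain ⟨δ, hδ, hsmall⟩ := exists_pos_setLIntegral_lt_of_measure_lt hfin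
    (ε := ENNReal.ofReal (κ * s)) (ENNReal.ofReal_pos.2 (mul_pos hκ hs)).ne'
  obtain ⟨ε, hε, hball⟩ := exists_forall_volume_ball_lt hδ.ne'
  refine ⟨1 - 2 * ε, by linarith, fun z hz hsz => ?_⟩
  by_contra! hfar
  have hlt := hsmall (ball z ((1 - ‖z‖) / 2))
    ((Measure.restrict_apply_le _ _).trans_lt (hball z _ (by linarith)))
  rw [Measure.restrict_restrict_of_subset (ball_half_one_sub_norm_subset hz)] at hlt
  have hle : ENNReal.ofReal (κ * s) ≤ ENNReal.ofReal (κ * (‖f z‖ ^ p * (1 - ‖z‖ ^ 2) ^ γ)) := by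
    gcongr
  exact (hle.trans (ofReal_mul_norm_rpow_le_lintegral γ hp hf hz)).not_gt hlt

end decay

/-! ### Transfer to the upper half-plane -/

/-- The Cayley transform, mapping the upper half-plane conformally onto the unit disc. -/
noncomputable def cayley (z : ℂ) : ℂ := (z - Complex.I) / (z + Complex.I)

/-- The inverse of the Cayley transform, mapping the unit disc onto the upper half-plane. -/
noncomputable def cayleyInv (z : ℂ) : ℂ := Complex.I * (1 + z) / (1 - z)

section cayley

variable {z : ℂ}

lemma add_I_ne_zero (hz : z ∈ upperHalfPlaneSet) : z + Complex.I ≠ 0 := fun h => by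
  have him : z.im + 1 = 0 := by simpa using congrArg Complex.im h
  exact (add_pos hz one_pos).ne' him

lemma one_sub_norm_cayley_sq (hz : z ∈ upperHalfPlaneSet) :
    1 - ‖cayley z‖ ^ 2 = 4 * z.im / ‖z + Complex.I‖ ^ 2 := by
  have hne : ‖z + Complex.I‖ ^ 2 ≠ 0 := pow_ne_zero 2 (norm_ne_zero_iff.2 (add_I_ne_zero hz))
  rw [cayley, norm_div, div_pow, eq_div_iff hne, sub_mul, div_mul_cancel₀ _ hne,
    Complex.sq_norm, Complex.sq_norm, Complex.normSq_apply, Complex.normSq_apply]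
  simp only [Complex.add_re, Complex.add_im, Complex.sub_re, Complex.sub_im, Complex.I_re,
    Complex.I_im]
  ring

lemma cayley_mem_ball (hz : z ∈ upperHalfPlaneSet) : cayley z ∈ ball (0 : ℂ) 1 := by
  have him : 0 < z.im := hz
  have hne : 0 < ‖z + Complex.I‖ := norm_pos_iff.2 (add_I_ne_zero hz)
  have hpos : 0 < 1 - ‖cayley z‖ ^ 2 := by
    rw [one_sub_norm_cayley_sq hz]
    positivity
  rw [mem_ball_zero_iff]
  nlinarith [norm_nonneg (cayley z)]

lemma one_sub_ne_zero_of_mem_ball (hz : z ∈ ball (0 : ℂ) 1) : 1 - z ≠ 0 := fun h => by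
  rw [← sub_eq_zero.1 h, mem_ball_zero_iff, norm_one] at hz
  exact lt_irrefl _ hz

lemma cayleyInv_mem_upperHalfPlaneSet (hz : z ∈ ball (0 : ℂ) 1) :
    cayleyInv z ∈ upperHalfPlaneSet := by
  have hne : 0 < Complex.normSq (1 - z) := Complex.normSq_pos.2 (one_sub_ne_zero_of_mem_ball hz)
  have him : (cayleyInv z).im = (1 - ‖z‖ ^ 2) / Complex.normSq (1 - z) := by
    rw [cayleyInv, Complex.div_im, Complex.sq_norm, Complex.normSq_apply z]
    simp only [Complex.mul_im, Complex.mul_re, Complex.I_re, Complex.I_im, Complex.add_re,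
      Complex.add_im, Complex.sub_re, Complex.sub_im, Complex.one_re, Complex.one_im]
    ring
  exact (div_pos (one_sub_norm_sq_pos hz) hne).trans_eq him.symm

lemma cayley_cayleyInv (hz : z ∈ ball (0 : ℂ) 1) : cayley (cayleyInv z) = z := by
  have hne := one_sub_ne_zero_of_mem_ball hz
  rw [cayley, div_eq_iff (add_I_ne_zero (cayleyInv_mem_upperHalfPlaneSet hz)), cayleyInv]
  field_simp
  ring

lemma cayleyInv_cayley (hz : z ∈ upperHalfPlaneSet) : cayleyInv (cayley z) = z := by
  have hne := add_I_ne_zero hz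
  rw [cayleyInv, div_eq_iff (one_sub_ne_zero_of_mem_ball (cayley_mem_ball hz)), cayley]
  field_simp
  ring

lemma image_cayley_upperHalfPlaneSet : cayley '' upperHalfPlaneSet = ball 0 1 :=
  Subset.antisymm (image_subset_iff.2 fun _ => cayley_mem_ball) fun z hz =>
    ⟨cayleyInv z, cayleyInv_mem_upperHalfPlaneSet hz, cayley_cayleyInv hz⟩

lemma injOn_cayley : InjOn cayley upperHalfPlaneSet :=
  LeftInvOn.injOn (f₁' := cayleyInv) fun _ => cayleyInv_cayley

lemma continuousOn_cayleyInv : ContinuousOn cayleyInv (ball 0 1) :=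
  ContinuousOn.div (by fun_prop) (by fun_prop) fun _ => one_sub_ne_zero_of_mem_ball

lemma hasDerivAt_cayley (hz : z ∈ upperHalfPlaneSet) :
    HasDerivAt cayley (2 * Complex.I / (z + Complex.I) ^ 2) z := by
  have hdiv := ((hasDerivAt_id z).sub_const Complex.I).div
    ((hasDerivAt_id z).add_const Complex.I) (add_I_ne_zero hz)
  refine HasDerivAt.congr_deriv (f := cayley) hdiv ?_
  simp only [id]
  ring

end cayley

lemma det_restrictScalars_toSpanSingleton (c : ℂ) :
    ((ContinuousLinearMap.toSpanSingleton ℂ c).restrictScalars ℝ).det = ‖c‖ ^ 2 := by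
  simp [ContinuousLinearMap.det, LinearMap.det_restrictScalars, Algebra.norm_complex_eq,
    Complex.normSq_eq_norm_sq]

lemma lintegral_ball_eq_lintegral_cayley (k : ℂ → ENNReal) :
    ∫⁻ z in ball 0 1, k z =
      ∫⁻ z in upperHalfPlaneSet,
        ENNReal.ofReal ((1 - ‖cayley z‖ ^ 2) ^ 2 / 4) * k (cayley z) ∂hyperbolicArea := by
  have hH : MeasurableSet upperHalfPlaneSet := isOpen_upperHalfPlaneSet.measurableSet
  rw [← image_cayley_upperHalfPlaneSet, lintegral_image_eq_lintegral_abs_det_fderiv_mul volume hH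
      (fun z hz => ((hasDerivAt_cayley hz).hasFDerivAt.restrictScalars ℝ).hasFDerivWithinAt)
      injOn_cayley, hyperbolicArea, setLIntegral_withDensity_eq_setLIntegral_mul_non_measurable _
      measurable_ofReal_one_div_im_sq _ hH (Eventually.of_forall fun _ => ENNReal.ofReal_lt_top)]
  refine setLIntegral_congr_fun hH fun z hz => ?_
  have him : z.im ≠ 0 := ne_of_gt hz
  have hne : ‖z + Complex.I‖ ≠ 0 := norm_ne_zero_iff.2 (add_I_ne_zero hz)
  rw [Pi.mul_apply, ← mul_assoc, ← ENNReal.ofReal_mul (by positivity),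
    det_restrictScalars_toSpanSingleton, abs_of_nonneg (by positivity), one_sub_norm_cayley_sq hz,
    norm_div, norm_mul, norm_pow, Complex.norm_I, Complex.norm_two]
  congr 2
  field_simp
  norm_num

lemma lintegral_bergmanMeasure (γ : ℝ) (k : ℂ → ENNReal) :
    ∫⁻ z, k z ∂bergmanMeasure γ =
      ∫⁻ z in ball 0 1, ENNReal.ofReal ((γ - 1) / π * (1 - ‖z‖ ^ 2) ^ (γ - 2)) * k z :=
  lintegral_withDensity_eq_lintegral_mul_non_measurable _ (by fun_prop)
    (Eventually.of_forall fun _ => ENNReal.ofReal_lt_top) k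

lemma lintegral_bergmanMeasure_eq_lintegral_cayley (γ : ℝ) (k : ℂ → ENNReal) :
    ∫⁻ z, k z ∂bergmanMeasure γ =
      ∫⁻ z in upperHalfPlaneSet,
        ENNReal.ofReal ((γ - 1) / (4 * π) * (1 - ‖cayley z‖ ^ 2) ^ γ) * k (cayley z)
          ∂hyperbolicArea := by
  rw [lintegral_bergmanMeasure, lintegral_ball_eq_lintegral_cayley]
  refine setLIntegral_congr_fun isOpen_upperHalfPlaneSet.measurableSet fun z hz => ?_
  have hpos := one_sub_norm_sq_pos (cayley_mem_ball hz)
  rw [← mul_assoc, ← ENNReal.ofReal_mul (by positivity), rpow_sub hpos,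
    rpow_two (1 - ‖cayley z‖ ^ 2)]
  congr 2
  field_simp

/-- The transplant to the upper half-plane of a function `f` on the disc, twisted by the
holomorphic factor of modulus `(2 / |z + i|) ^ (2a)`, so that `|f| (1 - |·|²) ^ a` becomes
`|cayleyPullback f a| (im ·) ^ a`. -/
noncomputable def cayleyPullback (f : ℂ → ℂ) (a : ℝ) (z : ℂ) : ℂ :=
  f (cayley z) * ((z + Complex.I) / 2) ^ ((-2 * a : ℝ) : ℂ)

section cayleyPullback

variable {f : ℂ → ℂ} {a p : ℝ}

lemma differentiableOn_cayleyPullback (a : ℝ) (hf : DifferentiableOn ℂ f (ball 0 1)) :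
    DifferentiableOn ℂ (cayleyPullback f a) upperHalfPlaneSet := fun z hz => by
  have hcomp : DifferentiableWithinAt ℂ (fun z => f (cayley z)) upperHalfPlaneSet z :=
    (hf _ (cayley_mem_ball hz)).comp z
      (hasDerivAt_cayley hz).differentiableAt.differentiableWithinAt fun _ => cayley_mem_ball
  have hslit : (z + Complex.I) / 2 ∈ Complex.slitPlane := by
    refine Complex.mem_slitPlane_iff.2 (Or.inr ?_)
    have him : ((z + Complex.I) / 2).im = (z.im + 1) / 2 := by simp
    exact him ▸ (half_pos (add_pos hz one_pos)).ne'
  exact hcomp.mul (DifferentiableWithinAt.cpow (by fun_prop) (by fun_prop) hslit)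

lemma weightedNorm_cayleyPullback (f : ℂ → ℂ) (a : ℝ) {z : ℂ} (hz : z ∈ upperHalfPlaneSet) :
    weightedNorm (cayleyPullback f a) a z = ‖f (cayley z)‖ * (1 - ‖cayley z‖ ^ 2) ^ a := by
  have him : 0 < z.im := hz
  have hne : 0 < ‖z + Complex.I‖ := norm_pos_iff.2 (add_I_ne_zero hz)
  have hfactor : (‖z + Complex.I‖ / 2) ^ (-2 * a) = (4 / ‖z + Complex.I‖ ^ 2) ^ a := by
    rw [rpow_mul (by positivity), rpow_neg (by positivity), rpow_two, ← inv_pow, inv_div, div_pow]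
    norm_num
  rw [weightedNorm, indicator_of_mem hz, cayleyPullback, norm_mul, Complex.norm_cpow_real,
    norm_div, Complex.norm_two, hfactor, mul_assoc, ← mul_rpow (by positivity) him.le,
    one_sub_norm_cayley_sq hz, div_mul_eq_mul_div]

lemma lintegral_norm_rpow_bergmanMeasure (f : ℂ → ℂ) (hp : 0 < p) :
    ∫⁻ z, ENNReal.ofReal (‖f z‖ ^ p) ∂bergmanMeasure (p * a) =
      ENNReal.ofReal ((p * a - 1) / (4 * π)) *
        ∫⁻ z, ENNReal.ofReal (weightedNorm (cayleyPullback f a) a z ^ p) ∂hyperbolicArea := by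
  have hsupport : (fun z => ENNReal.ofReal (weightedNorm (cayleyPullback f a) a z ^ p)).support ⊆
      upperHalfPlaneSet := Function.support_subset_iff'.2 fun z hz => by
    rw [weightedNorm, indicator_of_notMem hz, zero_rpow hp.ne', ENNReal.ofReal_zero]
  rw [lintegral_bergmanMeasure_eq_lintegral_cayley, ← setLIntegral_eq_of_support_subset hsupport,
    ← lintegral_const_mul' _ _ ENNReal.ofReal_ne_top]
  refine setLIntegral_congr_fun isOpen_upperHalfPlaneSet.measurableSet fun z hz => ?_
  have hpos := one_sub_norm_sq_pos (cayley_mem_ball hz)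
  rw [weightedNorm_cayleyPullback f a hz, mul_rpow (norm_nonneg _) (by positivity),
    ← rpow_mul hpos.le, mul_comm a p, ← ENNReal.ofReal_mul' (by positivity),
    ← ENNReal.ofReal_mul' (by positivity)]
  ring_nf

lemma lintegral_ball_ne_top_of_bergmanMeasure {γ : ℝ} (hγ : 1 < γ)
    (hfin : ∫⁻ z, ENNReal.ofReal (‖f z‖ ^ p) ∂bergmanMeasure γ ≠ ⊤) :
    ∫⁻ z in ball 0 1, ENNReal.ofReal (‖f z‖ ^ p * (1 - ‖z‖ ^ 2) ^ (γ - 2)) ≠ ⊤ := by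
  have hc : 0 < (γ - 1) / π := div_pos (sub_pos.2 hγ) pi_pos
  have hmul : ∫⁻ z, ENNReal.ofReal (‖f z‖ ^ p) ∂bergmanMeasure γ = ENNReal.ofReal ((γ - 1) / π) *
      ∫⁻ z in ball 0 1, ENNReal.ofReal (‖f z‖ ^ p * (1 - ‖z‖ ^ 2) ^ (γ - 2)) := by
    rw [lintegral_bergmanMeasure, ← lintegral_const_mul' _ _ ENNReal.ofReal_ne_top]
    refine lintegral_congr fun z => ?_
    rw [← ENNReal.ofReal_mul' (by positivity), ← ENNReal.ofReal_mul hc.le, mul_assoc,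
      mul_comm (‖f z‖ ^ p)]
  intro htop
  rw [hmul, htop, ENNReal.mul_top (ENNReal.ofReal_pos.2 hc).ne'] at hfin
  exact hfin rfl

lemma isWeightedVanishing_cayleyPullback (hp : 0 < p) (hpa : 1 < p * a)
    (hf : DifferentiableOn ℂ f (ball 0 1))
    (hfin : ∫⁻ z, ENNReal.ofReal (‖f z‖ ^ p) ∂bergmanMeasure (p * a) ≠ ⊤) :
    IsWeightedVanishing (cayleyPullback f a) a where
  differentiableOn := differentiableOn_cayleyPullback a hf
  isCompact s hs := by
    obtain ⟨ρ, hρ, hdecay⟩ := exists_norm_le_of_le_norm_rpow_mul hp hf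
      (lintegral_ball_ne_top_of_bergmanMeasure hpa hfin) (rpow_pos_of_pos hs p)
    have hsub : closedBall (0 : ℂ) ρ ⊆ ball 0 1 := closedBall_subset_ball hρ
    have hC : IsCompact (cayleyInv '' closedBall 0 ρ) :=
      (isCompact_closedBall 0 ρ).image_of_continuousOn (continuousOn_cayleyInv.mono hsub)
    have hCH : cayleyInv '' closedBall 0 ρ ⊆ upperHalfPlaneSet :=
      image_subset_iff.2 fun z hz => cayleyInv_mem_upperHalfPlaneSet (hsub hz)
    have hlevel : {z | s ≤ weightedNorm (cayleyPullback f a) a z} =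
        cayleyInv '' closedBall 0 ρ ∩ weightedNorm (cayleyPullback f a) a ⁻¹' Ici s := by
      refine Subset.antisymm (fun z hz => ⟨?_, hz⟩) inter_subset_right
      have hzH : z ∈ upperHalfPlaneSet := (weightedNorm_pos_iff.1 (hs.trans_le hz)).1
      have hpos := one_sub_norm_sq_pos (cayley_mem_ball hzH)
      refine ⟨cayley z, mem_closedBall_zero_iff.2 (hdecay _ (cayley_mem_ball hzH) ?_),
        cayleyInv_cayley hzH⟩
      rw [mul_comm p a, rpow_mul hpos.le, ← mul_rpow (norm_nonneg _) (by positivity),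
        ← weightedNorm_cayleyPullback f a hzH]
      exact rpow_le_rpow hs.le hz hp.le
    rw [hlevel]
    refine hC.of_isClosed_subset ?_ inter_subset_left
    exact ((continuousOn_weightedNorm (differentiableOn_cayleyPullback a hf).continuousOn).mono
      hCH).preimage_isClosed_of_isClosed hC.isClosed isClosed_Ici

end cayleyPullback

/-! ### The Bergman spaces -/

theorem lintegral_norm_rpow_bergmanMeasure_le {f : ℂ → ℂ} {p q a T : ℝ} (hp : 0 < p)
    (hpa : 1 < p * a) (hpq : p ≤ q) (hf : DifferentiableOn ℂ f (ball 0 1)) (hT : 0 ≤ T)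
    (hnorm : ∫⁻ z, ENNReal.ofReal (‖f z‖ ^ p) ∂bergmanMeasure (p * a) = ENNReal.ofReal (T ^ p)) :
    ∫⁻ z, ENNReal.ofReal (‖f z‖ ^ q) ∂bergmanMeasure (q * a) ≤ ENNReal.ofReal (T ^ q) := by
  have hG : IsWeightedVanishing (cayleyPullback f a) a :=
    isWeightedVanishing_cayleyPullback hp hpa hf (hnorm ▸ ENNReal.ofReal_ne_top)
  have ha : 0 < a := pos_of_mul_pos_right (one_pos.trans hpa) hp.le
  have hpa' : 0 < p * a - 1 := sub_pos.2 hpa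
  have hqa : 0 < q * a - 1 := by nlinarith
  have hhalf : ∫⁻ z, ENNReal.ofReal (weightedNorm (cayleyPullback f a) a z ^ p) ∂hyperbolicArea =
      ENNReal.ofReal (4 * π * T ^ p / (p * a - 1)) := by
    rw [lintegral_norm_rpow_bergmanMeasure f hp] at hnorm
    have hc : 0 < (p * a - 1) / (4 * π) := by positivity
    rw [← ENNReal.mul_right_inj (ENNReal.ofReal_pos.2 hc).ne' ENNReal.ofReal_ne_top, hnorm,
      ← ENNReal.ofReal_mul (by positivity)]
    congr 1
    field_simp
  calc ∫⁻ z, ENNReal.ofReal (‖f z‖ ^ q) ∂bergmanMeasure (q * a)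
      = ENNReal.ofReal ((q * a - 1) / (4 * π)) *
          ∫⁻ z, ENNReal.ofReal (weightedNorm (cayleyPullback f a) a z ^ q) ∂hyperbolicArea :=
        lintegral_norm_rpow_bergmanMeasure f (hp.trans_le hpq)
    _ ≤ ENNReal.ofReal ((q * a - 1) / (4 * π)) *
          ENNReal.ofReal (4 * π * T ^ q / (q * a - 1)) := by
        gcongr
        exact hG.lintegral_weightedNorm_rpow_le hp hpa hpq hT hhalf
    _ = ENNReal.ofReal (T ^ q) := by
        rw [← ENNReal.ofReal_mul (by positivity)]
        congr 1
        field_simp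

theorem kulikov_inequality
    (p q α β : ℝ) (hp : 0 < p) (hpq : p < q) (hα : 1 < α) (hβ : β = q * α / p)
    (f : ℂ → ℂ) (hf : DifferentiableOn ℂ f (ball (0 : ℂ) 1))
    (hfp : Integrable (fun z => ‖f z‖ ^ p) (bergmanMeasure α)) :
    (∫ z, ‖f z‖ ^ q ∂(bergmanMeasure β)) ^ (1 / q) ≤
      (∫ z, ‖f z‖ ^ p ∂(bergmanMeasure α)) ^ (1 / p) := by
  have hq : 0 < q := hp.trans hpq
  have hnonneg (r : ℝ) (z : ℂ) : 0 ≤ ‖f z‖ ^ r := rpow_nonneg (norm_nonneg _) r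
  have hαp : p * (α / p) = α := mul_div_cancel₀ α hp.ne'
  have hβq : q * (α / p) = β := by rw [hβ, mul_div_assoc]
  set T := (∫ z, ‖f z‖ ^ p ∂bergmanMeasure α) ^ (1 / p) with hTdef
  have hT : 0 ≤ T := rpow_nonneg (integral_nonneg (hnonneg p)) _
  have hnorm : ∫⁻ z, ENNReal.ofReal (‖f z‖ ^ p) ∂bergmanMeasure (p * (α / p)) =
      ENNReal.ofReal (T ^ p) := by
    rw [hαp, hTdef, one_div, rpow_inv_rpow (integral_nonneg (hnonneg p)) hp.ne',
      ofReal_integral_eq_lintegral_ofReal hfp (Eventually.of_forall (hnonneg p))]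
  have hle := lintegral_norm_rpow_bergmanMeasure_le hp (hαp.symm ▸ hα) hpq.le hf hT hnorm
  rw [hβq] at hle
  have hintegral : ∫ z, ‖f z‖ ^ q ∂bergmanMeasure β ≤ T ^ q := by
    by_cases hfq : Integrable (fun z => ‖f z‖ ^ q) (bergmanMeasure β)
    · rwa [← ofReal_integral_eq_lintegral_ofReal hfq (Eventually.of_forall (hnonneg q)),
        ENNReal.ofReal_le_ofReal_iff (rpow_nonneg hT q)] at hle
    · rw [integral_undef hfq]
      exact rpow_nonneg hT q
  rw [one_div, rpow_inv_le_iff_of_pos (integral_nonneg (hnonneg q)) hT hq]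
  exact hintegral
end

section
/- Let p ≥ 2 and let f be holomorphic on the unit disk 𝔻. Then the function Φ_p(r) = (1/2π) ∫₀^{2π} |f(√r · e^{iθ})|^p dθ is convex on the interval (0,1). -/
open MeasureTheory Metric

/-!
Let `M u r` be the mean of `u` over the circle of radius `√r`. In the variable `r` the radial part
of the Laplacian gives `(r (M u)')' = M (∂̄∂u)`. For `u = (|f|² + ε) ^ (p/2)` one computes
`∂̄∂u = |f'|² ψ(|f|²)`, where `ψ > 0` and `log ψ(|w|²)` is subharmonic in `w`, so `∂̄∂u` is itself
subharmonic and its means increase with `r`. Hence `r (M u)'` is convex; as it vanishes at `0`, its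
slope `(M u)'` from the origin increases, so `M u` is convex. Finally `ε → 0`.
-/

section

open Complex ComplexConjugate Set Filter Topology
open Real (circleAverage)

section OneVariable

variable {g A N : ℝ → ℝ} {b : ℝ}

lemma monotoneOn_of_hasDerivAt_inv_mul (hg : ∀ r ∈ Ioo 0 b, HasDerivAt g (r⁻¹ * A r) r)
    (hA : ∀ r ∈ Ioo 0 b, HasDerivAt A (N r) r) (hAc : ContinuousOn A (Ico 0 b)) (hA0 : A 0 = 0)
    (hN : ∀ r ∈ Ioo 0 b, 0 ≤ N r) : MonotoneOn g (Ioo 0 b) := by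
  have hAmono : MonotoneOn A (Ico 0 b) := by
    refine monotoneOn_of_hasDerivWithinAt_nonneg (f' := N) (convex_Ico 0 b) hAc ?_ ?_ <;>
      rw [interior_Ico]
    exacts [fun r hr => (hA r hr).hasDerivWithinAt, hN]
  have hAnonneg : ∀ r ∈ Ioo 0 b, 0 ≤ A r := fun r hr =>
    hA0 ▸ hAmono ⟨le_rfl, hr.1.trans hr.2⟩ (Ioo_subset_Ico_self hr) hr.1.le
  refine monotoneOn_of_hasDerivWithinAt_nonneg (f' := fun r => r⁻¹ * A r) (convex_Ioo 0 b)
    (fun r hr => (hg r hr).continuousAt.continuousWithinAt) ?_ ?_ <;> rw [interior_Ioo]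
  exacts [fun r hr => (hg r hr).hasDerivWithinAt,
    fun r hr => mul_nonneg (inv_nonneg.2 hr.1.le) (hAnonneg r hr)]

-- `A` is convex and vanishes at `0`, so `r⁻¹ * A r` is a slope of `A` based at `0`.
lemma convexOn_of_hasDerivAt_inv_mul (hg : ∀ r ∈ Ioo 0 b, HasDerivAt g (r⁻¹ * A r) r)
    (hA : ∀ r ∈ Ioo 0 b, HasDerivAt A (N r) r) (hAc : ContinuousOn A (Ico 0 b)) (hA0 : A 0 = 0)
    (hN : MonotoneOn N (Ioo 0 b)) : ConvexOn ℝ (Ioo 0 b) g := by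
  have hAconv : ConvexOn ℝ (Ico 0 b) A := by
    refine MonotoneOn.convexOn_of_deriv (convex_Ico 0 b) hAc ?_ ?_ <;> rw [interior_Ico]
    · exact fun r hr => (hA r hr).differentiableAt.differentiableWithinAt
    · exact hN.congr fun r hr => (hA r hr).deriv.symm
  refine MonotoneOn.convexOn_of_deriv (convex_Ioo 0 b)
    (fun r hr => (hg r hr).continuousAt.continuousWithinAt) ?_ ?_ <;> rw [interior_Ioo]
  · exact fun r hr => (hg r hr).differentiableAt.differentiableWithinAt
  · intro r hr s hs hrs
    have hslope := hAconv.secant_mono ⟨le_rfl, hr.1.trans hr.2⟩ (Ioo_subset_Ico_self hr)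
      (Ioo_subset_Ico_self hs) hr.1.ne' hs.1.ne' hrs
    rw [(hg r hr).deriv, (hg s hs).deriv]
    simpa only [hA0, sub_zero, div_eq_inv_mul] using hslope

end OneVariable

section CircleAverage

variable {E : Type*} [NormedAddCommGroup E] {u : ℂ → E} {c : ℂ} {R ρ : ℝ}

lemma circleIntegrable_of_continuousOn_ball (hu : ContinuousOn u (ball c R)) (hρ : |ρ| < R) :
    CircleIntegrable u c ρ :=
  ContinuousOn.circleIntegrable' (hu.mono (sphere_subset_ball hρ))

lemma circleMap_mem_ball (hρ : |ρ| < R) (θ : ℝ) : circleMap c ρ θ ∈ ball c R := by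
  simpa [mem_ball, dist_eq_norm] using hρ

variable [NormedSpace ℝ E]

lemma hasDerivAt_intervalIntegral_of_continuousOn {F F' : ℝ → ℝ → E} {s : Set ℝ} {x₀ a b : ℝ}
    (hs : s ∈ 𝓝 x₀) (hF : ∀ x ∈ s, ContinuousOn (F x) (uIcc a b))
    (hF' : ContinuousOn F'.uncurry (s ×ˢ uIcc a b))
    (hderiv : ∀ x ∈ s, ∀ t ∈ uIcc a b, HasDerivAt (F · t) (F' x t) x) :
    HasDerivAt (fun x => ∫ t in a..b, F x t) (∫ t in a..b, F' x₀ t) x₀ := by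
  obtain ⟨k, hk, hks, hkcompact⟩ := local_compact_nhds hs
  obtain ⟨C, hC⟩ := (hkcompact.prod isCompact_uIcc).exists_bound_of_continuousOn
    (hF'.mono (prod_mono hks Subset.rfl))
  have hF'x₀ : ContinuousOn (F' x₀) (uIcc a b) :=
    hF'.comp (by fun_prop : Continuous fun t => (x₀, t)).continuousOn
      fun t ht => ⟨mem_of_mem_nhds hs, ht⟩
  refine (intervalIntegral.hasDerivAt_integral_of_dominated_loc_of_deriv_le
    (bound := fun _ => C) hk ?_ (hF x₀ (mem_of_mem_nhds hs)).intervalIntegrable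
    hF'x₀.intervalIntegrable.def'.aestronglyMeasurable (ae_of_all _ fun t ht x hx => ?_)
    intervalIntegrable_const (ae_of_all _ fun t ht x hx => ?_)).2
  · filter_upwards [hs] with x hx
    exact (hF x hx).intervalIntegrable.def'.aestronglyMeasurable
  · exact hC (x, t) ⟨hx, uIoc_subset_uIcc ht⟩
  · exact hderiv x (hks hx) t (uIoc_subset_uIcc ht)

lemma hasDerivAt_circleMap_radius (c : ℂ) (ρ θ : ℝ) :
    HasDerivAt (fun ρ : ℝ => circleMap c ρ θ) (cexp (θ * I)) ρ := by
  simpa [circleMap] using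
    ((Complex.ofRealCLM.hasDerivAt (x := ρ)).mul_const (cexp (θ * I))).const_add c

lemma hasDerivAt_circleAverage (hu : ContDiffOn ℝ 1 u (ball c R)) (hρ0 : ρ ≠ 0) (hρ : |ρ| < R) :
    HasDerivAt (circleAverage u c)
      (ρ⁻¹ • circleAverage (fun z => fderiv ℝ u z (z - c)) c ρ) ρ := by
  have hmem : ∀ x ∈ {x : ℝ | |x| < R}, ∀ θ, circleMap c x θ ∈ ball c R := fun x hx θ =>
    circleMap_mem_ball hx θ
  have hu' : ContinuousOn (fderiv ℝ u) (ball c R) :=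
    hu.continuousOn_fderiv_of_isOpen isOpen_ball le_rfl
  have hderiv := hasDerivAt_intervalIntegral_of_continuousOn (a := 0) (b := 2 * Real.pi)
    (F := fun x θ => u (circleMap c x θ))
    (F' := fun x θ => fderiv ℝ u (circleMap c x θ) (cexp (θ * I)))
    ((isOpen_lt continuous_abs continuous_const).mem_nhds hρ)
    (fun x hx => hu.continuousOn.comp (by fun_prop) fun θ _ => hmem x hx θ)
    ((hu'.comp (by fun_prop) fun x hx => hmem x.1 hx.1 x.2).clm_apply
      (by fun_prop))
    (fun x hx θ _ => ((hu.differentiableOn one_ne_zero).differentiableAt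
      (isOpen_ball.mem_nhds (hmem x hx θ))).hasFDerivAt.comp_hasDerivAt x
        (hasDerivAt_circleMap_radius c x θ))
  refine (hderiv.const_smul (2 * Real.pi)⁻¹).congr_deriv ?_
  have hexp : ∀ θ : ℝ, cexp (θ * I) = ρ⁻¹ • (circleMap c ρ θ - c) := fun θ => by
    simp [circleMap, hρ0]
  simp only [hexp, map_smul, intervalIntegral.integral_smul, circleAverage, smul_comm ρ⁻¹]

lemma circleAverage_fderiv_I_mul_eq_zero [CompleteSpace E] (hu : ContDiffOn ℝ 1 u (ball c R))
    (hρ : |ρ| < R) :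
    circleAverage (fun z => fderiv ℝ u z (I * (z - c))) c ρ = 0 := by
  have hu' : ContinuousOn (fderiv ℝ u) (ball c R) :=
    hu.continuousOn_fderiv_of_isOpen isOpen_ball le_rfl
  have hderiv : ∀ θ, HasDerivAt (fun θ => u (circleMap c ρ θ))
      (fderiv ℝ u (circleMap c ρ θ) (I * (circleMap c ρ θ - c))) θ := fun θ => by
    have hcircle : HasDerivAt (circleMap c ρ) (I * (circleMap c ρ θ - c)) θ := by
      simpa [circleMap, mul_comm] using hasDerivAt_circleMap c ρ θ
    exact ((hu.differentiableOn one_ne_zero).differentiableAt (isOpen_ball.mem_nhds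
      (circleMap_mem_ball hρ θ))).hasFDerivAt.comp_hasDerivAt θ hcircle
  have hint : CircleIntegrable (fun z => fderiv ℝ u z (I * (z - c))) c ρ :=
    circleIntegrable_of_continuousOn_ball (hu'.clm_apply (by fun_prop)) hρ
  rw [circleAverage, intervalIntegral.integral_eq_sub_of_hasDerivAt (fun θ _ => hderiv θ) hint,
    (periodic_circleMap c ρ).eq, sub_self, smul_zero]

end CircleAverage

section Wirtinger

/-- The Wirtinger derivative `∂u = (∂ₓu - i ∂ᵧu) / 2`, in terms of the real Fréchet derivative (so
it is `0` where `u` is not real differentiable). -/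
noncomputable def dz (u : ℂ → ℂ) (z : ℂ) : ℂ := (fderiv ℝ u z 1 - I * fderiv ℝ u z I) / 2

/-- The conjugate Wirtinger derivative `∂̄u = (∂ₓu + i ∂ᵧu) / 2`. The composite `∂̄∂` is a quarter
of the Laplacian. -/
noncomputable def dzbar (u : ℂ → ℂ) (z : ℂ) : ℂ := (fderiv ℝ u z 1 + I * fderiv ℝ u z I) / 2

/-- `u` is real differentiable at `z` with Wirtinger derivatives `∂u = a` and `∂̄u = b`. -/
def HasWirtingerDerivAt (u : ℂ → ℂ) (a b z : ℂ) : Prop :=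
  HasFDerivAt u (a • ContinuousLinearMap.id ℝ ℂ + b • (conjCLE : ℂ →L[ℝ] ℂ)) z

lemma fderiv_apply_eq_dz_add_dzbar (u : ℂ → ℂ) (z w : ℂ) :
    fderiv ℝ u z w = dz u z * w + dzbar u z * conj w := by
  have hw : w = w.re • (1 : ℂ) + w.im • I := by simp [re_add_im]
  have hconj : conj w = w.re - w.im * I := by simp [Complex.ext_iff]
  rw [hconj, hw, map_add, map_smul, map_smul]
  simp only [dz, dzbar, real_smul, mul_one, add_re, add_im, ofReal_re, ofReal_im, re_ofReal_mul,
    im_ofReal_mul, I_re, I_im]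
  push_cast
  linear_combination (w.im * fderiv ℝ u z I) * I_sq

namespace HasWirtingerDerivAt

variable {u v : ℂ → ℂ} {a b a' b' z : ℂ}

lemma dz_eq (h : HasWirtingerDerivAt u a b z) : dz u z = a := by
  rw [dz, h.fderiv]
  simp only [add_apply, smul_apply, ContinuousLinearMap.id_apply, smul_eq_mul, mul_one,
    ContinuousLinearEquiv.coe_coe, ContinuousAlgEquiv.coeCLE_apply, conjCAE_apply, map_one, conj_I,
    mul_neg]
  linear_combination (-(a - b) / 2) * I_sq

lemma dzbar_eq (h : HasWirtingerDerivAt u a b z) : dzbar u z = b := by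
  rw [dzbar, h.fderiv]
  simp only [add_apply, smul_apply, ContinuousLinearMap.id_apply, smul_eq_mul, mul_one,
    ContinuousLinearEquiv.coe_coe, ContinuousAlgEquiv.coeCLE_apply, conjCAE_apply, map_one, conj_I,
    mul_neg]
  linear_combination ((a - b) / 2) * I_sq

lemma add (hu : HasWirtingerDerivAt u a b z) (hv : HasWirtingerDerivAt v a' b' z) :
    HasWirtingerDerivAt (fun z => u z + v z) (a + a') (b + b') z := by
  refine (HasFDerivAt.fun_add hu hv).congr_fderiv ?_
  ext w
  simp only [add_apply, smul_apply, ContinuousLinearMap.id_apply, smul_eq_mul,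
    ContinuousLinearEquiv.coe_coe, ContinuousAlgEquiv.coeCLE_apply, conjCAE_apply]
  ring

lemma mul (hu : HasWirtingerDerivAt u a b z) (hv : HasWirtingerDerivAt v a' b' z) :
    HasWirtingerDerivAt (fun z => u z * v z) (a * v z + u z * a') (b * v z + u z * b') z := by
  refine (HasFDerivAt.fun_mul hu hv).congr_fderiv ?_
  ext w
  simp only [smul_add, add_apply, smul_apply, ContinuousLinearMap.id_apply, smul_eq_mul,
    ContinuousLinearEquiv.coe_coe, ContinuousAlgEquiv.coeCLE_apply, conjCAE_apply]
  ring

lemma star (hu : HasWirtingerDerivAt u a b z) :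
    HasWirtingerDerivAt (fun z => conj (u z)) (conj b) (conj a) z := by
  refine ((conjCLE : ℂ →L[ℝ] ℂ).hasFDerivAt.comp z hu).congr_fderiv ?_
  ext w
  simp [add_comm]

lemma of_hasDerivAt (hu : HasDerivAt u a z) : HasWirtingerDerivAt u a 0 z := by
  refine (hu.hasFDerivAt.restrictScalars ℝ).congr_fderiv ?_
  ext w
  simp [mul_comm]

lemma ofReal_comp {φ : ℝ → ℝ} {s : ℂ → ℝ} {φ' : ℝ} (hφ : HasDerivAt φ φ' (s z))
    (hs : HasWirtingerDerivAt (fun z => s z) a b z) :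
    HasWirtingerDerivAt (fun z => φ (s z)) (φ' * a) (φ' * b) z := by
  have hre : HasFDerivAt s _ z := reCLM.hasFDerivAt.comp z hs
  have him := (imCLM.hasFDerivAt.comp z hs).unique (hasFDerivAt_const (0 : ℝ) z)
  refine (ofRealCLM.hasFDerivAt.comp z (hφ.comp_hasFDerivAt z hre)).congr_fderiv ?_
  ext w
  have himw : (a * w + b * starRingEnd ℂ w).im = 0 := by simpa using congr($him w)
  have hrew : ((a * w + b * starRingEnd ℂ w).re : ℂ) = a * w + b * starRingEnd ℂ w :=
    Complex.ext rfl (by simpa using himw.symm)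
  simpa [mul_assoc, mul_add] using congr((φ' : ℂ) * $hrew)

end HasWirtingerDerivAt

variable {u : ℂ → ℂ} {U : Set ℂ} {m n : WithTop ℕ∞}

lemma contDiffOn_dz (hu : ContDiffOn ℝ n u U) (hU : IsOpen U) (hmn : m + 1 ≤ n) :
    ContDiffOn ℝ m (dz u) U := by
  have hu' := hu.fderiv_of_isOpen hU hmn
  exact ((hu'.clm_apply contDiffOn_const).sub
    (contDiffOn_const.mul (hu'.clm_apply contDiffOn_const))).div_const 2

lemma contDiffOn_dzbar (hu : ContDiffOn ℝ n u U) (hU : IsOpen U) (hmn : m + 1 ≤ n) :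
    ContDiffOn ℝ m (dzbar u) U := by
  have hu' := hu.fderiv_of_isOpen hU hmn
  exact ((hu'.clm_apply contDiffOn_const).add
    (contDiffOn_const.mul (hu'.clm_apply contDiffOn_const))).div_const 2

lemma hasWirtingerDerivAt_dz_dzbar {z : ℂ} (hu : DifferentiableAt ℝ u z) :
    HasWirtingerDerivAt u (dz u z) (dzbar u z) z := by
  refine hu.hasFDerivAt.congr_fderiv ?_
  ext w
  simp [fderiv_apply_eq_dz_add_dzbar]

end Wirtinger

section CircleMeans

variable {u : ℂ → ℂ} {c : ℂ} {R ρ r : ℝ}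

lemma circleIntegrable_sub_mul_dz (hu : ContDiffOn ℝ 1 u (ball c R)) (hρ : |ρ| < R) :
    CircleIntegrable (fun z => (z - c) * dz u z) c ρ :=
  circleIntegrable_of_continuousOn_ball ((by fun_prop : Continuous fun z => z - c).continuousOn.mul
    (contDiffOn_dz hu isOpen_ball (m := 0) (by simp)).continuousOn) hρ

lemma circleIntegrable_conj_sub_mul_dzbar (hu : ContDiffOn ℝ 1 u (ball c R)) (hρ : |ρ| < R) :
    CircleIntegrable (fun z => conj (z - c) * dzbar u z) c ρ :=
  circleIntegrable_of_continuousOn_ball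
    ((by fun_prop : Continuous fun z => conj (z - c)).continuousOn.mul
      (contDiffOn_dzbar hu isOpen_ball (m := 0) (by simp)).continuousOn) hρ

-- The difference of the two integrands is `-i` times the angular derivative of `u`.
lemma circleAverage_sub_mul_dz (hu : ContDiffOn ℝ 1 u (ball c R)) (hρ : |ρ| < R) :
    circleAverage (fun z => (z - c) * dz u z) c ρ =
      circleAverage (fun z => conj (z - c) * dzbar u z) c ρ := by
  have hangular : ∀ z, fderiv ℝ u z (I * (z - c)) =
      I • ((z - c) * dz u z - conj (z - c) * dzbar u z) := fun z => by
    simp only [fderiv_apply_eq_dz_add_dzbar, map_mul, conj_I, smul_eq_mul]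
    ring
  have hzero := circleAverage_fderiv_I_mul_eq_zero hu hρ
  simp only [hangular] at hzero
  rw [Real.circleAverage_fun_smul, smul_eq_zero_iff_right I_ne_zero, Real.circleAverage_fun_sub
    (circleIntegrable_sub_mul_dz hu hρ) (circleIntegrable_conj_sub_mul_dzbar hu hρ)] at hzero
  exact sub_eq_zero.1 hzero

lemma circleAverage_fderiv_sub (hu : ContDiffOn ℝ 1 u (ball c R)) (hρ : |ρ| < R) :
    circleAverage (fun z => fderiv ℝ u z (z - c)) c ρ =
      2 * circleAverage (fun z => (z - c) * dz u z) c ρ := by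
  have hradial : ∀ z, fderiv ℝ u z (z - c) = (z - c) * dz u z + conj (z - c) * dzbar u z :=
    fun z => by rw [fderiv_apply_eq_dz_add_dzbar]; ring
  simp only [hradial]
  rw [Real.circleAverage_fun_add (circleIntegrable_sub_mul_dz hu hρ)
    (circleIntegrable_conj_sub_mul_dzbar hu hρ), ← circleAverage_sub_mul_dz hu hρ, two_mul]

lemma abs_sqrt_lt (hr : r ∈ Ico 0 (R ^ 2)) (hR : 0 ≤ R) : |√r| < R := by
  rw [abs_of_nonneg (Real.sqrt_nonneg r)]
  exact (Real.sqrt_lt hr.1 hR).2 hr.2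

lemma hasDerivAt_circleAverage_sqrt (hu : ContDiffOn ℝ 1 u (ball c R)) (hR : 0 ≤ R)
    (hr : r ∈ Ioo 0 (R ^ 2)) :
    HasDerivAt (fun r => circleAverage u c √r)
      ((r : ℂ)⁻¹ * circleAverage (fun z => (z - c) * dz u z) c √r) r := by
  have hsqrt_pos : 0 < √r := Real.sqrt_pos.2 hr.1
  have hsqrt_lt := abs_sqrt_lt (Ioo_subset_Ico_self hr) hR
  refine ((hasDerivAt_circleAverage hu hsqrt_pos.ne' hsqrt_lt).scomp r
    (Real.hasDerivAt_sqrt hr.1.ne')).congr_deriv ?_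
  have hcoeff : (1 / (2 * √r)) * (√r)⁻¹ * 2 = r⁻¹ := by
    rw [← Real.sq_sqrt hr.1.le]
    field_simp
    simp
  rw [circleAverage_fderiv_sub hu hsqrt_lt, smul_smul, real_smul, ← ofReal_inv, ← hcoeff]
  push_cast
  ring

-- `∂̄((z - c) u) = (z - c) ∂̄u` and `conj (z - c) * (z - c) = r` on the circle.
lemma hasDerivAt_circleAverage_sub_mul_sqrt (hu : ContDiffOn ℝ 1 u (ball c R)) (hR : 0 ≤ R)
    (hr : r ∈ Ioo 0 (R ^ 2)) :
    HasDerivAt (fun r => circleAverage (fun z => (z - c) * u z) c √r)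
      (circleAverage (dzbar u) c √r) r := by
  have hsqrt_lt := abs_sqrt_lt (Ioo_subset_Ico_self hr) hR
  have hsub_mul : ContDiffOn ℝ 1 (fun z => (z - c) * u z) (ball c R) :=
    (contDiffOn_id.sub contDiffOn_const).mul hu
  have hintegrand : EqOn (fun z => conj (z - c) * dzbar (fun z => (z - c) * u z) z)
      (fun z => (r : ℂ) • dzbar u z) (sphere c |√r|) := fun z hz => by
    have hz_ball : z ∈ ball c R := sphere_subset_ball hsqrt_lt hz
    have hnormSq : (z - c) * conj (z - c) = r := by
      rw [mul_conj, normSq_eq_norm_sq, mem_sphere_iff_norm.1 hz, sq_abs, Real.sq_sqrt hr.1.le]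
    have hdzbar := ((HasWirtingerDerivAt.of_hasDerivAt ((hasDerivAt_id z).sub_const c)).mul
      (hasWirtingerDerivAt_dz_dzbar ((hu.differentiableOn one_ne_zero).differentiableAt
        (isOpen_ball.mem_nhds hz_ball)))).dzbar_eq
    simp only [id] at hdzbar
    simp only [hdzbar, smul_eq_mul, ← hnormSq]
    ring
  refine (hasDerivAt_circleAverage_sqrt hsub_mul hR hr).congr_deriv ?_
  rw [circleAverage_sub_mul_dz hsub_mul hsqrt_lt, Real.circleAverage_congr_sphere hintegrand,
    Real.circleAverage_fun_smul, smul_eq_mul, inv_mul_cancel_left₀ (ofReal_ne_zero.2 hr.1.ne')]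

lemma continuousOn_circleAverage_sqrt (hu : ContinuousOn u (ball c R)) (hR : 0 ≤ R) :
    ContinuousOn (fun r => circleAverage u c √r) (Ico 0 (R ^ 2)) := by
  have haverage : ContinuousOn (circleAverage u c) (Ico 0 R) :=
    Real.ContinuousOn.circleAverage
      (hu.mono fun z hz => by simpa [mem_ball, dist_eq_norm] using hz.2) fun r hr => hr.1
  exact haverage.comp (by fun_prop) fun r hr =>
    ⟨Real.sqrt_nonneg r, (le_abs_self _).trans_lt (abs_sqrt_lt hr hR)⟩

lemma hasDerivAt_re {g : ℝ → ℂ} {g' : ℂ} {x : ℝ} (hg : HasDerivAt g g' x) :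
    HasDerivAt (fun x => (g x).re) g'.re x :=
  reCLM.hasFDerivAt.comp_hasDerivAt x hg

lemma hasDerivAt_re_circleAverage_sqrt (hu : ContDiffOn ℝ 1 u (ball c R)) (hR : 0 ≤ R)
    (hr : r ∈ Ioo 0 (R ^ 2)) :
    HasDerivAt (fun r => (circleAverage u c √r).re)
      (r⁻¹ * (circleAverage (fun z => (z - c) * dz u z) c √r).re) r := by
  simpa only [← ofReal_inv, re_ofReal_mul] using
    hasDerivAt_re (hasDerivAt_circleAverage_sqrt hu hR hr)

lemma hasDerivAt_re_circleAverage_sub_mul_sqrt (hu : ContDiffOn ℝ 1 u (ball c R)) (hR : 0 ≤ R)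
    (hr : r ∈ Ioo 0 (R ^ 2)) :
    HasDerivAt (fun r => (circleAverage (fun z => (z - c) * u z) c √r).re)
      (circleAverage (dzbar u) c √r).re r :=
  hasDerivAt_re (hasDerivAt_circleAverage_sub_mul_sqrt hu hR hr)

lemma continuousOn_re_circleAverage_sub_mul_sqrt (hu : ContinuousOn u (ball c R)) (hR : 0 ≤ R) :
    ContinuousOn (fun r => (circleAverage (fun z => (z - c) * u z) c √r).re) (Ico 0 (R ^ 2)) :=
  continuous_re.comp_continuousOn
    (continuousOn_circleAverage_sqrt ((by fun_prop : Continuous fun z => z - c).continuousOn.mul hu)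
      hR)

lemma re_circleAverage_nonneg (hu : ContinuousOn u (ball c R)) (hρ : |ρ| < R)
    (hnonneg : ∀ z ∈ ball c R, 0 ≤ (u z).re) : 0 ≤ (circleAverage u c ρ).re := by
  rw [← reCLM_apply, ← reCLM.circleAverage_comp_comm (circleIntegrable_of_continuousOn_ball hu hρ)]
  exact Real.circleAverage_nonneg_of_nonneg fun z hz => hnonneg z (sphere_subset_ball hρ hz)

theorem monotoneOn_re_circleAverage_sqrt (hu : ContDiffOn ℝ 2 u (ball c R)) (hR : 0 ≤ R)
    (hnonneg : ∀ z ∈ ball c R, 0 ≤ (dzbar (dz u) z).re) :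
    MonotoneOn (fun r => (circleAverage u c √r).re) (Ioo 0 (R ^ 2)) := by
  have hdz : ContDiffOn ℝ 1 (dz u) (ball c R) := contDiffOn_dz hu isOpen_ball (by norm_num)
  have hdzbar : ContDiffOn ℝ 0 (dzbar (dz u)) (ball c R) :=
    contDiffOn_dzbar hdz isOpen_ball (by simp)
  exact monotoneOn_of_hasDerivAt_inv_mul
    (fun r hr => hasDerivAt_re_circleAverage_sqrt (hu.of_le (by norm_num)) hR hr)
    (fun r hr => hasDerivAt_re_circleAverage_sub_mul_sqrt hdz hR hr)
    (continuousOn_re_circleAverage_sub_mul_sqrt hdz.continuousOn hR) (by simp)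
    (fun r hr => re_circleAverage_nonneg hdzbar.continuousOn
      (abs_sqrt_lt (Ioo_subset_Ico_self hr) hR) hnonneg)

theorem convexOn_re_circleAverage_sqrt (hu : ContDiffOn ℝ 4 u (ball c R)) (hR : 0 ≤ R)
    (hnonneg : ∀ z ∈ ball c R, 0 ≤ (dzbar (dz (dzbar (dz u))) z).re) :
    ConvexOn ℝ (Ioo 0 (R ^ 2)) (fun r => (circleAverage u c √r).re) := by
  have hdz : ContDiffOn ℝ 3 (dz u) (ball c R) := contDiffOn_dz hu isOpen_ball (by norm_num)
  have hdzbar : ContDiffOn ℝ 2 (dzbar (dz u)) (ball c R) :=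
    contDiffOn_dzbar hdz isOpen_ball (by norm_num)
  exact convexOn_of_hasDerivAt_inv_mul
    (fun r hr => hasDerivAt_re_circleAverage_sqrt (hu.of_le (by norm_num)) hR hr)
    (fun r hr => hasDerivAt_re_circleAverage_sub_mul_sqrt (hdz.of_le (by norm_num)) hR hr)
    (continuousOn_re_circleAverage_sub_mul_sqrt hdz.continuousOn hR) (by simp)
    (monotoneOn_re_circleAverage_sqrt hdzbar hR hnonneg)

end CircleMeans

section RadialLaplacian

/-- The operator `φ ↦ (t φ')'`. It is a quarter of the Laplacian of radial functions written in the
variable `t = |w|²`: `∂̄∂ (φ (|w|²)) = (radialLaplacian φ) (|w|²)`. -/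
noncomputable def radialLaplacian (φ : ℝ → ℝ) (t : ℝ) : ℝ := deriv φ t + t * deriv (deriv φ) t

variable {φ ψ : ℝ → ℝ} {t : ℝ} {m n : WithTop ℕ∞}

lemma contDiffAt_radialLaplacian (hφ : ContDiffAt ℝ n φ t) (hmn : m + 1 + 1 ≤ n) :
    ContDiffAt ℝ m (radialLaplacian φ) t := by
  have hφ' : ContDiffAt ℝ (m + 1) (deriv φ) t := hφ.derivWithin hmn
  exact (hφ'.of_le le_self_add).add (contDiffAt_id.mul (hφ'.derivWithin le_rfl))

variable {f h : ℂ → ℂ} {z : ℂ} {U : Set ℂ}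

lemma hasWirtingerDerivAt_comp_normSq (hf : DifferentiableAt ℂ f z)
    (hψ : DifferentiableAt ℝ ψ (normSq (f z))) :
    HasWirtingerDerivAt (fun z => ψ (normSq (f z)))
      (deriv ψ (normSq (f z)) * (deriv f z * conj (f z)))
      (deriv ψ (normSq (f z)) * (f z * conj (deriv f z))) z := by
  have hf' := HasWirtingerDerivAt.of_hasDerivAt hf.hasDerivAt
  have hnormSq : HasWirtingerDerivAt (fun z => (normSq (f z) : ℂ))
      (deriv f z * conj (f z)) (f z * conj (deriv f z)) z := by
    simpa [mul_conj] using hf'.mul hf'.star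
  exact hnormSq.ofReal_comp hψ.hasDerivAt

lemma dz_normSq_mul_comp_normSq (hf : DifferentiableAt ℂ f z) (hh : DifferentiableAt ℂ h z)
    (hψ : DifferentiableAt ℝ ψ (normSq (f z))) :
    dz (fun z => normSq (h z) * ψ (normSq (f z))) z =
      conj (h z) * (deriv h z * ψ (normSq (f z)) +
        h z * deriv f z * conj (f z) * deriv ψ (normSq (f z))) := by
  have hh' := HasWirtingerDerivAt.of_hasDerivAt hh.hasDerivAt
  have hprod := (hh'.mul hh'.star).mul (hasWirtingerDerivAt_comp_normSq hf hψ)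
  simp only [mul_conj] at hprod
  rw [hprod.dz_eq, ← mul_conj]
  simp only [map_zero]
  ring

lemma dzbar_dz_normSq_mul_comp_normSq (hU : IsOpen U) (hf : DifferentiableOn ℂ f U)
    (hh : DifferentiableOn ℂ h U) (hψ : ∀ t, 0 ≤ t → ContDiffAt ℝ 2 ψ t) (hz : z ∈ U) :
    dzbar (dz fun z => normSq (h z) * ψ (normSq (f z))) z =
      ((ψ (normSq (f z)) * normSq (deriv h z) +
        2 * deriv ψ (normSq (f z)) * (conj (deriv h z) * (h z * deriv f z * conj (f z))).re +
        normSq (h z * deriv f z) * radialLaplacian ψ (normSq (f z)) : ℝ) : ℂ) := by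
  have hderiv : ∀ {g : ℂ → ℂ}, DifferentiableOn ℂ g U → HasWirtingerDerivAt g (deriv g z) 0 z :=
    fun hg => .of_hasDerivAt (hg.differentiableAt (hU.mem_nhds hz)).hasDerivAt
  have hdz : dz (fun z => normSq (h z) * ψ (normSq (f z))) =ᶠ[𝓝 z] fun z =>
      conj (h z) * (deriv h z * ψ (normSq (f z)) +
        h z * deriv f z * conj (f z) * (deriv ψ (normSq (f z)) : ℝ)) := by
    filter_upwards [hU.mem_nhds hz] with w hw
    exact dz_normSq_mul_comp_normSq (hf.differentiableAt (hU.mem_nhds hw))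
      (hh.differentiableAt (hU.mem_nhds hw))
      ((hψ _ (normSq_nonneg _)).differentiableAt two_ne_zero)
  have hfz := hf.differentiableAt (hU.mem_nhds hz)
  have hψt := hψ _ (normSq_nonneg (f z))
  have hψ' : ContDiffAt ℝ 1 (deriv ψ) (normSq (f z)) := hψt.derivWithin (by norm_num)
  have hwirtinger := (hderiv hh).star.mul
    (((hderiv (hh.deriv hU)).mul
      (hasWirtingerDerivAt_comp_normSq hfz (hψt.differentiableAt two_ne_zero))).add
    ((((hderiv hh).mul (hderiv (hf.deriv hU))).mul (hderiv hf).star).mul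
      (hasWirtingerDerivAt_comp_normSq hfz (hψ'.differentiableAt one_ne_zero))))
  rw [HasWirtingerDerivAt.dzbar_eq (hwirtinger.congr_of_eventuallyEq hdz)]
  push_cast
  simp only [radialLaplacian, ofReal_add, ofReal_mul, ← mul_conj, re_eq_add_conj, map_mul,
    conj_conj]
  ring

lemma dzbar_dz_congr {u v : ℂ → ℂ} (huv : u =ᶠ[𝓝 z] v) :
    dzbar (dz u) z = dzbar (dz v) z := by
  have hdz : dz u =ᶠ[𝓝 z] dz v := by
    filter_upwards [huv.fderiv (𝕜 := ℝ)] with w hw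
    simp only [dz, hw]
  simp only [dzbar, hdz.fderiv_eq]

lemma hermitian_form_nonneg {q k l : ℝ} {a b : ℂ} (hq : 0 < q) (hdet : k ^ 2 * normSq b ≤ q * l) :
    0 ≤ q * normSq a + 2 * k * (conj a * b).re + l := by
  have hsquare : q * (q * normSq a + 2 * k * (conj a * b).re + l) =
      normSq (q * a + k * b) + (q * l - k ^ 2 * normSq b) := by
    simp only [normSq_apply, add_re, add_im, mul_re, mul_im, conj_re, conj_im, ofReal_re, ofReal_im]
    ring
  refine nonneg_of_mul_nonneg_right ?_ hq
  rw [hsquare]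
  exact add_nonneg (normSq_nonneg _) (sub_nonneg.2 hdet)

-- The hypothesis on `ψ` says that `log ψ(|w|²)` is subharmonic in `w`.
lemma re_dzbar_dz_normSq_mul_comp_normSq_nonneg (hU : IsOpen U) (hf : DifferentiableOn ℂ f U)
    (hh : DifferentiableOn ℂ h U) (hψ : ∀ t, 0 ≤ t → ContDiffAt ℝ 2 ψ t)
    (hψ_pos : ∀ t, 0 ≤ t → 0 < ψ t)
    (hψ_log : ∀ t, 0 ≤ t → t * deriv ψ t ^ 2 ≤ ψ t * radialLaplacian ψ t) (hz : z ∈ U) :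
    0 ≤ (dzbar (dz fun z => normSq (h z) * ψ (normSq (f z))) z).re := by
  rw [dzbar_dz_normSq_mul_comp_normSq hU hf hh hψ hz, ofReal_re]
  have ht := normSq_nonneg (f z)
  refine hermitian_form_nonneg (hψ_pos _ ht) ?_
  calc deriv ψ (normSq (f z)) ^ 2 * normSq (h z * deriv f z * conj (f z))
      = normSq (h z * deriv f z) * (normSq (f z) * deriv ψ (normSq (f z)) ^ 2) := by
        rw [normSq_mul (h z * deriv f z), normSq_conj]
        ring
    _ ≤ normSq (h z * deriv f z) *
          (ψ (normSq (f z)) * radialLaplacian ψ (normSq (f z))) :=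
        mul_le_mul_of_nonneg_left (hψ_log _ ht) (normSq_nonneg _)
    _ = _ := by ring

lemma dzbar_dz_comp_normSq (hU : IsOpen U) (hf : DifferentiableOn ℂ f U)
    (hφ : ∀ t, 0 ≤ t → ContDiffAt ℝ 2 φ t) (hz : z ∈ U) :
    dzbar (dz fun z => φ (normSq (f z))) z =
      normSq (deriv f z) * radialLaplacian φ (normSq (f z)) := by
  simpa using dzbar_dz_normSq_mul_comp_normSq hU hf (differentiableOn_const (1 : ℂ)) hφ hz

lemma contDiffOn_comp_normSq {n : ℕ∞} (hU : IsOpen U) (hf : DifferentiableOn ℂ f U)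
    (hφ : ∀ t, 0 ≤ t → ContDiffAt ℝ n φ t) :
    ContDiffOn ℝ n (fun z => (φ (normSq (f z)) : ℂ)) U := by
  have hfℝ : ContDiffOn ℝ n f U := (hf.contDiffOn hU).restrict_scalars ℝ
  have hnormSq : ContDiffOn ℝ n (fun z => normSq (f z)) U := by
    simpa only [normSq_eq_norm_sq] using hfℝ.norm_sq ℝ
  have hcomp : ContDiffOn ℝ n (fun z => φ (normSq (f z))) U := fun z hz =>
    (hφ _ (normSq_nonneg (f z))).comp_contDiffWithinAt (f := fun z => normSq (f z)) z (hnormSq z hz)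
  exact ofRealCLM.contDiff.comp_contDiffOn hcomp

theorem convexOn_circleAverage_comp_normSq {c : ℂ} {R : ℝ} (hR : 0 ≤ R)
    (hf : DifferentiableOn ℂ f (ball c R)) (hφ : ∀ t, 0 ≤ t → ContDiffAt ℝ 4 φ t)
    (hφ_pos : ∀ t, 0 ≤ t → 0 < radialLaplacian φ t)
    (hφ_log : ∀ t, 0 ≤ t → t * deriv (radialLaplacian φ) t ^ 2 ≤
      radialLaplacian φ t * radialLaplacian (radialLaplacian φ) t) :
    ConvexOn ℝ (Ioo 0 (R ^ 2)) (fun r => circleAverage (fun z => φ (normSq (f z))) c √r) := by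
  have hψ : ∀ t, 0 ≤ t → ContDiffAt ℝ 2 (radialLaplacian φ) t := fun t ht =>
    contDiffAt_radialLaplacian (hφ t ht) (by norm_num)
  have hu : ContDiffOn ℝ 4 (fun z => (φ (normSq (f z)) : ℂ)) (ball c R) :=
    contDiffOn_comp_normSq (n := 4) isOpen_ball hf hφ
  have hre : ∀ r, (circleAverage (fun z => (φ (normSq (f z)) : ℂ)) c √r).re =
      circleAverage (fun z => φ (normSq (f z))) c √r := fun r => by
    simp only [circleAverage, intervalIntegral.integral_ofReal, real_smul, re_ofReal_mul, ofReal_re,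
      smul_eq_mul]
  simp only [← hre]
  refine convexOn_re_circleAverage_sqrt hu hR fun z hz => ?_
  have hlaplacian : dzbar (dz fun z => (φ (normSq (f z)) : ℂ)) =ᶠ[𝓝 z]
      fun z => normSq (deriv f z) * radialLaplacian φ (normSq (f z)) := by
    filter_upwards [isOpen_ball.mem_nhds hz] with w hw
    exact dzbar_dz_comp_normSq isOpen_ball hf
      (fun t ht => (hφ t ht).of_le (by norm_num)) hw
  rw [dzbar_dz_congr hlaplacian]
  exact re_dzbar_dz_normSq_mul_comp_normSq_nonneg isOpen_ball hf (hf.deriv isOpen_ball) hψ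
    hφ_pos hφ_log hz

end RadialLaplacian

section ShiftedPower

variable {ε α β t : ℝ}

lemma rpow_sub_ofNat {x : ℝ} (hx : x ≠ 0) (y : ℝ) (n : ℕ) [n.AtLeastTwo] :
    x ^ (y - ofNat(n)) = x ^ y / x ^ (ofNat(n) : ℕ) :=
  Real.rpow_sub_natCast hx y n

lemma hasDerivAt_add_rpow (ht : -ε < t) (β : ℝ) :
    HasDerivAt (fun t : ℝ => (t + ε) ^ β) (β * (t + ε) ^ (β - 1)) t := by
  have hadd : t + ε ≠ 0 := (neg_lt_iff_pos_add.1 ht).ne'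
  simpa using ((hasDerivAt_id t).add_const ε).rpow_const (p := β) (Or.inl hadd)

lemma contDiffAt_add_rpow (ht : -ε < t) {n : WithTop ℕ∞} :
    ContDiffAt ℝ n (fun t : ℝ => (t + ε) ^ β) t :=
  (contDiffAt_id.add contDiffAt_const).rpow_const_of_ne (neg_lt_iff_pos_add.1 ht).ne'

lemma deriv_mul_add_rpow_sub_mul_add_rpow (a b β γ : ℝ) (ht : -ε < t) :
    deriv (fun t => a * (t + ε) ^ β - b * (t + ε) ^ γ) t =
      a * β * (t + ε) ^ (β - 1) - b * γ * (t + ε) ^ (γ - 1) := by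
  simpa only [mul_assoc] using (((hasDerivAt_add_rpow ht β).const_mul a).fun_sub
    ((hasDerivAt_add_rpow ht γ).const_mul b)).deriv

lemma radialLaplacian_add_rpow (ht : -ε < t) (β : ℝ) :
    radialLaplacian (fun t => (t + ε) ^ β) t =
      β ^ 2 * (t + ε) ^ (β - 1) - ε * β * (β - 1) * (t + ε) ^ (β - 2) := by
  have hderiv : EqOn (deriv fun t => (t + ε) ^ β) (fun t => β * (t + ε) ^ (β - 1)) (Ioi (-ε)) :=
    fun t ht => (hasDerivAt_add_rpow ht β).deriv
  have hderiv₂ : deriv (deriv fun t => (t + ε) ^ β) t = β * ((β - 1) * (t + ε) ^ (β - 1 - 1)) :=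
    (hderiv.deriv isOpen_Ioi ht).trans ((hasDerivAt_add_rpow ht (β - 1)).const_mul β).deriv
  have hs : t + ε ≠ 0 := (neg_lt_iff_pos_add.1 ht).ne'
  simp only [radialLaplacian, hderiv ht, hderiv₂, Real.rpow_sub_one hs, rpow_sub_ofNat hs]
  field_simp
  ring

lemma deriv_radialLaplacian_add_rpow (ht : -ε < t) (β : ℝ) :
    deriv (radialLaplacian fun t => (t + ε) ^ β) t =
      β ^ 2 * (β - 1) * (t + ε) ^ (β - 2) -
        ε * β * (β - 1) * (β - 2) * (t + ε) ^ (β - 3) := by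
  have hlaplacian : EqOn (radialLaplacian fun t => (t + ε) ^ β) _ (Ioi (-ε)) :=
    fun t ht => radialLaplacian_add_rpow ht β
  rw [hlaplacian.deriv isOpen_Ioi ht, deriv_mul_add_rpow_sub_mul_add_rpow _ _ _ _ ht]
  ring_nf

lemma deriv_deriv_radialLaplacian_add_rpow (ht : -ε < t) (β : ℝ) :
    deriv (deriv (radialLaplacian fun t => (t + ε) ^ β)) t =
      β ^ 2 * (β - 1) * (β - 2) * (t + ε) ^ (β - 3) -
        ε * β * (β - 1) * (β - 2) * (β - 3) * (t + ε) ^ (β - 4) := by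
  have hderiv : EqOn (deriv (radialLaplacian fun t => (t + ε) ^ β)) _ (Ioi (-ε)) :=
    fun t ht => deriv_radialLaplacian_add_rpow ht β
  rw [hderiv.deriv isOpen_Ioi ht, deriv_mul_add_rpow_sub_mul_add_rpow _ _ _ _ ht]
  ring_nf

lemma radialLaplacian_add_rpow_pos (hε : 0 < ε) (hα : 0 < α) (ht : 0 ≤ t) :
    0 < radialLaplacian (fun t => (t + ε) ^ α) t := by
  have hs : 0 < t + ε := add_pos_of_nonneg_of_pos ht hε
  have hfactor : radialLaplacian (fun t => (t + ε) ^ α) t =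
      α * (t + ε) ^ (α - 2) * (α * t + ε) := by
    rw [radialLaplacian_add_rpow (neg_lt_iff_pos_add.2 hs), Real.rpow_sub_one hs.ne',
      rpow_sub_ofNat hs.ne']
    field_simp
    ring
  rw [hfactor]
  positivity

lemma mul_sq_deriv_radialLaplacian_add_rpow_le (hε : 0 < ε) (hα : 1 ≤ α) (ht : 0 ≤ t) :
    t * deriv (radialLaplacian fun t => (t + ε) ^ α) t ^ 2 ≤
      radialLaplacian (fun t => (t + ε) ^ α) t *
        radialLaplacian (radialLaplacian fun t => (t + ε) ^ α) t := by
  have hs : 0 < t + ε := add_pos_of_nonneg_of_pos ht hε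
  have htε : -ε < t := neg_lt_iff_pos_add.2 hs
  have hdiff : radialLaplacian (fun t => (t + ε) ^ α) t *
        radialLaplacian (radialLaplacian fun t => (t + ε) ^ α) t -
      t * deriv (radialLaplacian fun t => (t + ε) ^ α) t ^ 2 =
      α ^ 2 * (α - 1) * ((t + ε) ^ (α - 3)) ^ 2 *
        (2 * α * t * ε ^ 2 + α * (α - 1) * t ^ 2 * ε + 2 * ε ^ 3) := by
    rw [radialLaplacian.eq_def (radialLaplacian _), deriv_deriv_radialLaplacian_add_rpow htε,
      deriv_radialLaplacian_add_rpow htε, radialLaplacian_add_rpow htε]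
    simp only [Real.rpow_sub_one hs.ne', rpow_sub_ofNat hs.ne']
    field_simp
    ring
  have : 0 ≤ α - 1 := sub_nonneg.2 hα
  rw [← sub_nonneg, hdiff]
  positivity

end ShiftedPower

section PowerMeans

variable {f : ℂ → ℂ} {c : ℂ} {R ε α p : ℝ}

lemma convexOn_circleAverage_normSq_add_rpow (hR : 0 ≤ R) (hf : DifferentiableOn ℂ f (ball c R))
    (hε : 0 < ε) (hα : 1 ≤ α) :
    ConvexOn ℝ (Ioo 0 (R ^ 2))
      (fun r => circleAverage (fun z => (normSq (f z) + ε) ^ α) c √r) :=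
  convexOn_circleAverage_comp_normSq (φ := fun t => (t + ε) ^ α) hR hf
    (fun _ ht => contDiffAt_add_rpow ((neg_neg_of_pos hε).trans_le ht))
    (fun _ ht => radialLaplacian_add_rpow_pos hε (one_pos.trans_le hα) ht)
    (fun _ ht => mul_sq_deriv_radialLaplacian_add_rpow_le hε hα ht)

lemma continuous_circleAverage_normSq_add_rpow {ρ : ℝ} (hf : ContinuousOn f (ball c R))
    (hρ : |ρ| < R) (hα : 0 ≤ α) :
    Continuous (fun ε => circleAverage (fun z => (normSq (f z) + ε) ^ α) c ρ) := by
  have hcircle : Continuous fun θ => f (circleMap c ρ θ) :=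
    hf.comp_continuous (continuous_circleMap c ρ) (circleMap_mem_ball hρ)
  have hintegrand : Continuous fun x : ℝ × ℝ => (normSq (f (circleMap c ρ x.2)) + x.1) ^ α :=
    ((continuous_normSq.comp (hcircle.comp continuous_snd)).add continuous_fst).rpow_const
      fun _ => Or.inr hα
  exact (intervalIntegral.continuous_parametric_intervalIntegral_of_continuous' (μ := volume)
    (f := fun ε θ => (normSq (f (circleMap c ρ θ)) + ε) ^ α) hintegrand 0
      (2 * Real.pi)).const_smul (2 * Real.pi)⁻¹

lemma convexOn_of_tendsto {ι : Type*} {l : Filter ι} [l.NeBot] {E : Type*} [AddCommMonoid E]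
    [Module ℝ E] {F : ι → E → ℝ} {g : E → ℝ} {s : Set E} (hF : ∀ᶠ i in l, ConvexOn ℝ s (F i))
    (hlim : ∀ x ∈ s, Tendsto (F · x) l (𝓝 (g x))) : ConvexOn ℝ s g := by
  have hs : Convex ℝ s := hF.exists.choose_spec.1
  refine ⟨hs, fun x hx y hy a b ha hb hab => ?_⟩
  refine le_of_tendsto_of_tendsto (hlim _ (hs hx hy ha hb hab))
    (((hlim x hx).const_smul a).add ((hlim y hy).const_smul b)) ?_
  filter_upwards [hF] with i hi
  exact hi.2 hx hy ha hb hab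

theorem convexOn_circleAverage_norm_rpow (hR : 0 ≤ R) (hf : DifferentiableOn ℂ f (ball c R))
    (hp : 2 ≤ p) :
    ConvexOn ℝ (Ioo 0 (R ^ 2)) (fun r => circleAverage (fun z => ‖f z‖ ^ p) c √r) := by
  have hnorm : ∀ z, ‖f z‖ ^ p = (normSq (f z) + 0) ^ (p / 2) := fun z => by
    rw [add_zero, normSq_eq_norm_sq, ← Real.rpow_natCast_mul (norm_nonneg _)]
    congr 1
    push_cast
    ring
  simp only [hnorm]
  refine convexOn_of_tendsto (l := 𝓝[>] (0 : ℝ))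
    (F := fun ε r => circleAverage (fun z => (normSq (f z) + ε) ^ (p / 2)) c √r) ?_ fun r hr => ?_
  · filter_upwards [self_mem_nhdsWithin] with ε hε
    exact convexOn_circleAverage_normSq_add_rpow hR hf hε (by linarith)
  · exact ((continuous_circleAverage_normSq_add_rpow hf.continuousOn
      (abs_sqrt_lt (Ioo_subset_Ico_self hr) hR) (by linarith)).tendsto 0).mono_left
        nhdsWithin_le_nhds

end PowerMeans

end

theorem circle_means_convex_p_ge_two
    (p : ℝ) (hp : 2 ≤ p)
    (f : ℂ → ℂ) (hf : DifferentiableOn ℂ f (ball (0 : ℂ) 1)) :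
    ConvexOn ℝ (Set.Ioo (0 : ℝ) 1)
      (fun r => (1 / (2 * Real.pi)) *
        ∫ θ in (0 : ℝ)..(2 * Real.pi),
          ‖f ((Real.sqrt r : ℂ) * Complex.exp (θ * Complex.I))‖ ^ p) := by
  simpa only [one_pow, Real.circleAverage, circleMap_zero, smul_eq_mul, one_div] using
    convexOn_circleAverage_norm_rpow zero_le_one hf hp
end
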